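/- For every integer n ≥ 7, one has n/φ(n) ≤ e^γ · log(log φ(n)) + c / log(log φ(n)), where c = log(log 5760) · (30030/5760 − e^γ · log(log 5760)) ≈ 2.95503; equality holds for n = 30030 = 2·3·5·7·11·13 (which has φ(30030) = 5760). -/

import Mathlib

open Real

/-!
Put `x = log φ(n)` and `L = log x`. The ratio `n / φ(n)` depends only on the primes `p ∣ n`, and
`log (n / φ(n)) = ∑ -log (1 - 1 / p)` is to be bounded under the constraint `∑ log (p - 1) ≤ x`.

For large `x`, weak duality with the multiplier `1 / (x log x)` (`log_ratio_le`) gives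
`log (n / φ(n)) ≤ 1 / L + W + O(e^{-L/2})` with `W = ∑_{m ≤ x} Λ(m) (1 / (m log m) - 1 / (x log x))`.
The inequality then rests on the explicit one-sided Mertens bound (`vV_le`)
`W + 1 / L ≤ log L + γ + 2 (Z(L) + 2.1 e^{-L}) (1 + L) / L²`, `Z(L) = ∑_ρ e^{-(1 - Re ρ) L} / |ρ (1 - ρ)|`,
over the nontrivial zeros `ρ` of `ζ`. It follows by partial summation (`vV_le_add`) from the explicit
formula for `∑_{m ≤ x} Λ(m) (1 / m - 1 / x)` (`explicit_formula`): both sides of that formula have the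
same Laplace transform on `Re w = 1`, by Hadamard's partial fractions for `ξ' / ξ` and the series for the
digamma function. The weights `1 / m - 1 / x` vanish continuously at `m = x`, so that all sums over zeros
converge absolutely. The constant `γ` enters the limit through `log ζ (1 + w) + log w → 0`
(`exists_vV_le`).

No hypothesis on the location of the zeros is available, and none is needed: the constant `c` leaves room.
The sum `∑ 1 / |ρ (1 - ρ)|` is tiny, as it is essentially `2 (ξ' / ξ) (1)`; the symmetry `ρ ↦ 1 - ρ` halves
the part with `Re ρ` close to `1`, and for very large `L` the classical zero-free region (`zero_free`) with
an explicit density bound takes over. Altogether `(1 + L) Z(L) ≤ 0.807` (`one_add_mul_Zsum_le`), hence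
`n / φ(n) ≤ e^γ L (1 + 1.65 / L²)` once `L ≥ 9`, and `1.65 e^γ < c` (`ratio_le_of_nine_le`).

For the other `n`, only the number `k` of prime factors matters: if `k ≤ #Q` for a set `Q` of
integers in `[2, y)` that contains all primes below `y`, then `n / φ(n) ≤ ∏ q / (q - 1)`, while
`k ≥ #Q` gives `φ(n) ≥ ∏ (q - 1)`. The right-hand side `e^γ t + c / t` is at least `35 / 8`, which settles
`k ≤ 4`, and it increases for `t ≥ 1.3`, which settles `k = 5` and `k = 6`; the latter is the case of
equality. For `k ≥ 7` the two products are compared block by block (`inv_step`), in integer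
arithmetic evaluated by the kernel (`run_cert`), until `log log ∏ (q - 1)` exceeds `9`.
-/

/-! ### Hadamard's theorem for entire functions of order less than two -/

namespace PhiBound
section Hadamard
open Filter Topology Metric

/-- The multiplicity of `ρ` as a zero of `f`. -/
noncomputable def mult (f : ℂ → ℂ) (ρ : ℂ) : ℕ := analyticOrderNatAt f ρ

variable {f : ℂ → ℂ}

lemma order_ne_top (hf : Differentiable ℂ f) {a : ℂ} (h0 : f a ≠ 0) (z : ℂ) :
    analyticOrderAt f z ≠ ⊤ := by
  have han : AnalyticOnNhd ℂ f Set.univ := fun x _ => hf.analyticAt x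
  refine han.analyticOrderAt_ne_top_of_isPreconnected (x := a) isPreconnected_univ
    (Set.mem_univ _) (Set.mem_univ _) ?_
  rw [(analyticOrderAt_eq_zero).2 (Or.inr h0)]; simp

lemma mult_eq_zero_iff (hf : Differentiable ℂ f) {a : ℂ} (h0 : f a ≠ 0) (z : ℂ) :
    mult f z = 0 ↔ f z ≠ 0 := by
  have h := Nat.cast_analyticOrderNatAt (order_ne_top hf h0 z)
  rw [mult]
  constructor
  · intro h1
    rw [h1] at h
    have := analyticOrderAt_eq_zero.1 h.symm
    rcases this with h2 | h2
    · exact absurd (hf.analyticAt z) h2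
    · exact h2
  · intro h1
    rw [analyticOrderNatAt, analyticOrderAt_eq_zero.2 (Or.inr h1)]; rfl

/-- A zero can be divided out with its full multiplicity. -/
lemma extract_one (hf : Differentiable ℂ f) {a : ℂ} (h0 : f a ≠ 0) (ρ : ℂ) :
    ∃ g : ℂ → ℂ, Differentiable ℂ g ∧ g ρ ≠ 0 ∧ ∀ z, f z = (z - ρ) ^ mult f ρ * g z := by
  obtain ⟨g₀, hg₀, hg0, he⟩ :=
    (hf.analyticAt ρ).analyticOrderAt_ne_top.1 (order_ne_top hf h0 ρ)
  classical
  let g : ℂ → ℂ := Function.update (fun z => f z / (z - ρ) ^ mult f ρ) ρ (g₀ ρ)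
  have hgρ : g ρ = g₀ ρ := by simp [g]
  have hgz : ∀ z, z ≠ ρ → g z = f z / (z - ρ) ^ mult f ρ := fun z hz => by
    simp [g, Function.update_of_ne hz]
  refine ⟨g, ?_, by rw [hgρ]; exact hg0, ?_⟩
  · intro z
    by_cases hz : z = ρ
    · subst hz
      have : g =ᶠ[𝓝 z] g₀ := by
        filter_upwards [he] with w hw
        by_cases hwz : w = z
        · rw [hwz, hgρ]
        · rw [hgz w hwz, hw, smul_eq_mul]
          exact mul_div_cancel_left₀ _ (pow_ne_zero _ (sub_ne_zero.2 hwz))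
      exact this.differentiableAt_iff.2 hg₀.differentiableAt
    · have : g =ᶠ[𝓝 z] (fun z => f z / (z - ρ) ^ mult f ρ) := by
        filter_upwards [isOpen_ne.mem_nhds hz] with w hw using hgz w hw
      refine this.differentiableAt_iff.2 ?_
      exact (hf z).div (by fun_prop) (pow_ne_zero _ (sub_ne_zero.2 hz))
  · intro z
    by_cases hz : z = ρ
    · subst hz
      have := he.self_of_nhds
      rw [hgρ]; simpa [mult] using this
    · rw [hgz z hz]
      exact (mul_div_cancel₀ _ (pow_ne_zero _ (sub_ne_zero.2 hz))).symm

lemma mult_eq_of_mul {g h : ℂ → ℂ} (hg : Differentiable ℂ g) (hh : Differentiable ℂ h)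
    {a : ℂ} (ha : g a * h a ≠ 0) {ρ : ℂ} (hρ : h ρ ≠ 0) :
    mult (fun z => h z * g z) ρ = mult g ρ := by
  have h1 : analyticOrderNatAt h ρ = 0 := by
    have := (mult_eq_zero_iff hh (a := a) (right_ne_zero_of_mul ha) ρ).2 hρ
    exact this
  have h2 := analyticOrderNatAt_mul (hh.analyticAt ρ) (hg.analyticAt ρ)
    (order_ne_top hh (right_ne_zero_of_mul ha) ρ) (order_ne_top hg (left_ne_zero_of_mul ha) ρ)
  rw [h1, zero_add] at h2
  exact h2

/-- Finitely many zeros can be divided out with their full multiplicities. -/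
lemma extract_finset (hf : Differentiable ℂ f) {a : ℂ} (h0 : f a ≠ 0) (F : Finset ℂ) :
    ∃ g : ℂ → ℂ, Differentiable ℂ g ∧ (∀ ρ ∈ F, g ρ ≠ 0) ∧
      ∀ z, f z = (∏ ρ ∈ F, (z - ρ) ^ mult f ρ) * g z := by
  classical
  induction F using Finset.induction_on with
  | empty => exact ⟨f, hf, by simp, by simp⟩
  | insert ρ F hρ ih =>
    obtain ⟨g, hg, hgF, hfg⟩ := ih
    have hP : Differentiable ℂ (fun z : ℂ => ∏ σ ∈ F, (z - σ) ^ mult f σ) := by fun_prop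
    have hga : g a * (∏ σ ∈ F, (a - σ) ^ mult f σ) ≠ 0 := by
      rw [mul_comm, ← hfg]; exact h0
    have hPρ : (∏ σ ∈ F, (ρ - σ) ^ mult f σ) ≠ 0 := by
      refine Finset.prod_ne_zero_iff.2 fun σ hσ => pow_ne_zero _ (sub_ne_zero.2 ?_)
      rintro rfl; exact hρ hσ
    have hm : mult f ρ = mult g ρ := by
      have := mult_eq_of_mul hg hP hga (ρ := ρ) hPρ
      rw [← this]
      congr 1
      funext z; exact hfg z
    obtain ⟨g', hg', hg'ρ, hgg'⟩ := extract_one hg (left_ne_zero_of_mul hga) ρ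
    refine ⟨g', hg', ?_, ?_⟩
    · intro σ hσ
      rcases Finset.mem_insert.1 hσ with rfl | hσ
      · exact hg'ρ
      · have := hgF σ hσ
        rw [hgg'] at this
        exact right_ne_zero_of_mul this
    · intro z
      rw [Finset.prod_insert hρ, hfg z, hgg' z, hm]; ring

lemma zeros_finite (hf : Differentiable ℂ f) {a : ℂ} (h0 : f a ≠ 0) (R : ℝ) :
    {z : ℂ | f z = 0 ∧ ‖z‖ ≤ R}.Finite := by
  by_contra hinf
  have hsub : {z : ℂ | f z = 0 ∧ ‖z‖ ≤ R} ⊆ closedBall 0 R := fun z hz => by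
    simpa using hz.2
  obtain ⟨x, -, hx⟩ := Set.Infinite.exists_accPt_of_subset_isCompact hinf
    (isCompact_closedBall (0 : ℂ) R) hsub
  have hfr : ∃ᶠ z in 𝓝[≠] x, f z = (0 : ℂ → ℂ) z :=
    (accPt_iff_frequently_nhdsNE.1 hx).mono fun z hz => hz.1
  have := AnalyticOnNhd.eq_of_frequently_eq (fun x _ => hf.analyticAt x)
    (fun x _ => analyticAt_const) hfr
  exact h0 (by rw [this]; rfl)

/-- The zeros of `f` of modulus at most `R`. -/
noncomputable def zerosIn (hf : Differentiable ℂ f) (h0 : f 0 ≠ 0) (R : ℝ) : Finset ℂ :=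
  (zeros_finite hf h0 R).toFinset

lemma mem_zerosIn (hf : Differentiable ℂ f) (h0 : f 0 ≠ 0) {R : ℝ} {z : ℂ} :
    z ∈ zerosIn hf h0 R ↔ f z = 0 ∧ ‖z‖ ≤ R := by simp [zerosIn]

/-- Borel–Carathéodory for the logarithm of a zero-free function: if `‖G‖ ≤ ‖G 0‖ e^B` on a disc
of radius `R`, then the logarithmic derivative of `G` varies by `O(B ‖z‖ / R²)` near the centre. -/
lemma logDeriv_sub_le {G : ℂ → ℂ} (hG : Differentiable ℂ G) {R B : ℝ} (hR : 0 < R) (hB : 0 < B)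
    (hne : ∀ z, ‖z‖ < R → G z ≠ 0) (hbd : ∀ z, ‖z‖ < R → ‖G z‖ ≤ ‖G 0‖ * Real.exp B)
    {z : ℂ} (hz : ‖z‖ < R / 2) :
    ‖logDeriv G z - logDeriv G 0‖ ≤ 96 * B / R ^ 2 * ‖z‖ := by
  have hdG : DifferentiableOn ℂ (logDeriv G) (ball 0 R) := by
    intro w hw
    have hw' : ‖w‖ < R := by simpa using hw
    exact ((hG.analyticAt w).deriv.differentiableAt.div (hG w) (hne w hw')).differentiableWithinAt
  obtain ⟨h, hh0, hh⟩ := (hdG.isExactOn_ball).with_val_at 0 0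
  have hdh : DifferentiableOn ℂ h (ball 0 R) := fun w hw =>
    (hh w hw).differentiableAt.differentiableWithinAt
  have hG0 : G 0 ≠ 0 := hne 0 (by simpa using hR)
  -- `G = G 0 * exp h`
  have hexp : ∀ w ∈ ball (0 : ℂ) R, G w = G 0 * Complex.exp (h w) := by
    have hd : DifferentiableOn ℂ (fun w => G w * Complex.exp (-h w)) (ball 0 R) :=
      hG.differentiableOn.mul (hdh.neg.cexp)
    have hder : ∀ w ∈ ball (0 : ℂ) R, HasDerivAt (fun w => G w * Complex.exp (-h w)) 0 w := by
      intro w hw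
      have hw' : ‖w‖ < R := by simpa using hw
      have h1 := (hG w).hasDerivAt.mul ((hh w hw).neg.cexp)
      refine HasDerivAt.congr_deriv h1 ?_
      have := hne w hw'
      rw [logDeriv_apply]
      field_simp
      ring
    intro w hw
    have := isOpen_ball.is_const_of_deriv_eq_zero (convex_ball (0 : ℂ) R).isPreconnected hd
      (fun x hx => (hder x hx).deriv) hw (mem_ball_self hR)
    simp only [hh0, neg_zero, Complex.exp_zero, mul_one] at this
    rw [← this, mul_assoc, ← Complex.exp_add]; simp
  have hre : Set.MapsTo h (ball 0 R) {z | z.re ≤ B} := by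
    intro w hw
    have hw' : ‖w‖ < R := by simpa using hw
    have h1 := hbd w hw'
    rw [hexp w hw, norm_mul, Complex.norm_exp] at h1
    have h2 := le_of_mul_le_mul_left h1 (norm_pos_iff.2 hG0)
    exact Real.exp_le_exp.1 h2
  have hBC : ∀ w, ‖w‖ ≤ 3 / 4 * R → ‖h w‖ ≤ 6 * B := by
    intro w hw
    have := Complex.borelCaratheodory_zero hB hdh hre hR (z := w) (by simp; linarith) hh0
    refine this.trans ?_
    rw [div_le_iff₀ (by linarith)]
    nlinarith
  have hder : ∀ w, ‖w‖ < R / 2 → ‖logDeriv G w‖ ≤ 24 * B / R := by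
    intro w hw
    have hsub : closedBall w (R / 4) ⊆ ball 0 R := by
      intro u hu
      have : ‖u - w‖ ≤ R / 4 := by simpa [dist_eq_norm] using hu
      have h3 : ‖u‖ ≤ ‖u - w‖ + ‖w‖ := by simpa using norm_add_le (u - w) w
      simp; linarith
    have := Complex.norm_deriv_le_of_forall_mem_sphere_norm_le (c := w) (R := R / 4) (C := 6 * B)
      (f := h) (by positivity) ?_ ?_
    · rw [(hh w (by simp; linarith)).deriv] at this
      refine this.trans (le_of_eq ?_)
      field_simp; norm_num
    · refine DifferentiableOn.diffContOnCl ?_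
      rw [closure_ball _ (by positivity)]
      exact hdh.mono hsub
    · intro u hu
      apply hBC
      have : ‖u - w‖ = R / 4 := by simpa [dist_eq_norm] using hu
      have h3 : ‖u‖ ≤ ‖u - w‖ + ‖w‖ := by simpa using norm_add_le (u - w) w
      linarith
  have := Complex.dist_le_div_mul_dist_of_mapsTo_ball (f := logDeriv G) (c := 0) (R₁ := R / 2)
    (R₂ := 48 * B / R) (z := z) (hdG.mono (ball_subset_ball (by linarith))) ?_ (by simpa using hz)
  · rw [dist_eq_norm, dist_eq_norm, sub_zero] at this
    refine this.trans (le_of_eq ?_)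
    field_simp; ring
  · intro w hw
    have hw' : ‖w‖ < R / 2 := by simpa using hw
    have h1 := hder w hw'
    have h2 := hder 0 (by simpa using hR)
    rw [mem_closedBall, dist_eq_norm]
    refine (norm_sub_le _ _).trans ?_
    have : 48 * B / R = 24 * B / R + 24 * B / R := by ring
    linarith

/-- Landau's lemma: in terms of the growth of `f` on the disc of radius `3R`, the number of zeros
in the disc of radius `R` is bounded, and `f'/f` is close to the sum over these zeros. -/
lemma landau (hf : Differentiable ℂ f) (h0 : f 0 ≠ 0) {R B : ℝ} (hR : 0 < R) (hB : 0 < B)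
    (hbd : ∀ z, ‖z‖ = 3 * R → ‖f z‖ ≤ ‖f 0‖ * Real.exp B) :
    (∑ ρ ∈ zerosIn hf h0 R, (mult f ρ : ℝ)) * Real.log 2 ≤ B ∧
    ∀ z, ‖z‖ < R / 2 → f z ≠ 0 →
      ‖logDeriv f z - logDeriv f 0 -
        ∑ ρ ∈ zerosIn hf h0 R, (mult f ρ : ℂ) * (1 / (z - ρ) + 1 / ρ)‖
          ≤ 96 * B / R ^ 2 * ‖z‖ := by
  set F := zerosIn hf h0 R with hF
  obtain ⟨g, hg, hgF, hfg⟩ := extract_finset hf h0 F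
  have hF0 : ∀ ρ ∈ F, ρ ≠ 0 := by
    rintro ρ hρ rfl
    exact h0 ((mem_zerosIn hf h0).1 hρ).1
  have hFR : ∀ ρ ∈ F, ‖ρ‖ ≤ R := fun ρ hρ => ((mem_zerosIn hf h0).1 hρ).2
  set C : ℂ := ∏ ρ ∈ F, (-ρ) ^ mult f ρ with hC
  set G : ℂ → ℂ := fun z => C * g z with hGdef
  have hC0 : C ≠ 0 := Finset.prod_ne_zero_iff.2 fun ρ hρ => pow_ne_zero _ (neg_ne_zero.2 (hF0 ρ hρ))
  have hG : Differentiable ℂ G := hg.const_mul C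
  have hG0 : G 0 = f 0 := by rw [hfg 0]; simp [hGdef, hC]
  set N : ℕ := ∑ ρ ∈ F, mult f ρ with hN
  have hsphere : ∀ z, ‖z‖ = 3 * R → ‖G z‖ ≤ ‖f 0‖ * Real.exp B / 2 ^ N := by
    intro z hz
    have h1 := hbd z hz
    rw [le_div_iff₀ (by positivity)]
    refine le_trans ?_ h1
    rw [hfg z, hGdef, norm_mul, norm_mul, hC, norm_prod, norm_prod, hN, ← Finset.prod_pow_eq_pow_sum,
      mul_right_comm, ← Finset.prod_mul_distrib]
    refine mul_le_mul_of_nonneg_right ?_ (norm_nonneg _)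
    refine Finset.prod_le_prod (fun ρ _ => by positivity) fun ρ hρ => ?_
    rw [norm_pow, norm_pow, ← mul_pow, norm_neg]
    refine pow_le_pow_left₀ (by positivity) ?_ _
    have := norm_sub_norm_le z ρ
    have := hFR ρ hρ
    linarith
  have hball : ∀ z, ‖z‖ ≤ 3 * R → ‖G z‖ ≤ ‖f 0‖ * Real.exp B / 2 ^ N := by
    intro z hz
    refine Complex.norm_le_of_forall_mem_frontier_norm_le (U := ball 0 (3 * R)) isBounded_ball
      hG.diffContOnCl (fun w hw => hsphere w ?_) ?_
    · rw [frontier_ball _ (by positivity)] at hw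
      simpa using hw
    · rw [closure_ball _ (by positivity)]; simpa using hz
  have hf0 : 0 < ‖f 0‖ := norm_pos_iff.2 h0
  have h2N : (2 : ℝ) ^ N ≤ Real.exp B := by
    have := hball 0 (by simp; positivity)
    rw [hG0, le_div_iff₀ (by positivity)] at this
    exact le_of_mul_le_mul_left this hf0
  refine ⟨?_, ?_⟩
  · have := Real.log_le_log (by positivity) h2N
    rw [Real.log_exp, Real.log_pow] at this
    rw [hN] at this
    push_cast at this
    exact this
  · intro z hz hfz
    have hne : ∀ w, ‖w‖ < R → G w ≠ 0 := by
      intro w hw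
      refine mul_ne_zero hC0 ?_
      by_cases hfw : f w = 0
      · exact hgF w ((mem_zerosIn hf h0).2 ⟨hfw, hw.le⟩)
      · rw [hfg w] at hfw; exact right_ne_zero_of_mul hfw
    have hkey := logDeriv_sub_le hG hR hB hne (fun w hw => by
      refine (hball w (by linarith)).trans ?_
      rw [hG0]
      exact div_le_self (by positivity) (one_le_pow₀ (by norm_num))) hz
    have hld : ∀ w, f w ≠ 0 → logDeriv f w = (∑ ρ ∈ F, (mult f ρ : ℂ) * (1 / (w - ρ))) +
        logDeriv G w := by
      intro w hw
      have e1 : f = fun z => (∏ ρ ∈ F, (z - ρ) ^ mult f ρ) * g z := funext hfg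
      have hw' := hw
      rw [hfg w] at hw'
      have hwρ : ∀ ρ ∈ F, w - ρ ≠ 0 := fun ρ hρ h => by
        rw [sub_eq_zero] at h
        exact hw (h ▸ ((mem_zerosIn hf h0).1 hρ).1)
      conv_lhs => rw [e1]
      rw [logDeriv_mul w (left_ne_zero_of_mul hw') (right_ne_zero_of_mul hw')
        (by fun_prop) (hg w), logDeriv_prod (f := fun ρ z => (z - ρ) ^ mult f ρ)
        (fun ρ hρ => pow_ne_zero _ (hwρ ρ hρ)) (fun ρ _ => by fun_prop), hGdef, logDeriv_const_mul w C hC0]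
      congr 1
      refine Finset.sum_congr rfl fun ρ hρ => ?_
      rw [logDeriv_fun_pow (f := fun z => z - ρ) (by fun_prop)]
      simp [logDeriv_apply]
    rw [hld z hfz, hld 0 h0]
    convert hkey using 2
    simp only [mul_add, Finset.sum_add_distrib, zero_sub, one_div, inv_neg, mul_neg,
      Finset.sum_neg_distrib]
    ring

/-- Growth of order at most `3/2`. -/
def GrowthLE (f : ℂ → ℂ) (C : ℝ) : Prop :=
  ∀ R : ℝ, 1 ≤ R → ∀ z : ℂ, ‖z‖ ≤ R → ‖f z‖ ≤ ‖f 0‖ * Real.exp (C * (R * √R))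

lemma growth_three {C : ℝ} (hC : 0 < C) (hgr : GrowthLE f C) {R : ℝ} (hR : 1 ≤ R) (z : ℂ)
    (hz : ‖z‖ = 3 * R) : ‖f z‖ ≤ ‖f 0‖ * Real.exp (6 * C * (R * √R)) := by
  refine (hgr (3 * R) (by linarith) z hz.le).trans ?_
  refine mul_le_mul_of_nonneg_left (Real.exp_le_exp.2 ?_) (norm_nonneg _)
  have h3 : √(3 * R) ≤ 2 * √R := by
    rw [Real.sqrt_le_iff]
    refine ⟨by positivity, ?_⟩
    rw [mul_pow, Real.sq_sqrt (by linarith)]; linarith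
  calc C * (3 * R * √(3 * R)) ≤ C * (3 * R * (2 * √R)) := by gcongr
    _ = 6 * C * (R * √R) := by ring

/-- Jensen's bound: `O(R ^ (3/2))` zeros in the disc of radius `R`, with multiplicity. -/
lemma count_le {C : ℝ} (hC : 0 < C) (hf : Differentiable ℂ f) (h0 : f 0 ≠ 0)
    (hgr : GrowthLE f C) {R : ℝ} (hR : 1 ≤ R) :
    ∑ ρ ∈ zerosIn hf h0 R, (mult f ρ : ℝ) ≤ 6 * C / Real.log 2 * (R * √R) := by
  have hB : 0 < 6 * C * (R * √R) := by positivity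
  have := (landau hf h0 (by linarith) hB (growth_three hC hgr hR)).1
  have hl : 0 < Real.log 2 := Real.log_pos (by norm_num)
  rw [div_mul_eq_mul_div, le_div_iff₀ hl]
  linarith

/-- Convergence exponent at most `3/2`: the zeros are square summable. -/
lemma summable_mult {C : ℝ} (hC : 0 < C) (hf : Differentiable ℂ f) (h0 : f 0 ≠ 0)
    (hgr : GrowthLE f C) : Summable fun ρ : ℂ => (mult f ρ : ℝ) / (1 + ‖ρ‖) ^ 2 := by
  classical
  set K := 6 * C / Real.log 2 with hK
  have hl : 0 < Real.log 2 := Real.log_pos (by norm_num)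
  have hK0 : 0 < K := by positivity
  refine summable_of_sum_le (c := 16 * K * 2) (fun ρ => by positivity) fun F => ?_
  obtain ⟨J, hJ⟩ : ∃ J : ℕ, ∀ ρ ∈ F, ‖ρ‖ ≤ 4 ^ J := by
    refine ⟨F.sup fun ρ => ⌈‖ρ‖⌉₊, fun ρ hρ => ?_⟩
    set J := F.sup fun ρ : ℂ => ⌈‖ρ‖⌉₊
    have h1 : ⌈‖ρ‖⌉₊ ≤ J := Finset.le_sup (f := fun ρ : ℂ => ⌈‖ρ‖⌉₊) hρ
    have h2 : J < 4 ^ J := Nat.lt_pow_self (by norm_num)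
    have h3 : ((⌈‖ρ‖⌉₊ : ℕ) : ℝ) ≤ 4 ^ J := by exact_mod_cast h1.trans h2.le
    exact (Nat.le_ceil _).trans h3
  have hpt : ∀ ρ ∈ F, (mult f ρ : ℝ) / (1 + ‖ρ‖) ^ 2 ≤
      ∑ j ∈ Finset.range (J + 1), 16 * (1 / 16) ^ j *
        (if ρ ∈ zerosIn hf h0 (4 ^ j) then (mult f ρ : ℝ) else 0) := by
    intro ρ hρ
    by_cases hm : mult f ρ = 0
    · simp [hm]
    have hz : f ρ = 0 := by
      by_contra h; exact hm ((mult_eq_zero_iff hf h0 ρ).2 h)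
    have hex : ∃ j : ℕ, ‖ρ‖ ≤ 4 ^ j := ⟨J, hJ ρ hρ⟩
    set j := Nat.find hex with hj
    have hj1 : ‖ρ‖ ≤ 4 ^ j := Nat.find_spec hex
    have hjJ : j ≤ J := Nat.find_min' hex (hJ ρ hρ)
    have hge : (4 : ℝ) ^ j ≤ 4 * (1 + ‖ρ‖) := by
      rcases Nat.eq_zero_or_pos j with h | h
      · rw [h]; have := norm_nonneg ρ; linarith
      · have := Nat.find_min hex (m := j - 1) (by omega)
        push Not at this
        obtain ⟨i, hi⟩ : ∃ i, j = i + 1 := ⟨j - 1, by omega⟩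
        rw [hi] at this ⊢
        simp only [Nat.add_sub_cancel] at this
        rw [pow_succ]; linarith
    refine le_trans ?_ (Finset.single_le_sum (f := fun j => 16 * (1 / 16) ^ j *
        (if ρ ∈ zerosIn hf h0 (4 ^ j) then (mult f ρ : ℝ) else 0)) (fun i _ => by positivity)
        (Finset.mem_range.2 (Nat.lt_succ_of_le hjJ)))
    rw [if_pos ((mem_zerosIn hf h0).2 ⟨hz, hj1⟩), div_le_iff₀ (by positivity)]
    have h16 : ((4 : ℝ) ^ j) ^ 2 = 16 ^ j := by rw [← pow_mul, mul_comm, pow_mul]; norm_num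
    have hsq : (16 : ℝ) ^ j ≤ 16 * (1 + ‖ρ‖) ^ 2 := by
      rw [← h16]
      calc ((4 : ℝ) ^ j) ^ 2 ≤ (4 * (1 + ‖ρ‖)) ^ 2 := by gcongr
        _ = _ := by ring
    have h1 : (1 : ℝ) ≤ 16 * (1 / 16) ^ j * (1 + ‖ρ‖) ^ 2 := by
      rw [one_div, inv_pow]
      have : (0:ℝ) < 16 ^ j := by positivity
      field_simp
      linarith
    calc (mult f ρ : ℝ) = (mult f ρ : ℝ) * 1 := by ring
      _ ≤ (mult f ρ : ℝ) * (16 * (1 / 16) ^ j * (1 + ‖ρ‖) ^ 2) := by gcongr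
      _ = _ := by ring
  refine (Finset.sum_le_sum hpt).trans ?_
  rw [Finset.sum_comm]
  have hj : ∀ j ∈ Finset.range (J + 1), ∑ ρ ∈ F, 16 * (1 / 16 : ℝ) ^ j *
        (if ρ ∈ zerosIn hf h0 (4 ^ j) then (mult f ρ : ℝ) else 0) ≤ 16 * K * (1 / 2) ^ j := by
    intro j _
    rw [← Finset.mul_sum, ← Finset.sum_filter]
    have h1 : ∑ ρ ∈ F with ρ ∈ zerosIn hf h0 (4 ^ j), (mult f ρ : ℝ) ≤ K * (4 ^ j * √(4 ^ j)) := by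
      refine le_trans (Finset.sum_le_sum_of_subset_of_nonneg (t := zerosIn hf h0 (4 ^ j)) ?_ ?_)
        (count_le hC hf h0 hgr (one_le_pow₀ (by norm_num)))
      · intro ρ hρ; exact (Finset.mem_filter.1 hρ).2
      · intros; positivity
    have hs : √((4 : ℝ) ^ j) = 2 ^ j := by
      rw [Real.sqrt_eq_iff_mul_self_eq (by positivity) (by positivity), ← mul_pow]; norm_num
    rw [hs, ← mul_pow] at h1
    calc 16 * (1 / 16 : ℝ) ^ j * _ ≤ 16 * (1 / 16 : ℝ) ^ j * (K * (4 * 2) ^ j) := by gcongr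
      _ = 16 * K * ((1 / 16) ^ j * (4 * 2) ^ j) := by ring
      _ = 16 * K * (1 / 2) ^ j := by rw [← mul_pow]; norm_num
  refine (Finset.sum_le_sum hj).trans ?_
  rw [← Finset.mul_sum]
  refine mul_le_mul_of_nonneg_left ?_ (by positivity)
  have := summable_geometric_two.sum_le_tsum (Finset.range (J + 1)) (fun i _ => by positivity)
  rwa [tsum_geometric_two] at this

/-- **Hadamard's theorem**, in logarithmic-derivative form, for functions of order less than two:
the partial fraction expansion of `f'/f` over the zeros of `f`, counted with multiplicity. -/
theorem hasSum_logDeriv {C : ℝ} (hC : 0 < C) (hf : Differentiable ℂ f) (h0 : f 0 ≠ 0)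
    (hgr : GrowthLE f C) {z : ℂ} (hz : f z ≠ 0) :
    HasSum (fun ρ : ℂ => (mult f ρ : ℂ) * (1 / (z - ρ) + 1 / ρ))
      (logDeriv f z - logDeriv f 0) := by
  classical
  have hsum := summable_mult hC hf h0 hgr
  set t : ℂ → ℂ := fun ρ => (mult f ρ : ℂ) * (1 / (z - ρ) + 1 / ρ) with ht
  have hm0 : ∀ ρ, f ρ ≠ 0 → t ρ = 0 := fun ρ h => by
    simp [ht, (mult_eq_zero_iff hf h0 ρ).2 h]
  have hts : Summable t := by
    refine Summable.of_norm_bounded_eventually (hsum.mul_left (8 * ‖z‖)) ?_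
    rw [Filter.eventually_cofinite]
    refine (zeros_finite hf h0 (2 * ‖z‖ + 1)).subset fun ρ hρ => ?_
    simp only [Set.mem_ofPred_eq] at hρ ⊢
    by_cases h : f ρ = 0
    · refine ⟨h, ?_⟩
      by_contra! hlt
      apply hρ
      have hzn := norm_nonneg z
      have h1 : ‖ρ‖ / 2 ≤ ‖z - ρ‖ := by
        have := norm_sub_norm_le ρ z
        rw [norm_sub_rev] at this; linarith
      have hρ0 : ρ ≠ 0 := by rintro rfl; simp at hlt; linarith
      have hzρ : z - ρ ≠ 0 := by
        intro h2; rw [h2, norm_zero] at h1; linarith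
      have e : t ρ = (mult f ρ : ℂ) * (z / ((z - ρ) * ρ)) := by
        simp only [ht]; field_simp; ring
      rw [e, norm_mul, norm_div, norm_mul, Complex.norm_natCast]
      have h2 : (1 + ‖ρ‖) ^ 2 ≤ 8 * (‖z - ρ‖ * ‖ρ‖) := by nlinarith
      have h3 : 0 < ‖z - ρ‖ * ‖ρ‖ := mul_pos (norm_pos_iff.2 hzρ) (norm_pos_iff.2 hρ0)
      calc (mult f ρ : ℝ) * (‖z‖ / (‖z - ρ‖ * ‖ρ‖))
          ≤ (mult f ρ : ℝ) * (‖z‖ * (8 / (1 + ‖ρ‖) ^ 2)) := by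
            gcongr ?_ * ?_
            rw [div_eq_mul_inv]
            gcongr
            rw [inv_le_comm₀ h3 (by positivity), inv_div, div_le_iff₀ (by norm_num)]
            linarith
        _ = _ := by ring
    · exact absurd (by rw [hm0 ρ h, norm_zero]; positivity) hρ
  have hlim1 : Tendsto (fun N : ℕ => ∑' ρ, if ρ ∈ zerosIn hf h0 N then t ρ else 0) atTop
      (𝓝 (∑' ρ, t ρ)) := by
    refine tendsto_tsum_of_dominated_convergence (bound := fun ρ => ‖t ρ‖) hts.norm ?_ ?_
    · intro ρ
      refine tendsto_const_nhds.congr' ?_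
      filter_upwards [eventually_ge_atTop ⌈‖ρ‖⌉₊] with N hN
      by_cases h : f ρ = 0
      · rw [if_pos ((mem_zerosIn hf h0).2 ⟨h, Nat.ceil_le.1 hN⟩)]
      · rw [hm0 ρ h]; simp
    · refine Eventually.of_forall fun N ρ => ?_
      split_ifs
      · exact le_rfl
      · simp
  have hfin : ∀ N : ℕ, (∑' ρ, if ρ ∈ zerosIn hf h0 N then t ρ else 0) =
      ∑ ρ ∈ zerosIn hf h0 N, t ρ := fun N => by
    rw [tsum_eq_sum (s := zerosIn hf h0 N) (fun ρ hρ => if_neg hρ)]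
    exact Finset.sum_congr rfl fun ρ hρ => if_pos hρ
  have hlim2 : Tendsto (fun N : ℕ => ∑ ρ ∈ zerosIn hf h0 N, t ρ) atTop
      (𝓝 (logDeriv f z - logDeriv f 0)) := by
    rw [tendsto_iff_norm_sub_tendsto_zero]
    refine squeeze_zero' (g := fun N : ℕ => 576 * C * ‖z‖ * (√(N : ℝ))⁻¹)
      (Eventually.of_forall fun N => norm_nonneg _) ?_ ?_
    · filter_upwards [eventually_ge_atTop (⌈2 * ‖z‖⌉₊ + 1)] with N hN
      have hN1 : (1 : ℝ) ≤ N := by exact_mod_cast (by omega : 1 ≤ N)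
      have hN2 : 2 * ‖z‖ < N := by
        have h1 := Nat.le_ceil (2 * ‖z‖)
        have h2 : ((⌈2 * ‖z‖⌉₊ : ℕ) : ℝ) + 1 ≤ N := by exact_mod_cast hN
        linarith
      have h3 := (landau hf h0 (R := N) (by linarith)
        (by positivity) (growth_three hC hgr hN1)).2 z (by linarith) hz
      rw [norm_sub_rev]
      refine h3.trans (le_of_eq ?_)
      have hs : √(N : ℝ) ≠ 0 := (Real.sqrt_pos.2 (by linarith)).ne'
      have hs2 : √(N : ℝ) * √(N : ℝ) = N := Real.mul_self_sqrt (by linarith)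
      field_simp
      rw [sq, hs2]; ring
    · have : Tendsto (fun N : ℕ => (√(N : ℝ))⁻¹) atTop (𝓝 0) :=
        tendsto_inv_atTop_zero.comp (Real.tendsto_sqrt_atTop.comp tendsto_natCast_atTop_atTop)
      simpa using this.const_mul (576 * C * ‖z‖)
  simp only [hfin] at hlim1
  have := tendsto_nhds_unique hlim1 hlim2
  rw [← this]
  exact hts.hasSum

end Hadamard
end PhiBound

/-! ### The function `ξ` and its growth -/

namespace PhiBound
section Xi
open Filter Topology MeasureTheory Set

/-- The entire function `ξ(s) = s (s - 1) π^{-s/2} Γ(s/2) ζ(s)`, normalised by `ξ(0) = ξ(1) = 1`,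
and written through Mathlib's entire `completedRiemannZeta₀` so as to be defined everywhere. -/
noncomputable def xi (s : ℂ) : ℂ := 1 + s * (s - 1) * completedRiemannZeta₀ s

lemma differentiable_xi : Differentiable ℂ xi := by
  have := differentiable_completedZeta₀
  unfold xi; fun_prop

lemma xi_zero : xi 0 = 1 := by simp [xi]
lemma xi_one : xi 1 = 1 := by simp [xi]
lemma xi_zero_ne : xi 0 ≠ 0 := by simp [xi_zero]

lemma xi_one_sub (s : ℂ) : xi (1 - s) = xi s := by
  simp only [xi, completedRiemannZeta₀_one_sub]; ring

lemma xi_eq {s : ℂ} (h0 : s ≠ 0) (h1 : s ≠ 1) :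
    xi s = s * (s - 1) * completedRiemannZeta s := by
  have h2 : (1 : ℂ) - s ≠ 0 := sub_ne_zero.2 h1.symm
  have h3 : s - 1 ≠ 0 := sub_ne_zero.2 h1
  rw [xi, completedRiemannZeta_eq]
  field_simp
  ring

lemma completedZeta_eq {s : ℂ} (h0 : 0 < s.re) :
    completedRiemannZeta s = Complex.Gammaℝ s * riemannZeta s := by
  have hs : s ≠ 0 := by rintro rfl; simp at h0
  rw [riemannZeta_def_of_ne_zero hs]
  have := Complex.Gammaℝ_ne_zero_of_re_pos h0
  field_simp

lemma xi_eq_zeta {s : ℂ} (h0 : 0 < s.re) (h1 : s ≠ 1) :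
    xi s = s * (s - 1) * (Complex.Gammaℝ s * riemannZeta s) := by
  rw [xi_eq (by rintro rfl; simp at h0) h1, completedZeta_eq h0]

lemma xi_ne_zero_of_one_le_re {s : ℂ} (hs : 1 ≤ s.re) : xi s ≠ 0 := by
  by_cases h1 : s = 1
  · rw [h1, xi_one]; simp
  have h0 : s ≠ 0 := by rintro rfl; norm_num at hs
  rw [xi_eq_zeta (by linarith) h1]
  exact mul_ne_zero (mul_ne_zero h0 (sub_ne_zero.2 h1)) (mul_ne_zero
    (Complex.Gammaℝ_ne_zero_of_re_pos (by linarith)) (riemannZeta_ne_zero_of_one_le_re hs))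

lemma re_zero_pos {ρ : ℂ} (h : xi ρ = 0) : 0 < ρ.re := by
  by_contra! hle
  refine xi_ne_zero_of_one_le_re (s := 1 - ρ) ?_ (by rw [xi_one_sub, h])
  simp; linarith

lemma re_zero_lt_one {ρ : ℂ} (h : xi ρ = 0) : ρ.re < 1 := by
  by_contra! hle
  exact xi_ne_zero_of_one_le_re hle h

/-- The Mellin integral gives boundedness on vertical strips. -/
lemma completedZeta₀_bdd (a b : ℝ) :
    ∃ K : ℝ, 0 < K ∧ ∀ s : ℂ, a ≤ s.re → s.re ≤ b → ‖completedRiemannZeta₀ s‖ ≤ K := by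
  set P := (HurwitzZeta.hurwitzEvenFEPair 0).toStrongFEPair with hP
  have hM : ∀ s : ℂ, MellinConvergent P.f s := fun s =>
    ((HurwitzZeta.hurwitzEvenFEPair 0).isStrongFEPair_toStrongFEPair.hasMellin s).1
  have hI : ∀ c : ℝ, IntegrableOn (fun t : ℝ => t ^ (c / 2 - 1) * ‖P.f t‖) (Ioi 0) := by
    intro c
    have h1 : IntegrableOn (fun t : ℝ => ‖(t : ℂ) ^ (((c / 2 : ℝ) : ℂ) - 1) • P.f t‖) (Ioi 0) :=
      (hM ((c / 2 : ℝ) : ℂ)).norm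
    refine h1.congr_fun (fun t ht => ?_) measurableSet_Ioi
    simp only [norm_smul]
    rw [Complex.norm_cpow_eq_rpow_re_of_pos ht]; simp
  refine ⟨(∫ t in Ioi (0:ℝ), (t ^ (a / 2 - 1) * ‖P.f t‖ + t ^ (b / 2 - 1) * ‖P.f t‖)) + 1,
    ?_, fun s hsa hsb => ?_⟩
  · have : 0 ≤ ∫ t in Ioi (0:ℝ), (t ^ (a / 2 - 1) * ‖P.f t‖ + t ^ (b / 2 - 1) * ‖P.f t‖) := by
      refine setIntegral_nonneg measurableSet_Ioi fun t ht => ?_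
      have : (0:ℝ) < t := ht
      positivity
    linarith
  · have e : completedRiemannZeta₀ s = mellin P.f (s / 2) / 2 := rfl
    rw [e, norm_div]
    have h1 : ‖mellin P.f (s / 2)‖ ≤
        ∫ t in Ioi (0:ℝ), (t ^ (a / 2 - 1) * ‖P.f t‖ + t ^ (b / 2 - 1) * ‖P.f t‖) := by
      rw [mellin]
      refine norm_integral_le_of_norm_le ((hI a).add (hI b)) ?_
      refine (ae_restrict_iff' measurableSet_Ioi).2 (Eventually.of_forall fun t ht => ?_)
      have ht0 : (0:ℝ) < t := ht
      rw [norm_smul, Complex.norm_cpow_eq_rpow_re_of_pos ht, ← add_mul]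
      refine mul_le_mul_of_nonneg_right ?_ (norm_nonneg _)
      have hre : (s / 2 - 1).re = s.re / 2 - 1 := by simp
      rw [hre]
      rcases le_total 1 t with h | h
      · have := Real.rpow_le_rpow_of_exponent_le h (by linarith : s.re / 2 - 1 ≤ b / 2 - 1)
        have := Real.rpow_nonneg ht0.le (a / 2 - 1)
        linarith
      · have := Real.rpow_le_rpow_of_exponent_ge ht0 h (by linarith : a / 2 - 1 ≤ s.re / 2 - 1)
        have := Real.rpow_nonneg ht0.le (b / 2 - 1)
        linarith
    have h2 : ‖(2:ℂ)‖ = 2 := by simp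
    rw [h2]
    have := norm_nonneg (mellin P.f (s / 2))
    linarith

lemma norm_Gamma_le {s : ℂ} (hs : 0 < s.re) : ‖Complex.Gamma s‖ ≤ Real.Gamma s.re := by
  rw [Complex.Gamma_eq_integral hs, Real.Gamma_eq_integral hs, Complex.GammaIntegral]
  refine norm_integral_le_of_norm_le (Real.GammaIntegral_convergent hs) ?_
  refine (ae_restrict_iff' measurableSet_Ioi).2 (Eventually.of_forall fun t ht => ?_)
  rw [norm_mul, Complex.norm_cpow_eq_rpow_re_of_pos ht]
  simp [Complex.norm_exp]

lemma Gamma_le_exp {x R : ℝ} (hx : 1 ≤ x) (hxR : x ≤ R) :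
    Real.Gamma x ≤ Real.exp (8 * (R * √R)) := by
  set N := ⌈R⌉₊ with hN
  have hRN : R ≤ N := Nat.le_ceil R
  have hN2 : (N : ℝ) ≤ 2 * R := by
    have := (Nat.ceil_lt_add_one (by linarith : 0 ≤ R)).le
    linarith
  have hN1 : (1 : ℝ) ≤ N := by linarith
  have h1 : Real.Gamma x ≤ Real.Gamma (x + 1) := by
    rw [Real.Gamma_add_one (by linarith)]
    have := Real.Gamma_pos_of_pos (by linarith : 0 < x)
    nlinarith
  have h2 : Real.Gamma (x + 1) ≤ Real.Gamma (N + 1) :=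
    Real.Gamma_strictMonoOn_Ici.monotoneOn (by simp; linarith) (by simp; linarith) (by linarith)
  rw [Real.Gamma_nat_eq_factorial] at h2
  have h3 : (N.factorial : ℝ) ≤ (N : ℝ) ^ N := by exact_mod_cast Nat.factorial_le_pow N
  have h4 : (N : ℝ) ^ N = Real.exp (N * Real.log N) := by
    rw [← Real.rpow_natCast, Real.rpow_def_of_pos (by linarith), mul_comm]
  have h5 : Real.log N ≤ 4 * √R := by
    have e1 : Real.log N = 2 * Real.log √N := by rw [Real.log_sqrt (by linarith)]; ring
    have e2 := Real.log_le_sub_one_of_pos (Real.sqrt_pos.2 (by linarith : (0:ℝ) < N))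
    have e3 : √(N:ℝ) ≤ 2 * √R := by
      rw [Real.sqrt_le_iff]
      refine ⟨by positivity, ?_⟩
      rw [mul_pow, Real.sq_sqrt (by linarith)]; linarith
    linarith
  refine h1.trans (h2.trans (h3.trans ?_))
  rw [h4]
  apply Real.exp_le_exp.2
  have h6 : 0 ≤ Real.log N := Real.log_nonneg hN1
  calc (N : ℝ) * Real.log N ≤ (2 * R) * (4 * √R) := by
        apply mul_le_mul hN2 h5 h6 (by linarith)
    _ = _ := by ring

lemma norm_zeta_le {s : ℂ} (hs : 2 ≤ s.re) : ‖riemannZeta s‖ ≤ ∑' n : ℕ, 1 / (n + 1 : ℝ) ^ 2 := by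
  rw [zeta_eq_tsum_one_div_nat_add_one_cpow (by linarith)]
  have hsum : Summable fun n : ℕ => 1 / (n + 1 : ℝ) ^ 2 := by
    have := (summable_nat_add_iff 1).2 (Real.summable_one_div_nat_pow.2 (by norm_num : 1 < 2))
    simpa using this
  refine tsum_of_norm_bounded hsum.hasSum fun n => ?_
  have h1 : (n + 1 : ℂ) = ((n + 1 : ℝ) : ℂ) := by push_cast; rfl
  rw [norm_div, norm_one, h1, Complex.norm_cpow_eq_rpow_re_of_pos (by positivity)]
  refine one_div_le_one_div_of_le (by positivity) ?_
  rw [← Real.rpow_natCast]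
  refine Real.rpow_le_rpow_of_exponent_le ?_ (by simpa using hs)
  have : (0:ℝ) ≤ n := Nat.cast_nonneg n
  linarith

/-- `ξ` has order at most `3/2`; its true order is `1`, but any order below `2` suffices for the partial
fractions. The bound is proved for `Re s ≥ 1/2` and carried over by the functional equation. -/
lemma xi_growth : ∃ C, 0 < C ∧ GrowthLE xi C := by
  obtain ⟨K, hK, hKb⟩ := completedZeta₀_bdd (1 / 2) 2
  set Z : ℝ := ∑' n : ℕ, 1 / (n + 1 : ℝ) ^ 2 with hZ
  have hZ0 : 0 ≤ Z := tsum_nonneg fun n => by positivity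
  -- bound for the entire completed zeta function in the right half plane
  have hr : ∀ R : ℝ, 1 ≤ R → ∀ s : ℂ, 1 / 2 ≤ s.re → ‖s‖ ≤ 2 * R →
      ‖completedRiemannZeta₀ s‖ ≤ (K + Z + 2) * Real.exp (8 * (R * √R)) := by
    intro R hR s hs hsR
    have hE : 1 ≤ Real.exp (8 * (R * √R)) := Real.one_le_exp (by positivity)
    rcases le_total s.re 2 with h2 | h2
    · have := hKb s hs h2
      nlinarith
    · have hs0 : s ≠ 0 := by rintro rfl; norm_num at h2
      have hs1 : (1 : ℂ) - s ≠ 0 := by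
        intro h; rw [sub_eq_zero] at h; rw [← h] at h2; norm_num at h2
      have e : completedRiemannZeta₀ s = completedRiemannZeta s + 1 / s + 1 / (1 - s) := by
        rw [completedRiemannZeta_eq]; ring
      have hn : 1 ≤ ‖s‖ := by
        have := Complex.re_le_norm s; linarith
      have hn1 : 1 ≤ ‖1 - s‖ := by
        have h := Complex.re_le_norm (s - 1)
        rw [norm_sub_rev] at h; simp at h; linarith
      have i1 : ‖1 / s‖ ≤ 1 := by
        rw [norm_div, norm_one]; exact div_le_one_of_le₀ hn (norm_nonneg _)
      have i2 : ‖1 / (1 - s)‖ ≤ 1 := by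
        rw [norm_div, norm_one]; exact div_le_one_of_le₀ hn1 (norm_nonneg _)
      have i3 : ‖completedRiemannZeta s‖ ≤ Real.exp (8 * (R * √R)) * Z := by
        rw [completedZeta_eq (by linarith), norm_mul]
        refine mul_le_mul ?_ (norm_zeta_le h2) (norm_nonneg _) (by positivity)
        rw [Complex.Gammaℝ_def, norm_mul]
        have j1 : ‖(π : ℂ) ^ (-s / 2)‖ ≤ 1 := by
          rw [Complex.norm_cpow_eq_rpow_re_of_pos Real.pi_pos]
          refine Real.rpow_le_one_of_one_le_of_nonpos (by linarith [Real.pi_gt_three]) ?_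
          simp; linarith
        have j2 : ‖Complex.Gamma (s / 2)‖ ≤ Real.exp (8 * (R * √R)) := by
          refine (norm_Gamma_le (by simp; linarith)).trans (Gamma_le_exp ?_ ?_)
          · simp; linarith
          · simp; have := Complex.re_le_norm s; linarith
        calc _ ≤ 1 * Real.exp (8 * (R * √R)) := by gcongr
          _ = _ := one_mul _
      rw [e]
      have := norm_add₃_le (a := completedRiemannZeta s) (b := 1 / s) (c := 1 / (1 - s))
      nlinarith
  have hx : ∀ R : ℝ, 1 ≤ R → ∀ s : ℂ, 1 / 2 ≤ s.re → ‖s‖ ≤ 2 * R →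
      ‖xi s‖ ≤ (1 + 12 * (K + Z + 2)) * Real.exp (10 * (R * √R)) := by
    intro R hR s hs hsR
    have h1 := hr R hR s hs hsR
    have hRs : R ≤ R * √R := by
      have : 1 ≤ √R := Real.one_le_sqrt.2 hR
      nlinarith
    have hR2 : R ^ 2 ≤ 2 * Real.exp (2 * (R * √R)) := by
      have a := Real.add_one_le_exp (R * √R)
      have b : Real.exp (2 * (R * √R)) = Real.exp (R * √R) ^ 2 := by
        rw [← Real.exp_nat_mul]; norm_num
      rw [b]
      nlinarith
    have hE : 1 ≤ Real.exp (10 * (R * √R)) := Real.one_le_exp (by positivity)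
    have hEE : Real.exp (10 * (R * √R)) = Real.exp (2 * (R * √R)) * Real.exp (8 * (R * √R)) := by
      rw [← Real.exp_add]; ring_nf
    have h2 : ‖s * (s - 1)‖ ≤ 6 * R ^ 2 := by
      rw [norm_mul]
      have : ‖s - 1‖ ≤ 2 * R + 1 := (norm_sub_le _ _).trans (by simpa using hsR)
      calc ‖s‖ * ‖s - 1‖ ≤ (2 * R) * (2 * R + 1) := by gcongr
        _ ≤ 6 * R ^ 2 := by nlinarith
    calc ‖xi s‖ ≤ 1 + ‖s * (s - 1)‖ * ‖completedRiemannZeta₀ s‖ := by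
          rw [xi, ← norm_mul]; simpa using norm_add_le 1 (s * (s - 1) * completedRiemannZeta₀ s)
      _ ≤ 1 + (6 * (2 * Real.exp (2 * (R * √R)))) * ((K + Z + 2) * Real.exp (8 * (R * √R))) := by
          gcongr; linarith
      _ = 1 + 12 * (K + Z + 2) * Real.exp (10 * (R * √R)) := by rw [hEE]; ring
      _ ≤ _ := by nlinarith
  set D := 1 + 12 * (K + Z + 2) with hD
  have hD1 : 1 ≤ D := by rw [hD]; nlinarith
  refine ⟨10 + Real.log D, by have := Real.log_nonneg hD1; linarith, fun R hR z hz => ?_⟩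
  have key : ‖xi z‖ ≤ D * Real.exp (10 * (R * √R)) := by
    rcases le_total (1 / 2) z.re with h | h
    · exact hx R hR z h (by linarith)
    · rw [← xi_one_sub]
      refine hx R hR (1 - z) (by simp; linarith) ?_
      have := norm_sub_le (1 : ℂ) z
      rw [norm_one] at this; linarith
  have hs : 1 ≤ R * √R := by
    have : 1 ≤ √R := Real.one_le_sqrt.2 hR
    nlinarith
  have hD2 : D ≤ Real.exp (Real.log D * (R * √R)) := by
    calc D = Real.exp (Real.log D) := (Real.exp_log (by linarith)).symm
      _ ≤ _ := Real.exp_le_exp.2 (by have := Real.log_nonneg hD1; nlinarith)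
  rw [xi_zero, norm_one, one_mul]
  calc ‖xi z‖ ≤ D * Real.exp (10 * (R * √R)) := key
    _ ≤ Real.exp (Real.log D * (R * √R)) * Real.exp (10 * (R * √R)) := by gcongr
    _ = _ := by rw [← Real.exp_add]; ring_nf

end Xi
end PhiBound

/-! ### Euler's constant and sums over the zeros -/

namespace PhiBound
section Gamma
open Filter Topology

/-- Midpoint rule for `log`. -/
lemma midpoint_le_log (n : ℕ) :
    (1 : ℝ) / (n + 1) ≤ Real.log (n + 1 + 1 / 2) - Real.log (n + 1 / 2) := by
  have hn : (0 : ℝ) ≤ n := n.cast_nonneg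
  have h := Real.sum_range_le_log_div (x := 1 / (2 * n + 2)) (by positivity)
    (by rw [div_lt_one] <;> linarith) 1
  have e : (1 + 1 / (2 * (n : ℝ) + 2)) / (1 - 1 / (2 * n + 2)) = (n + 1 + 1 / 2) / (n + 1 / 2) := by
    have : (2 * (n : ℝ) + 2) - 1 ≠ 0 := by linarith
    have : (1 : ℝ) - 1 / (2 * n + 2) ≠ 0 := by
      have : (1 : ℝ) / (2 * n + 2) < 1 := by rw [div_lt_one] <;> linarith
      linarith
    rw [div_eq_div_iff this (by positivity)]
    field_simp; ring
  rw [e, Real.log_div (by positivity) (by positivity)] at h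
  have : (1 : ℝ) / (n + 1) = 2 * (1 / (2 * n + 2)) := by field_simp
  simp at h; rw [this]; simp; linarith

/-- Trapezoid rule for `log`. -/
lemma log_le_trapezoid {n : ℕ} (hn : 1 ≤ n) :
    Real.log (n + 1) - Real.log n ≤ 1 / (2 * n) + 1 / (2 * (n + 1)) := by
  have hn' : (1 : ℝ) ≤ n := by exact_mod_cast hn
  have h1 : (1 : ℝ) / (2 * n + 1) < 1 := by rw [div_lt_one] <;> linarith
  have h := Real.log_div_le_sum_range_add (x := 1 / (2 * n + 1)) (by positivity) h1 0
  have e : (1 + 1 / (2 * (n : ℝ) + 1)) / (1 - 1 / (2 * n + 1)) = (n + 1) / n := by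
    have : (1 : ℝ) - 1 / (2 * n + 1) ≠ 0 := by linarith
    field_simp; ring
  rw [e, Real.log_div (by positivity) (by positivity)] at h
  have e2 : (1 / (2 * (n : ℝ) + 1)) / (1 - (1 / (2 * n + 1)) ^ 2)
      = (1 / (2 * n) + 1 / (2 * (n + 1))) / 2 := by
    have : (1 : ℝ) - (1 / (2 * n + 1)) ^ 2 ≠ 0 := by
      have : (1 / (2 * (n : ℝ) + 1)) ^ 2 < 1 := by
        apply pow_lt_one₀ (by positivity) h1 (by norm_num)
      linarith
    have h4 : ((2 * (n : ℝ) + 1) ^ 2 - 1) ≠ 0 := by nlinarith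
    field_simp
    ring
  simp only [Finset.range_zero, Finset.sum_empty, mul_zero, zero_add, pow_one] at h
  rw [e2] at h; linarith

lemma gamma_ge {n : ℕ} (hn : 1 ≤ n) :
    (harmonic n : ℝ) - Real.log n - 1 / (2 * n) ≤ Real.eulerMascheroniConstant := by
  set u : ℕ → ℝ := fun k => (harmonic (k + 1) : ℝ) - Real.log (k + 1 : ℕ) - 1 / (2 * (k + 1 : ℕ)) with hu
  have hmono : Monotone u := by
    refine monotone_nat_of_le_succ fun k => ?_
    have h := log_le_trapezoid (n := k + 1) (by omega)
    simp only [hu]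
    rw [harmonic_succ (k + 1)]
    push_cast at h ⊢
    have : ((k : ℝ) + 1 + 1)⁻¹ = 2 * (1 / (2 * (k + 1 + 1))) := by field_simp
    rw [this]; linarith
  have hlim : Tendsto u atTop (𝓝 Real.eulerMascheroniConstant) := by
    have h1 := (tendsto_add_atTop_iff_nat 1).2 Real.tendsto_harmonic_sub_log
    have h2 : Tendsto (fun k : ℕ => (1 : ℝ) / (2 * (k + 1 : ℕ))) atTop (𝓝 0) := by
      have := ((tendsto_one_div_add_atTop_nhds_zero_nat (𝕜 := ℝ)).const_mul (1 / 2))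
      simp only [mul_zero] at this
      refine this.congr fun k => ?_
      push_cast; field_simp
    have := h1.sub h2
    rw [sub_zero] at this
    exact this
  obtain ⟨k, rfl⟩ : ∃ k, n = k + 1 := ⟨n - 1, by omega⟩
  exact hmono.ge_of_tendsto hlim k

lemma gamma_le (n : ℕ) :
    Real.eulerMascheroniConstant ≤ (harmonic n : ℝ) - Real.log (n + 1 / 2) := by
  set u : ℕ → ℝ := fun k => (harmonic k : ℝ) - Real.log (k + 1 / 2) with hu
  have hmono : Antitone u := by
    refine antitone_nat_of_succ_le fun k => ?_
    have h := midpoint_le_log k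
    simp only [hu]
    rw [harmonic_succ]
    push_cast at h ⊢
    rw [one_div] at h; linarith
  have hlim : Tendsto u atTop (𝓝 Real.eulerMascheroniConstant) := by
    have h1 := Real.tendsto_harmonic_sub_log
    have h2 : Tendsto (fun k : ℕ => Real.log ((k : ℝ) + 1 / 2) - Real.log k) atTop (𝓝 0) := by
      have h3 : Tendsto (fun k : ℕ => 1 + (1 / 2) * (1 / (k : ℝ))) atTop (𝓝 (1 + 1 / 2 * 0)) :=
        (tendsto_one_div_atTop_nhds_zero_nat.const_mul _).const_add _
      have h4 := h3.log (by norm_num)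
      simp only [mul_zero, add_zero, Real.log_one] at h4
      refine h4.congr' ?_
      filter_upwards [eventually_ge_atTop 1] with k hk
      have hk' : (0 : ℝ) < k := by exact_mod_cast hk
      rw [← Real.log_div (by positivity) (by positivity)]
      congr 1; field_simp
    have := h1.sub h2
    simp only [sub_zero] at this
    refine this.congr fun k => ?_
    simp [hu]
  exact hmono.le_of_tendsto hlim n

lemma gamma_bounds : 0.57719 < Real.eulerMascheroniConstant ∧
    Real.eulerMascheroniConstant < 0.57723 := by
  have h1 := gamma_ge (n := 64) (by norm_num)
  have h2 := gamma_le 64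
  have hl := Real.log_two_gt_d9
  have hu := Real.log_two_lt_d9
  have e : Real.log (64 : ℕ) = 6 * Real.log 2 := by
    rw [show ((64 : ℕ) : ℝ) = 2 ^ 6 by norm_num, Real.log_pow]; norm_num
  have e2 : Real.log ((64 : ℕ) + 1 / 2) = 6 * Real.log 2 + Real.log (129 / 128) := by
    rw [show ((64 : ℕ) + 1 / 2 : ℝ) = 2 ^ 6 * (129 / 128) by norm_num,
      Real.log_mul (by norm_num) (by norm_num), Real.log_pow]; norm_num
  have h3 := Real.sum_range_le_log_div (x := 1 / 257) (by norm_num) (by norm_num) 1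
  rw [show ((1 : ℝ) + 1 / 257) / (1 - 1 / 257) = 129 / 128 by norm_num] at h3
  rw [e] at h1
  rw [e2] at h2
  have hHl : (4.743890 : ℚ) < harmonic 64 := by
    rw [harmonic]; simp only [Finset.sum_range_succ, Finset.sum_range_zero]; norm_num
  have hHu : harmonic 64 < (4.743892 : ℚ) := by
    rw [harmonic]; simp only [Finset.sum_range_succ, Finset.sum_range_zero]; norm_num
  have hHl' : (4.743890 : ℝ) < harmonic 64 := by
    have := (Rat.cast_lt (K := ℝ)).2 hHl; norm_num at this ⊢
  have hHu' : (harmonic 64 : ℝ) < 4.743892 := by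
    have := (Rat.cast_lt (K := ℝ)).2 hHu; norm_num at this ⊢
  norm_num at h1 h2 h3 ⊢
  constructor <;> linarith
end Gamma
end PhiBound

namespace PhiBound
section ZeroSums
open Filter Topology

/-- The multiplicity of `ρ` as a zero of `ξ`, as a real number; sums over the nontrivial zeros are
written as sums over all `ρ : ℂ` weighted by `mz ρ`. -/
noncomputable def mz (ρ : ℂ) : ℝ := mult xi ρ

/-- The constant `∑ Re (1/ρ) = 1 + (γ - log 4π) / 2` over the nontrivial zeros. -/
noncomputable def bz : ℝ := 1 + (Real.eulerMascheroniConstant - Real.log (4 * π)) / 2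

lemma mz_nonneg (ρ : ℂ) : 0 ≤ mz ρ := Nat.cast_nonneg _

lemma mz_eq_zero {ρ : ℂ} (h : xi ρ ≠ 0) : mz ρ = 0 := by
  have := (mult_eq_zero_iff differentiable_xi xi_zero_ne ρ).2 h
  simp [mz, this]

lemma one_le_mz {ρ : ℂ} (h : xi ρ = 0) : 1 ≤ mz ρ := by
  have := (mult_eq_zero_iff differentiable_xi xi_zero_ne ρ).not.2 (not_not.2 h)
  have h2 : 1 ≤ mult xi ρ := Nat.one_le_iff_ne_zero.2 this
  rw [mz]; exact_mod_cast h2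

/-- To prove an inequality between weighted terms, only zeros matter. -/
lemma mz_mul_le {a b : ℂ → ℝ} (h : ∀ ρ, xi ρ = 0 → a ρ ≤ b ρ) (ρ : ℂ) : mz ρ * a ρ ≤ mz ρ * b ρ := by
  by_cases hx : xi ρ = 0
  · exact mul_le_mul_of_nonneg_left (h ρ hx) (mz_nonneg ρ)
  · simp [mz_eq_zero hx]

lemma mz_one_sub (ρ : ℂ) : mz (1 - ρ) = mz ρ := by
  have key : ∀ ρ : ℂ, mult xi ρ = mult xi (1 - ρ) := by
    intro ρ
    have hg : AnalyticAt ℂ (fun s : ℂ => 1 - s) ρ := by fun_prop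
    have h := analyticOrderAt_comp_of_deriv_ne_zero (f := xi) (g := fun s : ℂ => 1 - s)
      (z₀ := ρ) hg (by
        have : HasDerivAt (fun s : ℂ => 1 - s) (-1) ρ := by
          simpa using (hasDerivAt_id ρ).const_sub 1
        rw [this.deriv]; norm_num)
    have e : xi ∘ (fun s : ℂ => 1 - s) = xi := by funext s; simp [xi_one_sub]
    rw [e] at h
    simp only [mult, analyticOrderNatAt, h]
  simp only [mz]; rw [← key ρ]

lemma logDeriv_xi_one : logDeriv xi 1 = bz := by
  have h0 : HasDerivAt completedRiemannZeta₀ (deriv completedRiemannZeta₀ 1) 1 :=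
    (differentiable_completedZeta₀ 1).hasDerivAt
  have h1 : HasDerivAt (fun s : ℂ => s * (s - 1)) (1 * (1 - 1) + 1 * 1) 1 :=
    (hasDerivAt_id (1 : ℂ)).mul ((hasDerivAt_id (1 : ℂ)).sub_const 1)
  have h2 := (h1.mul h0).const_add 1
  have h3 : deriv xi 1 = completedRiemannZeta₀ 1 := by
    have e : xi = fun s => 1 + ((fun s : ℂ => s * (s - 1)) * completedRiemannZeta₀) s := by
      funext s; simp [xi]
    rw [e, h2.deriv]; simp
  rw [logDeriv_apply, h3, xi_one, completedRiemannZeta₀_one, bz]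
  have : Complex.log (4 * (π : ℂ)) = ((Real.log (4 * π) : ℝ) : ℂ) := by
    rw [Complex.ofReal_log (by positivity)]; push_cast; rfl
  rw [this]; push_cast; ring

lemma logDeriv_xi_one_sub (z : ℂ) : logDeriv xi (1 - z) = -logDeriv xi z := by
  have h : HasDerivAt (fun s : ℂ => 1 - s) (-1) z := by
    simpa using (hasDerivAt_id z).const_sub 1
  have h2 := ((differentiable_xi (1 - z)).hasDerivAt).comp z h
  have e : xi ∘ (fun s : ℂ => 1 - s) = xi := by funext s; simp [xi_one_sub]
  rw [e] at h2
  rw [logDeriv_apply, logDeriv_apply, h2.deriv, xi_one_sub]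
  ring

lemma logDeriv_xi_zero : logDeriv xi 0 = -(bz : ℂ) := by
  have := logDeriv_xi_one_sub 1
  rw [sub_self] at this
  rw [this, logDeriv_xi_one]

lemma hasSum_xi {z : ℂ} (hz : xi z ≠ 0) :
    HasSum (fun ρ : ℂ => (mz ρ : ℂ) * (1 / (z - ρ) + 1 / ρ)) (logDeriv xi z + bz) := by
  obtain ⟨C, hC, hg⟩ := xi_growth
  have := hasSum_logDeriv hC differentiable_xi xi_zero_ne hg hz
  rw [logDeriv_xi_zero] at this
  simpa [mz] using this

lemma ne_zero_of_xi {ρ : ℂ} (h : xi ρ = 0) : ρ ≠ 0 := by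
  rintro rfl; exact xi_zero_ne h

lemma ne_one_of_xi {ρ : ℂ} (h : xi ρ = 0) : 1 - ρ ≠ 0 := by
  intro h1; have : ρ = 1 := by linear_combination -h1
  rw [this, xi_one] at h; exact one_ne_zero h

lemma re_one_div (z : ℂ) : (1 / z).re = z.re / (z.re ^ 2 + z.im ^ 2) := by
  rw [one_div, Complex.inv_re, Complex.normSq_apply]; ring

lemma hasSum_re_aux : HasSum (fun ρ : ℂ => mz ρ * ((1 / ρ).re + (1 / (1 - ρ)).re)) (2 * bz) := by
  have h := hasSum_xi (z := 1) (by rw [xi_one]; exact one_ne_zero)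
  rw [logDeriv_xi_one] at h
  have := Complex.hasSum_re h
  have e : ((bz : ℂ) + bz).re = 2 * bz := by simp; ring
  rw [e] at this
  refine this.congr_fun ?_
  intro ρ
  simp only [Complex.re_ofReal_mul, Complex.add_re]
  ring

lemma re_one_div_nonneg {ρ : ℂ} (h : xi ρ = 0) : 0 ≤ (1 / ρ).re := by
  rw [re_one_div]; have := re_zero_pos h; positivity

lemma re_one_div_one_sub_nonneg {ρ : ℂ} (h : xi ρ = 0) : 0 ≤ (1 / (1 - ρ)).re := by
  rw [re_one_div]; have := re_zero_lt_one h
  have : 0 ≤ (1 - ρ).re := by simp; linarith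
  positivity

/-- The partial fractions determine only the sum of `Re (1/ρ) + Re (1/(1-ρ))`. Both summands are nonnegative,
so each series converges, and the symmetry `ρ ↦ 1 - ρ` shows that each gives half of the total. -/
lemma hasSum_re_inv : HasSum (fun ρ : ℂ => mz ρ * (1 / ρ).re) bz := by
  have hs : Summable (fun ρ : ℂ => mz ρ * (1 / ρ).re) := by
    refine Summable.of_nonneg_of_le (fun ρ => ?_) (fun ρ => ?_) hasSum_re_aux.summable
    · simpa using mz_mul_le (a := fun _ => 0) (fun ρ h => re_one_div_nonneg h) ρ
    · exact mz_mul_le (a := fun ρ => (1 / ρ).re) (b := fun ρ => (1 / ρ).re + (1 / (1 - ρ)).re)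
        (fun ρ h => by have := re_one_div_one_sub_nonneg h; linarith) ρ
  have h1 := hs.hasSum
  have h2 := (Equiv.subLeft (1 : ℂ)).hasSum_iff.2 h1
  have h3 := h1.add h2
  have h4 : HasSum (fun ρ : ℂ => mz ρ * ((1 / ρ).re + (1 / (1 - ρ)).re))
      (∑' ρ : ℂ, mz ρ * (1 / ρ).re + ∑' ρ : ℂ, mz ρ * (1 / ρ).re) := by
    convert h3 using 2 with ρ
    simp [mz_one_sub]; ring
  have := h4.unique hasSum_re_aux
  have e : ∑' ρ : ℂ, mz ρ * (1 / ρ).re = bz := by linarith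
  rwa [e] at h1

/-- The partial fraction expansion of `ξ'/ξ`, real parts. -/
lemma hasSum_re_xi {z : ℂ} (hz : xi z ≠ 0) :
    HasSum (fun ρ : ℂ => mz ρ * (1 / (z - ρ)).re) (logDeriv xi z).re := by
  have h := (Complex.hasSum_re (hasSum_xi hz)).sub hasSum_re_inv
  have e : (logDeriv xi z + (bz : ℂ)).re - bz = (logDeriv xi z).re := by simp
  rw [e] at h
  refine h.congr_fun fun ρ => ?_
  simp only [Complex.re_ofReal_mul, Complex.add_re]
  ring

lemma re_sum_ge {ρ : ℂ} (h : xi ρ = 0) :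
    1 / (1 + ρ.im ^ 2) ≤ (1 / ρ).re + (1 / (1 - ρ)).re := by
  have h0 := re_zero_pos h
  have h1 := re_zero_lt_one h
  rw [re_one_div, re_one_div]
  simp only [Complex.sub_re, Complex.one_re, Complex.sub_im, Complex.one_im, zero_sub, neg_sq]
  have a : ρ.re / (1 + ρ.im ^ 2) ≤ ρ.re / (ρ.re ^ 2 + ρ.im ^ 2) := by
    apply div_le_div_of_nonneg_left h0.le (by positivity); nlinarith
  have b : (1 - ρ.re) / (1 + ρ.im ^ 2) ≤ (1 - ρ.re) / ((1 - ρ.re) ^ 2 + ρ.im ^ 2) := by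
    have : 0 < 1 - ρ.re := by linarith
    apply div_le_div_of_nonneg_left (by linarith) (by positivity); nlinarith
  calc 1 / (1 + ρ.im ^ 2) = ρ.re / (1 + ρ.im ^ 2) + (1 - ρ.re) / (1 + ρ.im ^ 2) := by
        rw [← add_div]; ring_nf
    _ ≤ _ := add_le_add a b

lemma bz_le : bz ≤ 0.0232 := by
  have hg := gamma_bounds.2
  have hp := Real.pi_gt_d4
  have h2 := Real.log_two_gt_d9
  have h3 := Real.sum_range_le_log_div (x := 5707 / 25707) (by norm_num) (by norm_num) 4
  rw [show ((1 : ℝ) + 5707 / 25707) / (1 - 5707 / 25707) = 31414 / 20000 by norm_num] at h3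
  have h4 : Real.log (4 * π) ≥ 3 * Real.log 2 + Real.log (31414 / 20000) := by
    rw [show 3 * Real.log 2 = Real.log (2 ^ 3) by rw [Real.log_pow]; norm_num,
      ← Real.log_mul (by norm_num) (by norm_num)]
    apply Real.log_le_log (by norm_num); norm_num at hp ⊢; linarith
  norm_num [Finset.sum_range_succ] at h3
  rw [bz]; norm_num at hg h2 ⊢; linarith

lemma bz_nonneg : 0 ≤ bz :=
  hasSum_re_inv.nonneg fun ρ => by
    simpa using mz_mul_le (a := fun _ => 0) (fun ρ h => re_one_div_nonneg h) ρ

/-- A nontrivial zero has height more than `6.4`. -/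
lemma im_sq_ge {ρ : ℂ} (h : xi ρ = 0) : 41 ≤ ρ.im ^ 2 := by
  set g : ℂ → ℝ := fun ρ => mz ρ * ((1 / ρ).re + (1 / (1 - ρ)).re) with hgdef
  have hnn : ∀ ρ, 0 ≤ g ρ := fun ρ => by
    have := mz_mul_le (a := fun _ => 0) (fun ρ h => add_nonneg (re_one_div_nonneg h)
      (re_one_div_one_sub_nonneg h)) ρ
    rwa [mul_zero] at this
  have hone : ∀ ρ, xi ρ = 0 → 1 / (1 + ρ.im ^ 2) ≤ g ρ := fun ρ h => by
    have a := re_sum_ge h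
    have b := one_le_mz h
    have c : (0 : ℝ) < 1 / (1 + ρ.im ^ 2) := by positivity
    simp only [hgdef]; nlinarith
  have hb := bz_le
  have hpos : 0 < 1 + ρ.im ^ 2 := by positivity
  by_cases h12 : ρ = 1 - ρ
  · have a := le_hasSum hasSum_re_aux ρ (fun _ _ => hnn _)
    have c := (hone ρ h).trans a
    have him : ρ.im = 0 := by
      have := congrArg Complex.im h12; simp at this; linarith
    rw [him] at c; norm_num at c hb; linarith
  · have a := sum_le_hasSum {ρ, 1 - ρ} (fun _ _ => hnn _) hasSum_re_aux
    rw [Finset.sum_pair h12] at a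
    have c1 := hone ρ h
    have c2 := hone (1 - ρ) (by rw [xi_one_sub, h])
    simp only [Complex.sub_im, Complex.one_im, zero_sub, neg_sq] at c2
    have c3 : 1 / (1 + ρ.im ^ 2) ≤ 0.0232 := by simp only [hgdef] at *; linarith
    rw [div_le_iff₀ hpos] at c3
    norm_num at c3; linarith

lemma norm_q_ge (ρ : ℂ) : ρ.im ^ 2 ≤ ‖ρ * (1 - ρ)‖ := by
  rw [norm_mul]
  have h1 := Complex.abs_im_le_norm ρ
  have h2 := Complex.abs_im_le_norm (1 - ρ)
  simp only [Complex.sub_im, Complex.one_im, zero_sub, abs_neg] at h2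
  rw [← sq_abs, sq]
  exact mul_le_mul h1 h2 (abs_nonneg _) (norm_nonneg _)

lemma summable_im : Summable (fun ρ : ℂ => mz ρ * (1 / (1 + ρ.im ^ 2))) :=
  Summable.of_nonneg_of_le (fun ρ => mul_nonneg (mz_nonneg ρ) (by positivity))
    (fun ρ => mz_mul_le (fun ρ h => re_sum_ge h) ρ) hasSum_re_aux.summable

lemma norm_inv_q_le {ρ : ℂ} (h : xi ρ = 0) :
    1 / ‖ρ * (1 - ρ)‖ ≤ 42 / 41 * (1 / (1 + ρ.im ^ 2)) := by
  have a := norm_q_ge ρ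
  have b := im_sq_ge h
  rw [mul_one_div, div_le_div_iff₀ (by linarith) (by positivity)]
  linarith

lemma summable_q : Summable (fun ρ : ℂ => mz ρ * (1 / ‖ρ * (1 - ρ)‖)) := by
  refine Summable.of_nonneg_of_le (fun ρ => mul_nonneg (mz_nonneg ρ) (by positivity))
    (fun ρ => mz_mul_le (fun ρ h => norm_inv_q_le h) ρ) ?_
  simpa [mul_left_comm] using summable_im.mul_left (42 / 41)

/-- No zero has small imaginary part, so `|ρ (1 - ρ)|⁻¹` exceeds `Re (1/ρ) + Re (1/(1-ρ))` by a factor of at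
most `42/41`, and the sum of the latter is `2 * bz`. -/
lemma tsum_q_le : ∑' ρ : ℂ, mz ρ * (1 / ‖ρ * (1 - ρ)‖) ≤ 0.0476 := by
  have h1 : ∑' ρ : ℂ, mz ρ * (1 / ‖ρ * (1 - ρ)‖) ≤
      ∑' ρ : ℂ, 42 / 41 * (mz ρ * ((1 / ρ).re + (1 / (1 - ρ)).re)) := by
    refine summable_q.tsum_le_tsum (fun ρ => ?_) (hasSum_re_aux.summable.mul_left _)
    have := mz_mul_le (fun ρ h => (norm_inv_q_le h).trans
      (mul_le_mul_of_nonneg_left (re_sum_ge h) (by norm_num : (0 : ℝ) ≤ 42 / 41))) ρ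
    linarith
  rw [tsum_mul_left, hasSum_re_aux.tsum_eq] at h1
  have := bz_le
  norm_num at *; linarith

/-- For real `s > 1`, the density of zeros near height `s` is controlled by `ξ'/ξ (s)`. -/
lemma tsum_im_le {s : ℝ} (hs : 1 < s) :
    Summable (fun ρ : ℂ => mz ρ * (1 / (s ^ 2 + ρ.im ^ 2))) ∧
    ∑' ρ : ℂ, mz ρ * (1 / (s ^ 2 + ρ.im ^ 2)) ≤ (logDeriv xi s).re / (s - 1) := by
  have hz : xi s ≠ 0 := xi_ne_zero_of_one_le_re (by simpa using hs.le)
  have hH := (hasSum_re_xi hz).div_const (s - 1)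
  have hle : ∀ ρ : ℂ, mz ρ * (1 / (s ^ 2 + ρ.im ^ 2)) ≤ mz ρ * (1 / ((s : ℂ) - ρ)).re / (s - 1) := by
    intro ρ
    rw [mul_div_assoc]
    refine mz_mul_le (a := fun ρ => 1 / (s ^ 2 + ρ.im ^ 2))
      (b := fun ρ => (1 / ((s : ℂ) - ρ)).re / (s - 1)) (fun ρ h => ?_) ρ
    have h0 := re_zero_pos h
    have h1 := re_zero_lt_one h
    rw [re_one_div, le_div_iff₀ (by linarith)]
    simp only [Complex.sub_re, Complex.ofReal_re, Complex.sub_im, Complex.ofReal_im, zero_sub, neg_sq]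
    rw [div_mul_eq_mul_div, div_le_div_iff₀ (by positivity) (by nlinarith)]
    nlinarith [sq_nonneg ρ.im, mul_nonneg (sub_nonneg.2 h1.le) (sq_nonneg ρ.im),
      mul_pos (sub_pos.2 (h1.trans hs)) h0]
  have hs1 : Summable (fun ρ : ℂ => mz ρ * (1 / (s ^ 2 + ρ.im ^ 2))) :=
    Summable.of_nonneg_of_le (fun ρ => mul_nonneg (mz_nonneg ρ) (by positivity)) hle hH.summable
  refine ⟨hs1, ?_⟩
  rw [← hH.tsum_eq]
  exact hs1.tsum_le_tsum hle hH.summable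
end ZeroSums
end PhiBound

/-! ### The digamma function and `ζ' / ζ` -/

namespace PhiBound
section Digamma
open Filter Topology Set

/-- The digamma function on the real line. -/
noncomputable def dg (x : ℝ) : ℝ := deriv Real.Gamma x / Real.Gamma x

lemma differentiableAt_Gamma_pos {x : ℝ} (hx : 0 < x) : DifferentiableAt ℝ Real.Gamma x :=
  Real.differentiableAt_Gamma fun m => by have : (0 : ℝ) ≤ m := m.cast_nonneg; linarith

lemma differentiableAt_Gamma_re {z : ℂ} (hz : 0 < z.re) : DifferentiableAt ℂ Complex.Gamma z :=
  Complex.differentiableAt_Gamma z fun m h => by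
    have h1 := congrArg Complex.re h
    have : (0 : ℝ) ≤ m := m.cast_nonneg
    simp at h1; linarith

lemma digamma_ofReal {x : ℝ} (hx : 0 < x) : Complex.digamma x = dg x := by
  have h1 := (differentiableAt_Gamma_re (z := (x : ℂ)) (by simpa using hx)).hasDerivAt.comp_ofReal
  have h2 := (differentiableAt_Gamma_pos hx).hasDerivAt.ofReal_comp
  have e : (fun y : ℝ => Complex.Gamma y) = fun y : ℝ => ((Real.Gamma y : ℝ) : ℂ) := by
    funext y; rw [Complex.Gamma_ofReal]
  rw [e] at h1
  rw [Complex.digamma_def, logDeriv_apply, h1.unique h2, Complex.Gamma_ofReal, dg]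
  push_cast; rfl

lemma hasDerivAt_logGamma {x : ℝ} (hx : 0 < x) : HasDerivAt (Real.log ∘ Real.Gamma) (dg x) x :=
  ((differentiableAt_Gamma_pos hx).hasDerivAt).log (Real.Gamma_pos_of_pos hx).ne'

lemma logGamma_add_one {x : ℝ} (hx : 0 < x) :
    slope (Real.log ∘ Real.Gamma) x (x + 1) = Real.log x := by
  rw [slope_def_field]
  simp only [Function.comp, Real.Gamma_add_one hx.ne', add_sub_cancel_left, div_one]
  rw [Real.log_mul hx.ne' (Real.Gamma_pos_of_pos hx).ne']; ring

lemma dg_le_log {x : ℝ} (hx : 0 < x) : dg x ≤ Real.log x := by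
  rw [← logGamma_add_one hx]
  exact Real.convexOn_log_Gamma.le_slope_of_hasDerivAt (mem_Ioi.2 hx)
    (mem_Ioi.2 (by linarith)) (by linarith) (hasDerivAt_logGamma hx)

lemma log_le_dg {x : ℝ} (hx : 0 < x) : Real.log x ≤ dg (x + 1) := by
  rw [← logGamma_add_one hx]
  exact Real.convexOn_log_Gamma.slope_le_of_hasDerivAt (mem_Ioi.2 hx)
    (mem_Ioi.2 (by linarith)) (by linarith) (hasDerivAt_logGamma (by linarith))

lemma digamma_add_one {z : ℂ} (hz : 0 < z.re) :
    Complex.digamma (z + 1) = Complex.digamma z + 1 / z := by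
  rw [Complex.digamma_apply_add_one, one_div]
  intro m h
  have h1 := congrArg Complex.re h
  have : (0 : ℝ) ≤ m := m.cast_nonneg
  simp at h1; linarith

lemma dg_add_one {x : ℝ} (hx : 0 < x) : dg (x + 1) = dg x + 1 / x := by
  have h := digamma_add_one (z := (x : ℂ)) (by simpa using hx)
  have h2 := digamma_ofReal (x := x + 1) (by linarith)
  push_cast at h2
  rw [h2, digamma_ofReal hx] at h
  exact_mod_cast h

lemma digamma_add_nat {z : ℂ} (hz : 0 < z.re) (N : ℕ) :
    Complex.digamma (z + N) = Complex.digamma z + ∑ n ∈ Finset.range N, 1 / (n + z) := by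
  induction N with
  | zero => simp
  | succ k ih =>
    rw [Finset.sum_range_succ, ← add_assoc, ← ih, Nat.cast_succ, ← add_assoc,
      digamma_add_one (by have : (0 : ℝ) ≤ k := k.cast_nonneg
                          simp; linarith), add_comm (k : ℂ) z]

/-- The general term of the digamma series. -/
noncomputable def dterm (n : ℕ) (z : ℂ) : ℂ := 1 / ((n : ℂ) + 1) - 1 / (n + z)

lemma dterm_norm_le {ε R : ℝ} (hε : 0 < ε) {z : ℂ} (h1 : ε ≤ z.re) (h2 : ‖z‖ ≤ R) (n : ℕ) :
    ‖dterm n z‖ ≤ (R + 1) * (1 / min ε 1) * (1 / ((n : ℝ) + 1) ^ 2) := by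
  have hn : (0 : ℝ) ≤ n := n.cast_nonneg
  have hm : 0 < min ε 1 := lt_min hε one_pos
  have hre : min ε 1 * (n + 1) ≤ ‖(n : ℂ) + z‖ := by
    have a := Complex.re_le_norm ((n : ℂ) + z)
    simp at a
    have b : min ε 1 * n ≤ 1 * n := mul_le_mul_of_nonneg_right (min_le_right _ _) hn
    have c := min_le_left ε 1
    nlinarith
  have hz : (n : ℂ) + z ≠ 0 := by
    intro h; rw [h, norm_zero] at hre
    have : 0 < min ε 1 * (n + 1) := by positivity
    linarith
  have hn1 : (n : ℂ) + 1 ≠ 0 := Nat.cast_add_one_ne_zero n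
  have e : dterm n z = (z - 1) / (((n : ℂ) + 1) * (n + z)) := by
    rw [dterm]; field_simp; ring
  have hn2 : ‖(n : ℂ) + 1‖ = n + 1 := by
    rw [show (n : ℂ) + 1 = ((n + 1 : ℕ) : ℂ) by push_cast; rfl, Complex.norm_natCast]; push_cast; rfl
  rw [e, norm_div, norm_mul, hn2]
  have hz1 : ‖z - 1‖ ≤ R + 1 := (norm_sub_le _ _).trans (by simpa using h2)
  have hR : 0 ≤ R + 1 := (norm_nonneg _).trans hz1
  calc ‖z - 1‖ / ((n + 1) * ‖(n : ℂ) + z‖) ≤ (R + 1) / ((n + 1) * (min ε 1 * (n + 1))) := by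
        gcongr
    _ = _ := by field_simp

lemma summable_inv_sq : Summable fun n : ℕ => 1 / ((n : ℝ) + 1) ^ 2 := by
  have := (summable_nat_add_iff 1).2 (Real.summable_one_div_nat_pow.2 (by norm_num : 1 < 2))
  simpa using this

lemma summable_dterm {z : ℂ} (hz : 0 < z.re) : Summable fun n => dterm n z :=
  Summable.of_norm_bounded (summable_inv_sq.mul_left _) (fun n => dterm_norm_le hz le_rfl le_rfl n)

lemma dterm_differentiable : DifferentiableOn ℂ (fun z => ∑' n, dterm n z) {z | 0 < z.re} := by
  intro z hz
  have hz' : 0 < z.re := hz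
  set U : Set ℂ := {w | z.re / 2 < w.re} ∩ Metric.ball 0 (‖z‖ + 1)
  have hU : IsOpen U :=
    (isOpen_lt continuous_const Complex.continuous_re).inter Metric.isOpen_ball
  have hd := Complex.differentiableOn_tsum_of_summable_norm (F := dterm) (U := U)
    (summable_inv_sq.mul_left _) (fun n => by
      intro w hw
      have h1 : z.re / 2 < w.re := hw.1
      have : (n : ℂ) + w ≠ 0 := by
        intro h
        have h2 := congrArg Complex.re h
        have : (0 : ℝ) ≤ n := n.cast_nonneg
        simp at h2; linarith
      unfold dterm
      apply DifferentiableAt.differentiableWithinAt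
      fun_prop (disch := assumption)) hU
    (fun n w hw => dterm_norm_le (ε := z.re / 2) (R := ‖z‖ + 1) (by linarith) (le_of_lt hw.1)
      (by have := hw.2; simp at this; exact this.le) n)
  refine (hd.differentiableAt (hU.mem_nhds ⟨?_, ?_⟩)).differentiableWithinAt
  · change z.re / 2 < z.re; linarith
  · simp

/-- The series for the digamma function at real arguments, by squeezing `dg (x + N)` between logarithms
with the help of the convexity of `log Γ`. -/
lemma digamma_series_real {x : ℝ} (hx : 0 < x) :
    ∑' n, dterm n (x : ℂ) = Complex.digamma x + Real.eulerMascheroniConstant := by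
  have hs := (summable_dterm (z := (x : ℂ)) (by simpa using hx)).hasSum.tendsto_sum_nat
  refine tendsto_nhds_unique hs ?_
  have e : ∀ N : ℕ, ∑ n ∈ Finset.range N, dterm n (x : ℂ) =
      (((harmonic N : ℝ) - dg (x + N) + dg x : ℝ) : ℂ) := by
    intro N
    have h := digamma_add_nat (z := (x : ℂ)) (by simpa using hx) N
    have hN : (0 : ℝ) ≤ N := N.cast_nonneg
    have h2 := digamma_ofReal (x := x + N) (by linarith)
    push_cast at h2
    rw [h2, digamma_ofReal hx] at h
    have h3 : ∑ n ∈ Finset.range N, 1 / ((n : ℂ) + x) = dg (x + N) - dg x := by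
      rw [h]; ring
    simp only [dterm, Finset.sum_sub_distrib]
    rw [h3]
    push_cast
    simp only [harmonic]
    push_cast
    simp only [one_div]
    ring
  simp only [e]
  rw [digamma_ofReal hx, ← Complex.ofReal_add]
  refine (Complex.continuous_ofReal.tendsto _).comp ?_
  have h0 : Tendsto (fun N : ℕ => dg (x + N) - Real.log N) atTop (𝓝 0) := by
    have t1 : Tendsto (fun N : ℕ => Real.log (1 + x * (1 / (N : ℝ)))) atTop (𝓝 0) := by
      have := ((tendsto_one_div_atTop_nhds_zero_nat (𝕜 := ℝ)).const_mul x).const_add 1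
      have := this.log (by norm_num)
      simpa using this
    have t2 : Tendsto (fun N : ℕ => -(1 / (N : ℝ))) atTop (𝓝 0) := by
      simpa using (tendsto_one_div_atTop_nhds_zero_nat (𝕜 := ℝ)).neg
    refine tendsto_of_tendsto_of_tendsto_of_le_of_le' t2 t1 ?_ ?_
    · filter_upwards [eventually_ge_atTop 1] with N hN
      have hN' : (0 : ℝ) < N := by exact_mod_cast hN
      have a := log_le_dg (x := x + N) (by linarith)
      rw [dg_add_one (by linarith)] at a
      have b : Real.log N ≤ Real.log (x + N) := Real.log_le_log hN' (by linarith)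
      have c : 1 / (x + N) ≤ 1 / (N : ℝ) := one_div_le_one_div_of_le hN' (by linarith)
      linarith
    · filter_upwards [eventually_ge_atTop 1] with N hN
      have hN' : (0 : ℝ) < N := by exact_mod_cast hN
      have a := dg_le_log (x := x + N) (by linarith)
      have : Real.log (1 + x * (1 / (N : ℝ))) = Real.log (x + N) - Real.log N := by
        rw [← Real.log_div (by positivity) (by positivity)]; congr 1; field_simp; ring
      rw [this]; linarith
  have := (Real.tendsto_harmonic_sub_log.sub h0).const_add (dg x)
  rw [sub_zero] at this
  refine this.congr fun N => ?_
  ring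

/-- The digamma series, `ψ(z) + γ = ∑ (1/(n+1) - 1/(n+z))`. -/
lemma digamma_series {z : ℂ} (hz : 0 < z.re) :
    HasSum (fun n => dterm n z) (Complex.digamma z + Real.eulerMascheroniConstant) := by
  have ho : IsOpen {z : ℂ | 0 < z.re} := isOpen_lt continuous_const Complex.continuous_re
  have hpre : IsPreconnected {z : ℂ | 0 < z.re} := (convex_halfSpace_re_gt 0).isPreconnected
  have hA : AnalyticOnNhd ℂ (fun z => ∑' n, dterm n z) {z | 0 < z.re} :=
    dterm_differentiable.analyticOnNhd ho
  have hG : DifferentiableOn ℂ Complex.Gamma {z | 0 < z.re} := fun w hw =>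
    (differentiableAt_Gamma_re hw).differentiableWithinAt
  have hB : AnalyticOnNhd ℂ (fun z => Complex.digamma z + Real.eulerMascheroniConstant)
      {z | 0 < z.re} := by
    refine DifferentiableOn.analyticOnNhd ?_ ho
    intro w hw
    have hw' : 0 < w.re := hw
    have h1 := (hG.deriv ho).div hG (fun v hv => Complex.Gamma_ne_zero_of_re_pos hv) w hw
    exact h1.add_const _
  have h1 : (1 : ℂ) ∈ {z : ℂ | 0 < z.re} := by simp
  have heq := hA.eqOn_of_preconnected_of_frequently_eq hB hpre h1 (by
    have hf : ∃ᶠ t : ℝ in 𝓝[>] 0, ∑' n, dterm n (((1 + t : ℝ)) : ℂ) =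
        Complex.digamma ((1 + t : ℝ) : ℂ) + Real.eulerMascheroniConstant := by
      apply Eventually.frequently
      filter_upwards [self_mem_nhdsWithin] with t ht
      have : (0 : ℝ) < t := ht
      exact digamma_series_real (by linarith)
    have ht : Tendsto (fun t : ℝ => ((1 + t : ℝ) : ℂ)) (𝓝[>] 0) (𝓝[≠] 1) := by
      refine tendsto_nhdsWithin_iff.2 ⟨?_, ?_⟩
      · have : Tendsto (fun t : ℝ => ((1 + t : ℝ) : ℂ)) (𝓝 0) (𝓝 (((1 + 0 : ℝ)) : ℂ)) :=
          (Continuous.tendsto (by fun_prop) 0)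
        simp only [add_zero, Complex.ofReal_one] at this
        exact this.mono_left nhdsWithin_le_nhds
      · filter_upwards [self_mem_nhdsWithin] with t ht
        have : (0 : ℝ) < t := ht
        simp only [mem_compl_iff, mem_singleton_iff]
        intro h
        have := congrArg Complex.re h
        simp at this; linarith
    exact ht.frequently hf)
  have h2 := heq hz
  beta_reduce at h2
  rw [← h2]
  exact (summable_dterm hz).hasSum

lemma sum_inv_norm_sq_le {z : ℂ} (h : 1 / 2 < z.re + |z.im|) (N : ℕ) :
    ∑ n ∈ Finset.range N, 1 / (2 * ‖(n : ℂ) + z‖ ^ 2) ≤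
      1 / (z.re + |z.im| - 1 / 2) - 1 / (z.re + |z.im| - 1 / 2 + N) := by
  induction N with
  | zero => simp
  | succ k ih =>
    rw [Finset.sum_range_succ]
    have hk : (0 : ℝ) ≤ k := k.cast_nonneg
    set v := z.re + |z.im| - 1 / 2 with hv
    have hv0 : 0 < v := by rw [hv]; linarith
    have h1 : 1 / (2 * ‖(k : ℂ) + z‖ ^ 2) ≤ 1 / (v + k) - 1 / (v + (k + 1)) := by
      rw [Complex.sq_norm, Complex.normSq_apply]
      simp only [Complex.add_re, Complex.natCast_re, Complex.add_im, Complex.natCast_im, zero_add]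
      have e : 1 / (v + k) - 1 / (v + (k + 1)) = 1 / ((v + k) * (v + (k + 1))) := by
        field_simp; ring
      rw [e]
      apply one_div_le_one_div_of_le (by positivity)
      have h2 : z.im * z.im = |z.im| * |z.im| := (abs_mul_abs_self _).symm
      rw [h2]
      nlinarith [sq_nonneg ((k : ℝ) + z.re - |z.im|)]
    push_cast
    linarith

lemma log_norm_succ_le {w : ℂ} (hw : 0 < w.re) :
    Real.log ‖w + 1‖ - Real.log ‖w‖ ≤ (1 / w).re + 1 / (2 * ‖w‖ ^ 2) := by
  have hw0 : w ≠ 0 := by rintro rfl; simp at hw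
  have hn : 0 < ‖w‖ := norm_pos_iff.2 hw0
  have hw1 : w + 1 ≠ 0 := by
    intro h; have := congrArg Complex.re h; simp at this; linarith
  have hn1 : 0 < ‖w + 1‖ := norm_pos_iff.2 hw1
  have h1 : Real.log ‖w + 1‖ - Real.log ‖w‖ = 1 / 2 * Real.log (‖w + 1‖ ^ 2 / ‖w‖ ^ 2) := by
    rw [Real.log_div (by positivity) (by positivity), Real.log_pow, Real.log_pow]; push_cast; ring
  have h2 : ‖w + 1‖ ^ 2 / ‖w‖ ^ 2 = 1 + (2 * (1 / w).re + 1 / ‖w‖ ^ 2) := by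
    rw [re_one_div]
    have e1 : ‖w‖ ^ 2 = w.re ^ 2 + w.im ^ 2 := by
      rw [Complex.sq_norm, Complex.normSq_apply]; ring
    have e2 : ‖w + 1‖ ^ 2 = (w.re + 1) ^ 2 + w.im ^ 2 := by
      rw [Complex.sq_norm, Complex.normSq_apply]; simp; ring
    rw [e2, e1]; field_simp; ring
  rw [h1, h2]
  have h3 : 0 ≤ (1 / w).re := by rw [re_one_div]; positivity
  have h4 := Real.log_le_sub_one_of_pos (x := 1 + (2 * (1 / w).re + 1 / ‖w‖ ^ 2)) (by positivity)
  have h5 : 1 / (2 * ‖w‖ ^ 2) = 1 / 2 * (1 / ‖w‖ ^ 2) := by field_simp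
  rw [h5]; linarith

/-- Obtained by comparing the series with the telescoping sum of `log ‖n + 1 + z‖ - log ‖n + z‖`. -/
lemma re_digamma_le {z : ℂ} (hz : 0 < z.re) (h : 1 / 2 < z.re + |z.im|) :
    (Complex.digamma z).re ≤ Real.log ‖z‖ + 1 / (z.re + |z.im| - 1 / 2) := by
  have hs := (Complex.hasSum_re (digamma_series hz)).tendsto_sum_nat
  have hlim := Real.tendsto_harmonic_sub_log.add_const
    (Real.log ‖z‖ + 1 / (z.re + |z.im| - 1 / 2))
  have := le_of_tendsto_of_tendsto hs hlim ?_
  · simp only [Complex.add_re, Complex.ofReal_re] at this; linarith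
  filter_upwards [eventually_ge_atTop 1] with N hN
  have hN' : (0 : ℝ) < N := by exact_mod_cast hN
  have e1 : ∑ n ∈ Finset.range N, (dterm n z).re =
      harmonic N - ∑ n ∈ Finset.range N, (1 / ((n : ℂ) + z)).re := by
    simp only [dterm, Complex.sub_re, Finset.sum_sub_distrib, harmonic]
    push_cast
    congr 1
    refine Finset.sum_congr rfl fun n _ => ?_
    rw [show (1 / ((n : ℂ) + 1)) = (((n + 1 : ℝ)⁻¹ : ℝ) : ℂ) by push_cast; rw [one_div],
      Complex.ofReal_re]
  rw [e1]
  have e2 : Real.log ‖(N : ℂ) + z‖ - Real.log ‖z‖ =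
      ∑ n ∈ Finset.range N, (Real.log ‖((n + 1 : ℕ) : ℂ) + z‖ - Real.log ‖(n : ℂ) + z‖) := by
    rw [Finset.sum_range_sub (fun n : ℕ => Real.log ‖(n : ℂ) + z‖)]; simp
  have e3 : Real.log ‖(N : ℂ) + z‖ - Real.log ‖z‖ ≤
      ∑ n ∈ Finset.range N, ((1 / ((n : ℂ) + z)).re + 1 / (2 * ‖(n : ℂ) + z‖ ^ 2)) := by
    rw [e2]
    refine Finset.sum_le_sum fun n _ => ?_
    have := log_norm_succ_le (w := (n : ℂ) + z) (by
      have : (0 : ℝ) ≤ n := n.cast_nonneg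
      simp; linarith)
    rwa [show (n : ℂ) + z + 1 = ((n + 1 : ℕ) : ℂ) + z by push_cast; ring] at this
  rw [Finset.sum_add_distrib] at e3
  have e4 := sum_inv_norm_sq_le h N
  have e5 : Real.log N ≤ Real.log ‖(N : ℂ) + z‖ := by
    apply Real.log_le_log hN'
    have := Complex.re_le_norm ((N : ℂ) + z)
    simp at this; linarith
  have e6 : 0 ≤ 1 / (z.re + |z.im| - 1 / 2 + N) := by
    have : 0 < z.re + |z.im| - 1 / 2 + N := by linarith
    positivity
  linarith
end Digamma

section ZetaLogDeriv
open Filter Topology Set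

/-- The logarithmic derivative of `ζ` through `ξ` and the digamma function. -/
lemma neg_logDeriv_zeta {s : ℂ} (hs : 1 < s.re) :
    -(deriv riemannZeta s / riemannZeta s) =
      1 / (s - 1) + 1 / s + (-(Real.log π : ℂ) / 2 + Complex.digamma (s / 2) / 2) -
        logDeriv xi s := by
  have hs1 : s ≠ 1 := by rintro rfl; simp at hs
  have hs0 : s ≠ 0 := by rintro rfl; simp at hs; linarith
  have hsm : s - 1 ≠ 0 := sub_ne_zero.2 hs1
  have hz0 : riemannZeta s ≠ 0 := riemannZeta_ne_zero_of_one_le_re hs.le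
  have hG0 : Complex.Gamma (s / 2) ≠ 0 := Complex.Gamma_ne_zero_of_re_pos (by simp; linarith)
  have hpi : (π : ℂ) ≠ 0 := by exact_mod_cast Real.pi_ne_zero
  have hpw : (π : ℂ) ^ (-s / 2) ≠ 0 := by rw [Complex.cpow_ne_zero_iff]; exact Or.inl hpi
  have hz := (differentiableAt_riemannZeta hs1).hasDerivAt
  have hG : HasDerivAt (fun s : ℂ => Complex.Gamma (s / 2)) (deriv Complex.Gamma (s / 2) * (1 / 2)) s := by
    have h1 := (differentiableAt_Gamma_re (z := s / 2) (by simp; linarith)).hasDerivAt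
    have h2 : HasDerivAt (fun s : ℂ => s / 2) (1 / 2) s := (hasDerivAt_id s).div_const 2
    exact h1.comp s h2
  have hP : HasDerivAt (fun s : ℂ => (π : ℂ) ^ (-s / 2)) ((π : ℂ) ^ (-s / 2) * Complex.log π * (-1 / 2)) s := by
    have h2 : HasDerivAt (fun s : ℂ => -s / 2) (-1 / 2) s := (hasDerivAt_id s).neg.div_const 2
    exact h2.const_cpow (Or.inl hpi)
  have hQ : HasDerivAt (fun s : ℂ => s * (s - 1)) (1 * (s - 1) + s * 1) s :=
    (hasDerivAt_id s).mul ((hasDerivAt_id s).sub_const 1)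
  have hX := hQ.mul ((hP.mul hG).mul hz)
  have hev : xi =ᶠ[𝓝 s] (fun s : ℂ => s * (s - 1)) * (((fun s : ℂ => (π : ℂ) ^ (-s / 2)) *
      (fun s : ℂ => Complex.Gamma (s / 2))) * riemannZeta) := by
    have ho : {w : ℂ | 1 < w.re} ∈ 𝓝 s :=
      (isOpen_lt continuous_const Complex.continuous_re).mem_nhds hs
    filter_upwards [ho] with w hw
    have hw' : 1 < w.re := hw
    rw [xi_eq_zeta (by linarith) (by rintro rfl; simp at hw'), Complex.Gammaℝ_def]
    rfl
  have hd := (hX.congr_of_eventuallyEq hev).deriv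
  rw [logDeriv_apply, hd, hev.eq_of_nhds, Complex.digamma_def, logDeriv_apply,
    Complex.ofReal_log Real.pi_pos.le]
  simp only [Pi.mul_apply]
  field_simp
  ring

open ArithmeticFunction in
lemma hasSum_vonMangoldt {s : ℂ} (hs : 1 < s.re) :
    HasSum (fun n : ℕ => LSeries.term (fun n => (vonMangoldt n : ℂ)) s n)
      (-(deriv riemannZeta s / riemannZeta s)) := by
  have h := LSeriesSummable_vonMangoldt hs
  have h2 := LSeries_vonMangoldt_eq_deriv_riemannZeta_div hs
  have := h.hasSum
  rw [show (∑' n, LSeries.term (fun n => (vonMangoldt n : ℂ)) s n) =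
    LSeries (fun n => (vonMangoldt n : ℂ)) s from rfl, h2] at this
  rwa [neg_div] at this

/-- Mertens' inequality `3 + 4 cos θ + cos 2θ ≥ 0` applied to `-ζ'/ζ`. -/
lemma three_four_one {σ t : ℝ} (hσ : 1 < σ) :
    0 ≤ 3 * (-(deriv riemannZeta σ / riemannZeta σ)).re +
      4 * (-(deriv riemannZeta (σ + t * Complex.I) / riemannZeta (σ + t * Complex.I))).re +
      (-(deriv riemannZeta (σ + (2 * t : ℝ) * Complex.I) / riemannZeta (σ + (2 * t : ℝ) * Complex.I))).re := by
  have h1 := Complex.hasSum_re (hasSum_vonMangoldt (s := (σ : ℂ)) (by simpa using hσ))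
  have h2 := Complex.hasSum_re (hasSum_vonMangoldt (s := (σ : ℂ) + t * Complex.I) (by simpa using hσ))
  have h3 := Complex.hasSum_re (hasSum_vonMangoldt (s := (σ : ℂ) + (2 * t : ℝ) * Complex.I) (by simpa using hσ))
  refine (((h1.mul_left 3).add (h2.mul_left 4)).add h3).nonneg fun n => ?_
  rcases Nat.eq_zero_or_pos n with rfl | hn
  · simp
  have hn0 : (n : ℂ) ≠ 0 := by exact_mod_cast hn.ne'
  set u : ℂ := (n : ℂ) ^ (-(t * Complex.I)) with hu
  have hun : ‖u‖ = 1 := by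
    rw [hu, Complex.norm_natCast_cpow_of_pos hn]; simp
  set c : ℝ := ArithmeticFunction.vonMangoldt n * (n : ℝ) ^ (-σ) with hc
  have hc0 : 0 ≤ c := mul_nonneg ArithmeticFunction.vonMangoldt_nonneg (by positivity)
  have hpow : ((n : ℂ) ^ (-(σ : ℂ))) = (((n : ℝ) ^ (-σ) : ℝ) : ℂ) := by
    rw [Complex.ofReal_cpow (by positivity)]; push_cast; rfl
  have t1 : LSeries.term (fun n => (ArithmeticFunction.vonMangoldt n : ℂ)) σ n = c := by
    rw [LSeries.term_of_ne_zero hn.ne', div_eq_mul_inv, ← Complex.cpow_neg, hpow, hc]; push_cast; rfl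
  have t2 : LSeries.term (fun n => (ArithmeticFunction.vonMangoldt n : ℂ)) (σ + t * Complex.I) n = c * u := by
    rw [LSeries.term_of_ne_zero hn.ne', div_eq_mul_inv, ← Complex.cpow_neg, neg_add,
      Complex.cpow_add _ _ hn0, hpow, hc]; push_cast; ring
  have t3 : LSeries.term (fun n => (ArithmeticFunction.vonMangoldt n : ℂ)) (σ + (2 * t : ℝ) * Complex.I) n
      = c * u ^ 2 := by
    rw [LSeries.term_of_ne_zero hn.ne', div_eq_mul_inv, ← Complex.cpow_neg, neg_add,
      Complex.cpow_add _ _ hn0, hpow, hc, hu, sq, ← Complex.cpow_add _ _ hn0]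
    rw [show -((2 * t : ℝ) * Complex.I : ℂ) = -(t * Complex.I) + -(t * Complex.I) by push_cast; ring]
    push_cast; ring
  rw [t1, t2, t3]
  simp only [Complex.re_ofReal_mul, Complex.ofReal_re]
  have hsq : (u ^ 2).re = 2 * u.re ^ 2 - 1 := by
    have : u.re ^ 2 + u.im ^ 2 = 1 := by
      have := Complex.sq_norm u
      rw [hun, Complex.normSq_apply] at this; nlinarith
    rw [sq, Complex.mul_re]; nlinarith
  rw [hsq]
  nlinarith [mul_nonneg hc0 (sq_nonneg (1 + u.re))]
end ZetaLogDeriv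
end PhiBound

/-! ### An explicit zero-free region -/

namespace PhiBound
section ZeroFree
open Filter Topology Set

lemma log_pi_ge : 1.1446 ≤ Real.log π := by
  have hp := Real.pi_gt_d4
  have h2 := Real.log_two_gt_d9
  have h3 := Real.sum_range_le_log_div (x := 5707 / 25707) (by norm_num) (by norm_num) 4
  rw [show ((1 : ℝ) + 5707 / 25707) / (1 - 5707 / 25707) = 31414 / 20000 by norm_num] at h3
  have h4 : Real.log π ≥ Real.log 2 + Real.log (31414 / 20000) := by
    rw [← Real.log_mul (by norm_num) (by norm_num)]
    apply Real.log_le_log (by norm_num); norm_num at hp ⊢; linarith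
  norm_num [Finset.sum_range_succ] at h3
  norm_num at h2 ⊢; linarith

lemma xi_ne_zero_of_one_lt {σ t : ℝ} (hσ : 1 < σ) : xi (σ + t * Complex.I) ≠ 0 :=
  xi_ne_zero_of_one_le_re (by simpa using hσ.le)

lemma re_term_nonneg {σ t : ℝ} (hσ : 1 < σ) (ρ : ℂ) :
    0 ≤ mz ρ * (1 / ((σ : ℂ) + t * Complex.I - ρ)).re := by
  have := mz_mul_le (a := fun _ => 0) (b := fun ρ => (1 / ((σ : ℂ) + t * Complex.I - ρ)).re)
    (fun ρ h => by
      have := re_zero_lt_one h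
      rw [re_one_div]
      have : 0 ≤ ((σ : ℂ) + t * Complex.I - ρ).re := by simp; linarith
      positivity) ρ
  rwa [mul_zero] at this

lemma re_logDeriv_xi_nonneg {σ t : ℝ} (hσ : 1 < σ) :
    0 ≤ (logDeriv xi (σ + t * Complex.I)).re :=
  (hasSum_re_xi (xi_ne_zero_of_one_lt hσ)).nonneg (re_term_nonneg hσ)

lemma re_logDeriv_xi_ge {σ : ℝ} (hσ : 1 < σ) {ρ : ℂ} (h : xi ρ = 0) :
    1 / (σ - ρ.re) ≤ (logDeriv xi (σ + ρ.im * Complex.I)).re := by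
  have h1 := le_hasSum (hasSum_re_xi (xi_ne_zero_of_one_lt (t := ρ.im) hσ)) ρ
    (fun j _ => re_term_nonneg hσ j)
  refine le_trans ?_ h1
  have h2 : ((σ : ℂ) + ρ.im * Complex.I - ρ) = ((σ - ρ.re : ℝ) : ℂ) := by
    apply Complex.ext <;> simp
  have h3 := re_zero_lt_one h
  rw [h2, ← Complex.ofReal_one, ← Complex.ofReal_div, Complex.ofReal_re]
  have h4 : 0 < 1 / (σ - ρ.re) := by apply one_div_pos.2; linarith
  nlinarith [one_le_mz h]

lemma re_neg_zeta_real {σ : ℝ} (hσ : 1 < σ) :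
    (-(deriv riemannZeta σ / riemannZeta σ)).re =
      1 / (σ - 1) + 1 / σ + (-(Real.log π) / 2 + dg (σ / 2) / 2) - (logDeriv xi σ).re := by
  rw [neg_logDeriv_zeta (by simpa using hσ)]
  have h := digamma_ofReal (x := σ / 2) (by linarith)
  push_cast at h
  rw [h]
  have : (1 : ℂ) / (σ - 1) + 1 / σ + (-(Real.log π : ℂ) / 2 + (dg (σ / 2) : ℂ) / 2) =
    ((1 / (σ - 1) + 1 / σ + (-(Real.log π) / 2 + dg (σ / 2) / 2) : ℝ) : ℂ) := by push_cast; rfl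
  rw [this, Complex.sub_re, Complex.ofReal_re]

lemma re_neg_zeta_nonneg {σ : ℝ} (hσ : 1 < σ) :
    0 ≤ (-(deriv riemannZeta σ / riemannZeta σ)).re := by
  have := three_four_one (t := 0) hσ
  simp only [Complex.ofReal_zero, mul_zero, zero_mul, add_zero] at this
  linarith

lemma logDeriv_xi_real_le {σ : ℝ} (hσ : 1 < σ) :
    (logDeriv xi σ).re ≤ 1 / (σ - 1) + 1 / σ + 1 / 2 * (Real.log (σ / 2) - Real.log π) := by
  have h1 := re_neg_zeta_real hσ
  have h2 := re_neg_zeta_nonneg hσ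
  have h3 := dg_le_log (x := σ / 2) (by linarith)
  linarith

lemma re_neg_zeta_real_le {σ : ℝ} (hσ : 1 < σ) :
    (-(deriv riemannZeta σ / riemannZeta σ)).re ≤
      1 / (σ - 1) + 1 / 2 * (Real.log (σ / 2 + 1) - Real.log π) := by
  have h1 := re_neg_zeta_real hσ
  have h2 := re_logDeriv_xi_nonneg (t := 0) hσ
  simp only [Complex.ofReal_zero, zero_mul, add_zero] at h2
  have h3 := dg_le_log (x := σ / 2 + 1) (by linarith)
  rw [dg_add_one (by linarith)] at h3
  have h4 : 1 / (σ / 2) = 2 * (1 / σ) := by field_simp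
  rw [h4] at h3
  linarith

lemma re_neg_zeta_le {σ t : ℝ} (hσ : 1 < σ) (ht : t ≠ 0) :
    (-(deriv riemannZeta (σ + t * Complex.I) / riemannZeta (σ + t * Complex.I))).re ≤
      (2 * σ - 1) / t ^ 2 - 1 / 2 * Real.log π + 1 / 4 * Real.log ((σ ^ 2 + t ^ 2) / 4) + 1 / |t|
        - (logDeriv xi (σ + t * Complex.I)).re := by
  rw [neg_logDeriv_zeta (by simpa using hσ)]
  set s : ℂ := σ + t * Complex.I with hs
  have hsre : s.re = σ := by simp [hs]
  have hsim : s.im = t := by simp [hs]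
  have h2re : (s / 2).re = σ / 2 := by simp [hs]
  have h2im : (s / 2).im = t / 2 := by simp [hs]
  have ht2 : 0 < t ^ 2 := by positivity
  have hta : 0 < |t| := abs_pos.2 ht
  have hat : |t / 2| = |t| / 2 := by rw [abs_div]; norm_num
  have hd := re_digamma_le (z := s / 2) (by rw [h2re]; linarith)
    (by rw [h2re, h2im, hat]; linarith)
  rw [h2re, h2im, hat] at hd
  have e1 : (1 / (s - 1)).re ≤ (σ - 1) / t ^ 2 := by
    rw [re_one_div]
    simp only [Complex.sub_re, hsre, Complex.one_re, Complex.sub_im, hsim, Complex.one_im, sub_zero]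
    apply div_le_div_of_nonneg_left (by linarith) ht2; nlinarith
  have e2 : (1 / s).re ≤ σ / t ^ 2 := by
    rw [re_one_div, hsre, hsim]
    apply div_le_div_of_nonneg_left (by linarith) ht2; nlinarith
  have e3 : Real.log ‖s / 2‖ = 1 / 2 * Real.log ((σ ^ 2 + t ^ 2) / 4) := by
    have : (σ ^ 2 + t ^ 2) / 4 = ‖s / 2‖ ^ 2 := by
      rw [Complex.sq_norm, Complex.normSq_apply, h2re, h2im]; ring
    rw [this, Real.log_pow]; push_cast; ring
  have e4 : 1 / (σ / 2 + |t| / 2 - 1 / 2) ≤ 2 * (1 / |t|) := by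
    rw [show 2 * (1 / |t|) = 1 / (|t| / 2) by field_simp]
    apply one_div_le_one_div_of_le <;> linarith
  have e5 : (-(Real.log π : ℂ) / 2 + Complex.digamma (s / 2) / 2).re =
      -(Real.log π) / 2 + (Complex.digamma (s / 2)).re / 2 := by
    rw [Complex.add_re, Complex.div_ofNat_re, Complex.div_ofNat_re, Complex.neg_re, Complex.ofReal_re]
  rw [Complex.sub_re, Complex.add_re, Complex.add_re, e5]
  have e6 : (2 * σ - 1) / t ^ 2 = (σ - 1) / t ^ 2 + σ / t ^ 2 := by rw [← add_div]; ring_nf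
  rw [e6]
  rw [e3] at hd
  linarith

/-- The majorant of the logarithmic derivative used in the zero-free region, as a function of the
height. -/
noncomputable def gfun (t : ℝ) : ℝ := 1.25 * Real.log (t ^ 2 + 256) - 5.2

lemma gfun_ge {t : ℝ} (ht : 41 ≤ t ^ 2) : 1.9 ≤ gfun t := by
  have h2 := Real.log_two_gt_d9
  have h3 := Real.sum_range_le_log_div (x := 41 / 553) (by norm_num) (by norm_num) 2
  rw [show ((1 : ℝ) + 41 / 553) / (1 - 41 / 553) = 297 / 256 by norm_num] at h3
  have h4 : Real.log (t ^ 2 + 256) ≥ 8 * Real.log 2 + Real.log (297 / 256) := by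
    rw [show 8 * Real.log 2 = Real.log (2 ^ 8) by rw [Real.log_pow]; norm_num,
      ← Real.log_mul (by norm_num) (by norm_num)]
    apply Real.log_le_log (by norm_num); norm_num; linarith
  norm_num [Finset.sum_range_succ] at h3
  rw [gfun]; norm_num at h2 ⊢; linarith

/-- The numerical inequality behind the zero-free region. -/
lemma gfun_bound {σ t : ℝ} (h1 : 1 < σ) (h2 : σ ≤ 1.245) (ht : 41 ≤ t ^ 2) :
    3 / 2 * Real.log (σ / 2 + 1) - 4 * Real.log π + Real.log ((σ ^ 2 + t ^ 2) / 4) +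
      1 / 4 * Real.log ((σ ^ 2 + (2 * t) ^ 2) / 4) + 17 / 4 * ((2 * σ - 1) / t ^ 2) + 9 / 2 * (1 / |t|)
      ≤ gfun t := by
  have hpi := log_pi_ge
  have hl2 := Real.log_two_gt_d9
  set y := |t| with hy
  have hy2 : t ^ 2 = y ^ 2 := (sq_abs t).symm
  have hy0 : 0 ≤ y := abs_nonneg t
  have hy6 : 6.4 ≤ y := by
    by_contra! h
    have : y ^ 2 < 41 := by norm_num at h; nlinarith
    linarith
  have hypos : 0 < y := by norm_num at hy6; linarith
  rw [hy2] at ht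
  rw [show (2 * t) ^ 2 = 4 * y ^ 2 by rw [mul_pow, hy2]; norm_num, hy2]
  have l1 : Real.log (σ / 2 + 1) ≤ 0.4841 := by
    have a := Real.log_div_le_sum_range_add (x := 249 / 1049) (by norm_num) (by norm_num) 3
    rw [show ((1 : ℝ) + 249 / 1049) / (1 - 249 / 1049) = 1.6225 by norm_num] at a
    have b : Real.log (σ / 2 + 1) ≤ Real.log 1.6225 := by
      apply Real.log_le_log (by linarith); norm_num at h2 ⊢; linarith
    norm_num [Finset.sum_range_succ] at a b ⊢
    linarith
  have hs2 : σ ^ 2 ≤ 1.56 := by norm_num at h2 ⊢; nlinarith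
  have e4 : Real.log 4 = 2 * Real.log 2 := by
    rw [show (4 : ℝ) = 2 ^ 2 by norm_num, Real.log_pow]; norm_num
  have l2 : Real.log ((σ ^ 2 + y ^ 2) / 4) ≤ Real.log (y ^ 2 + 1.56) - 2 * Real.log 2 := by
    rw [Real.log_div (by positivity) (by norm_num), e4]
    have := Real.log_le_log (x := σ ^ 2 + y ^ 2) (y := y ^ 2 + 1.56) (by positivity) (by linarith)
    linarith
  have l3 : Real.log ((σ ^ 2 + 4 * y ^ 2) / 4) ≤ Real.log (y ^ 2 + 1.56) := by
    apply Real.log_le_log (by positivity)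
    norm_num at hs2 ⊢; linarith
  have l4 : 254.44 / (y ^ 2 + 256) ≤ Real.log (y ^ 2 + 256) - Real.log (y ^ 2 + 1.56) := by
    have a : 0 < y ^ 2 + 256 := by positivity
    have b : 0 < y ^ 2 + 1.56 := by positivity
    have := Real.one_sub_inv_le_log_of_pos (x := (y ^ 2 + 256) / (y ^ 2 + 1.56)) (by positivity)
    rw [Real.log_div a.ne' b.ne', inv_div] at this
    have e : 254.44 / (y ^ 2 + 256) = 1 - (y ^ 2 + 1.56) / (y ^ 2 + 256) := by
      field_simp; ring
    rw [e]; exact this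
  have l5 : (2 * σ - 1) / y ^ 2 ≤ 1.5 / y ^ 2 := by
    apply div_le_div_of_nonneg_right _ (by positivity)
    norm_num at h2 ⊢; linarith
  have key : 17 / 4 * (1.5 / y ^ 2) + 9 / 2 * (1 / y) ≤ 0.035 + 1.25 * (254.44 / (y ^ 2 + 256)) := by
    have e1 : 17 / 4 * (1.5 / y ^ 2) + 9 / 2 * (1 / y) = (6.375 + 4.5 * y) / y ^ 2 := by
      field_simp; ring
    have e2 : 0.035 + 1.25 * (254.44 / (y ^ 2 + 256)) = (0.035 * (y ^ 2 + 256) + 318.05) / (y ^ 2 + 256) := by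
      field_simp; ring
    rw [e1, e2, div_le_div_iff₀ (by positivity) (by positivity)]
    norm_num at hy6 ⊢
    nlinarith [mul_nonneg (sq_nonneg y) (sq_nonneg (y - 64)), mul_nonneg (sub_nonneg.2 hy6) hypos.le]
  rw [gfun, hy2]
  norm_num at hpi hl2 l1 l2 l3 l4 l5 key ⊢
  linarith

/-- Explicit classical zero-free region: a zero `ρ` satisfies `1/(1 - Re ρ) ≤ 13.93 gfun (Im ρ)`.
It comes from the inequality `3 + 4 cos + cos 2` at the abscissa `1 + 0.464 / gfun (Im ρ)`. -/
lemma zero_free {ρ : ℂ} (h : xi ρ = 0) : 1 / (1 - ρ.re) ≤ 13.93 * gfun ρ.im := by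
  have him := im_sq_ge h
  have hg := gfun_ge him
  set g := gfun ρ.im with hgdef
  have hgpos : 0 < g := by norm_num at hg; linarith
  have hb := re_zero_lt_one h
  have ht : ρ.im ≠ 0 := by intro h0; rw [h0] at him; norm_num at him
  have hσ1 : (1 : ℝ) < 1 + 0.464 / g := by have : 0 < 0.464 / g := by positivity
                                           linarith
  have hσ2 : 1 + 0.464 / g ≤ 1.245 := by
    have : 0.464 / g ≤ 0.245 := by rw [div_le_iff₀ hgpos]; norm_num at hg ⊢; linarith
    norm_num at this ⊢; linarith
  have hB := gfun_bound hσ1 hσ2 him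
  set σ := 1 + 0.464 / g with hσ
  have a1 := three_four_one (t := ρ.im) hσ1
  have a2 := re_neg_zeta_real_le hσ1
  have a3 := re_neg_zeta_le hσ1 ht
  have a4 := re_neg_zeta_le (t := 2 * ρ.im) hσ1 (by simpa using ht)
  have a5 := re_logDeriv_xi_ge hσ1 h
  have a6 := re_logDeriv_xi_nonneg (t := 2 * ρ.im) hσ1
  have e1 : (2 * σ - 1) / (2 * ρ.im) ^ 2 = 1 / 4 * ((2 * σ - 1) / ρ.im ^ 2) := by
    rw [mul_pow]; field_simp; ring
  have e2 : 1 / |2 * ρ.im| = 1 / 2 * (1 / |ρ.im|) := by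
    rw [abs_mul, abs_of_pos (by norm_num : (0 : ℝ) < 2)]; field_simp
  rw [e1, e2] at a4
  have e3 : 1 / (σ - 1) = g / 0.464 := by rw [hσ]; field_simp; ring
  rw [e3] at a2
  have k1 : 4 * (1 / (σ - ρ.re)) ≤ 3 * (g / 0.464) + g := by linarith
  have hpos : 0 < σ - ρ.re := by linarith
  have k2 : 4 ≤ (3 * (g / 0.464) + g) * (σ - ρ.re) := by
    rw [mul_one_div, div_le_iff₀ hpos] at k1; exact k1
  have k3 : g * (σ - ρ.re) = 0.464 + g * (1 - ρ.re) := by rw [hσ]; field_simp; ring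
  rw [div_le_iff₀ (by linarith)]
  have k4 : (3 * (g / 0.464) + g) * (σ - ρ.re) = (3 / 0.464 + 1) * (g * (σ - ρ.re)) := by ring
  rw [k4, k3] at k2
  norm_num at k2 ⊢
  linarith
end ZeroFree
end PhiBound

/-! ### Weighted sums over the zeros -/

namespace PhiBound
section WeightedZeros
open Filter Topology Set

/-- Zeros are symmetric under `ρ ↦ 1 - ρ`, with multiplicity. -/
lemma tsum_symm (f : ℂ → ℝ) : ∑' ρ : ℂ, mz ρ * f (1 - ρ) = ∑' ρ : ℂ, mz ρ * f ρ := by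
  rw [← (Equiv.subLeft (1 : ℂ)).tsum_eq (fun ρ => mz ρ * f ρ)]
  simp [mz_one_sub]

lemma summable_symm {f : ℂ → ℝ} (h : Summable (fun ρ : ℂ => mz ρ * f ρ)) :
    Summable (fun ρ : ℂ => mz ρ * f (1 - ρ)) := by
  rw [← (Equiv.subLeft (1 : ℂ)).summable_iff] at h
  simpa [Function.comp_def, mz_one_sub] using h

/-- For real `s > 1`, the density of zeros near height `s` is controlled by `ξ'/ξ (s)`. The saving
of `1/2` over the termwise bound comes from the symmetry `ρ ↦ 1 - ρ`. -/
lemma tsum_im_half_le {s : ℝ} (hs : 1 < s) :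
    ∑' ρ : ℂ, mz ρ * (1 / (s ^ 2 + ρ.im ^ 2)) ≤ (logDeriv xi s).re / (s - 1 / 2) := by
  have hz : xi s ≠ 0 := xi_ne_zero_of_one_le_re (by simpa using hs.le)
  have hS := (tsum_im_le hs).1
  have hH := hasSum_re_xi hz
  have hle : ∀ ρ : ℂ, mz ρ * ((s - ρ.re) / (s ^ 2 + ρ.im ^ 2)) ≤ mz ρ * (1 / ((s : ℂ) - ρ)).re := by
    refine mz_mul_le (a := fun ρ => (s - ρ.re) / (s ^ 2 + ρ.im ^ 2)) (fun ρ h => ?_)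
    have h0 := re_zero_pos h
    have h1 := re_zero_lt_one h
    rw [re_one_div]
    simp only [Complex.sub_re, Complex.ofReal_re, Complex.sub_im, Complex.ofReal_im, zero_sub, neg_sq]
    have : 0 < s - ρ.re := by linarith
    apply div_le_div_of_nonneg_left this.le (by positivity)
    nlinarith
  have hs1 : Summable (fun ρ : ℂ => mz ρ * ((s - ρ.re) / (s ^ 2 + ρ.im ^ 2))) := by
    refine Summable.of_nonneg_of_le (fun ρ => ?_) hle hH.summable
    have := mz_mul_le (a := fun _ => 0) (b := fun ρ => (s - ρ.re) / (s ^ 2 + ρ.im ^ 2))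
      (fun ρ h => div_nonneg (by have := re_zero_lt_one h; linarith) (by positivity)) ρ
    rwa [mul_zero] at this
  have h1 : ∑' ρ : ℂ, mz ρ * ((s - ρ.re) / (s ^ 2 + ρ.im ^ 2)) ≤ (logDeriv xi s).re := by
    rw [← hH.tsum_eq]; exact hs1.tsum_le_tsum hle hH.summable
  have h2 := tsum_symm (fun ρ => (s - ρ.re) / (s ^ 2 + ρ.im ^ 2))
  have hs2 := summable_symm hs1
  have h3 : ∑' ρ : ℂ, mz ρ * ((s - ρ.re) / (s ^ 2 + ρ.im ^ 2)) +
      ∑' ρ : ℂ, mz ρ * ((s - (1 - ρ).re) / (s ^ 2 + (1 - ρ).im ^ 2)) =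
      (2 * s - 1) * ∑' ρ : ℂ, mz ρ * (1 / (s ^ 2 + ρ.im ^ 2)) := by
    rw [← hs1.tsum_add hs2, ← tsum_mul_left]
    refine tsum_congr fun ρ => ?_
    simp only [Complex.sub_re, Complex.one_re, Complex.sub_im, Complex.one_im, zero_sub, neg_sq]
    have : s ^ 2 + ρ.im ^ 2 ≠ 0 := by positivity
    field_simp; ring
  rw [le_div_iff₀ (by linarith)]
  linarith

/-- The density of zeros at the heights `16 * 2 ^ j`, from `ξ'/ξ` at the real points of that size. -/
lemma density_le (j : ℕ) :
    ∑' ρ : ℂ, mz ρ * (1 / ((16 * 2 ^ j) ^ 2 + ρ.im ^ 2)) ≤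
      (0.5967 + j * (Real.log 2 / 2)) / 15.5 * (1 / 2) ^ j := by
  have h2 : (1 : ℝ) ≤ 2 ^ j := one_le_pow₀ (by norm_num)
  have hs : (1 : ℝ) < 16 * 2 ^ j := by linarith
  refine (tsum_im_half_le hs).trans ?_
  have h3 := logDeriv_xi_real_le hs
  have hp := log_pi_ge
  have hl := Real.log_two_lt_d9
  have e1 : Real.log (16 * 2 ^ j / 2) = 3 * Real.log 2 + j * Real.log 2 := by
    rw [show (16 : ℝ) * 2 ^ j / 2 = 2 ^ 3 * 2 ^ j by ring, Real.log_mul (by positivity) (by positivity),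
      Real.log_pow, Real.log_pow]
    norm_num
  have e2 : 1 / ((16 : ℝ) * 2 ^ j) ≤ 1 / 16 := one_div_le_one_div_of_le (by norm_num) (by linarith)
  have e3 : 1 / ((16 : ℝ) * 2 ^ j - 1) ≤ 1 / 15 := one_div_le_one_div_of_le (by norm_num) (by linarith)
  have h4 : (logDeriv xi (16 * 2 ^ j : ℝ)).re ≤ 0.5967 + j * (Real.log 2 / 2) := by
    rw [e1] at h3
    norm_num at hp hl h3 e2 e3 ⊢
    linarith
  have h5 : 0 ≤ (0.5967 : ℝ) + j * (Real.log 2 / 2) := by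
    have := Real.log_nonneg (x := 2) (by norm_num); positivity
  calc (logDeriv xi (16 * 2 ^ j : ℝ)).re / (16 * 2 ^ j - 1 / 2)
      ≤ (0.5967 + j * (Real.log 2 / 2)) / (16 * 2 ^ j - 1 / 2) :=
        div_le_div_of_nonneg_right h4 (by linarith)
    _ ≤ (0.5967 + j * (Real.log 2 / 2)) / (15.5 * 2 ^ j) :=
        div_le_div_of_nonneg_left h5 (by positivity) (by norm_num; linarith)
    _ = _ := by rw [one_div, inv_pow]; field_simp

lemma sum_geom_arith (a b : ℝ) (J : ℕ) :
    ∑ j ∈ Finset.range J, (a + j * b) * (1 / 2) ^ j =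
      2 * a + 2 * b - (2 * a + 2 * b + 2 * b * J) * (1 / 2) ^ J := by
  induction J with
  | zero => simp
  | succ n ih => rw [Finset.sum_range_succ, ih, pow_succ]; push_cast; ring

lemma sum_density_le (J : ℕ) :
    ∑ j ∈ Finset.range J, ∑' ρ : ℂ, mz ρ * (1 / ((16 * 2 ^ j) ^ 2 + ρ.im ^ 2)) ≤ 0.12172 := by
  refine (Finset.sum_le_sum fun j _ => density_le j).trans ?_
  have h := sum_geom_arith 0.5967 (Real.log 2 / 2) J
  have e : ∑ j ∈ Finset.range J, (0.5967 + (j : ℝ) * (Real.log 2 / 2)) / 15.5 * (1 / 2) ^ j =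
      (∑ j ∈ Finset.range J, (0.5967 + (j : ℝ) * (Real.log 2 / 2)) * (1 / 2) ^ j) / 15.5 := by
    rw [Finset.sum_div]; exact Finset.sum_congr rfl fun j _ => by ring
  rw [e, h]
  have hl := Real.log_two_lt_d9
  have h0 : 0 ≤ (2 * 0.5967 + 2 * (Real.log 2 / 2) + 2 * (Real.log 2 / 2) * J) * (1 / 2 : ℝ) ^ J := by
    have := Real.log_nonneg (x := 2) (by norm_num); positivity
  set P := (2 * 0.5967 + 2 * (Real.log 2 / 2) + 2 * (Real.log 2 / 2) * J) * (1 / 2 : ℝ) ^ J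
  clear_value P
  rw [div_le_iff₀ (by norm_num)]
  norm_num at hl ⊢
  linarith

/-- Decomposition of a logarithm over the scales `4 ^ j`; each step is concavity of `log`. -/
lemma log_scales {u : ℝ} (hu : 0 ≤ u) (J : ℕ) :
    Real.log (1 + u) ≤ Real.log 4 * ∑ j ∈ Finset.range J, u / (4 ^ j + u) + Real.log (1 + u / 4 ^ J) := by
  induction J with
  | zero => simp
  | succ n ih =>
    refine ih.trans ?_
    rw [Finset.sum_range_succ, mul_add, add_assoc, add_le_add_iff_left]
    have h4 : (0 : ℝ) < 4 ^ n := by positivity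
    set p := u / (4 ^ n + u) with hp
    have hp0 : 0 ≤ p := by positivity
    have hp1 : p ≤ 1 := by rw [hp, div_le_one (by positivity)]; linarith
    have hc := strictConcaveOn_log_Ioi.concaveOn.2 (show (1 : ℝ) ∈ Ioi 0 by simp)
      (show (1 / 4 : ℝ) ∈ Ioi 0 by simp) (show 0 ≤ 1 - p by linarith) hp0 (by ring)
    simp only [smul_eq_mul, Real.log_one, mul_zero, zero_add, mul_one] at hc
    rw [one_div, Real.log_inv] at hc
    have e : 1 + u / 4 ^ (n + 1) = (1 + u / 4 ^ n) * (1 - p + p * 4⁻¹) := by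
      rw [hp, pow_succ]; field_simp; ring
    have hpos : 0 < 1 - p + p * 4⁻¹ := by nlinarith
    rw [e, Real.log_mul (by positivity) hpos.ne']
    linarith

/-- The quantity `∑ log (1 + (γ/16)²) / (1 + γ²)` over the zeros is finite and small. -/
lemma sum_log_le :
    Summable (fun ρ : ℂ => mz ρ * (1 / (1 + ρ.im ^ 2) * Real.log (1 + ρ.im ^ 2 / 256))) ∧
    ∑' ρ : ℂ, mz ρ * (1 / (1 + ρ.im ^ 2) * Real.log (1 + ρ.im ^ 2 / 256)) ≤ 0.16875 := by
  have hnn : ∀ ρ : ℂ, 0 ≤ mz ρ * (1 / (1 + ρ.im ^ 2) * Real.log (1 + ρ.im ^ 2 / 256)) := fun ρ =>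
    mul_nonneg (mz_nonneg ρ) (mul_nonneg (by positivity)
      (Real.log_nonneg (by have := sq_nonneg ρ.im; linarith [div_nonneg this (by norm_num : (0 : ℝ) ≤ 256)])))
  have key : ∀ F : Finset ℂ,
      ∑ ρ ∈ F, mz ρ * (1 / (1 + ρ.im ^ 2) * Real.log (1 + ρ.im ^ 2 / 256)) ≤ 0.16875 := by
    intro F
    have hJ : ∀ J : ℕ, ∑ ρ ∈ F, mz ρ * (1 / (1 + ρ.im ^ 2) * Real.log (1 + ρ.im ^ 2 / 256)) ≤
        Real.log 4 * 0.12172 +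
        ∑ ρ ∈ F, mz ρ * (1 / (1 + ρ.im ^ 2) * Real.log (1 + ρ.im ^ 2 / 256 / 4 ^ J)) := by
      intro J
      have hl4 : 0 ≤ Real.log 4 := Real.log_nonneg (by norm_num)
      have a1 : ∑ j ∈ Finset.range J, ∑ ρ ∈ F, mz ρ * (1 / ((16 * 2 ^ j) ^ 2 + ρ.im ^ 2)) ≤ 0.12172 := by
        refine le_trans (Finset.sum_le_sum fun j _ => ?_) (sum_density_le J)
        have h2 : (1 : ℝ) ≤ 2 ^ j := one_le_pow₀ (by norm_num)
        exact (tsum_im_le (by linarith)).1.sum_le_tsum F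
          (fun ρ _ => mul_nonneg (mz_nonneg ρ) (by positivity))
      have a2 := mul_le_mul_of_nonneg_left a1 hl4
      refine le_trans ?_ (add_le_add_left a2 _)
      rw [Finset.sum_comm, Finset.mul_sum, ← Finset.sum_add_distrib]
      refine Finset.sum_le_sum fun ρ _ => ?_
      rw [← Finset.mul_sum, mul_left_comm (Real.log 4), ← mul_add]
      refine mul_le_mul_of_nonneg_left ?_ (mz_nonneg ρ)
      have hu : 0 ≤ ρ.im ^ 2 / 256 := by positivity
      have := mul_le_mul_of_nonneg_left (log_scales hu J) (by positivity : 0 ≤ 1 / (1 + ρ.im ^ 2))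
      refine this.trans ?_
      rw [mul_add, add_le_add_iff_right, mul_left_comm]
      refine mul_le_mul_of_nonneg_left ?_ hl4
      rw [Finset.mul_sum]
      refine Finset.sum_le_sum fun j _ => ?_
      have e : ρ.im ^ 2 / 256 / (4 ^ j + ρ.im ^ 2 / 256) = ρ.im ^ 2 * (1 / ((16 * 2 ^ j) ^ 2 + ρ.im ^ 2)) := by
        have : ((16 : ℝ) * 2 ^ j) ^ 2 = 256 * 4 ^ j := by
          rw [mul_pow, ← pow_mul, mul_comm j 2, pow_mul]; norm_num
        rw [this]
        have h4 : (0 : ℝ) < 4 ^ j := by positivity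
        have : 0 < 256 * 4 ^ j + ρ.im ^ 2 := by positivity
        have : 0 < 4 ^ j + ρ.im ^ 2 / 256 := by positivity
        field_simp
      rw [e, ← mul_assoc]
      refine mul_le_of_le_one_left (by positivity) ?_
      rw [one_div_mul_eq_div, div_le_one (by positivity)]; linarith
    have hlim : Tendsto (fun J : ℕ => Real.log 4 * 0.12172 +
        ∑ ρ ∈ F, mz ρ * (1 / (1 + ρ.im ^ 2) * Real.log (1 + ρ.im ^ 2 / 256 / 4 ^ J))) atTop
        (𝓝 (Real.log 4 * 0.12172 + ∑ ρ ∈ F, mz ρ * (1 / (1 + ρ.im ^ 2) * Real.log (1 + 0)))) := by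
      refine tendsto_const_nhds.add (tendsto_finsetSum _ fun ρ _ => ?_)
      refine tendsto_const_nhds.mul (tendsto_const_nhds.mul ?_)
      refine Tendsto.log ?_ (by norm_num)
      refine tendsto_const_nhds.add ?_
      exact tendsto_const_nhds.div_atTop (tendsto_pow_atTop_atTop_of_one_lt (by norm_num))
    have := ge_of_tendsto' hlim hJ
    simp only [add_zero, Real.log_one, mul_zero, Finset.sum_const_zero] at this
    refine this.trans ?_
    have hl := Real.log_two_lt_d9
    rw [show (4 : ℝ) = 2 ^ 2 by norm_num, Real.log_pow]
    norm_num at hl ⊢; linarith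
  have hs := summable_of_sum_le hnn key
  exact ⟨hs, hs.tsum_le_of_sum_le key⟩

/-- Pairs of zeros `ρ, 1 - ρ`: one of the two real parts is at least `1/2`, the other one is
controlled by the zero-free region. -/
lemma inv_add_inv_le {ρ : ℂ} (h : xi ρ = 0) :
    1 / (1 - ρ.re) + 1 / ρ.re ≤ 26.12 + 17.4125 * Real.log (1 + ρ.im ^ 2 / 256) := by
  have h0 := re_zero_pos h
  have h1 := re_zero_lt_one h
  have hg : gfun ρ.im = 1.25 * Real.log (1 + ρ.im ^ 2 / 256) + (10 * Real.log 2 - 5.2) := by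
    rw [gfun, show ρ.im ^ 2 + 256 = 2 ^ 8 * (1 + ρ.im ^ 2 / 256) by ring,
      Real.log_mul (by norm_num) (by positivity), Real.log_pow]
    push_cast; ring
  have z1 := zero_free h
  have z2 := zero_free (ρ := 1 - ρ) (by rw [xi_one_sub]; exact h)
  have hl := Real.log_two_lt_d9
  have e2 : gfun (1 - ρ).im = gfun ρ.im := by simp [gfun]
  rw [e2] at z2
  simp only [Complex.sub_re, Complex.one_re, sub_sub_cancel] at z2
  rw [hg] at z1 z2
  have hlog : 0 ≤ Real.log (1 + ρ.im ^ 2 / 256) :=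
    Real.log_nonneg (by have := sq_nonneg ρ.im; linarith [div_nonneg this (by norm_num : (0 : ℝ) ≤ 256)])
  rcases le_total ρ.re (1 / 2) with h | h
  · have : 1 / (1 - ρ.re) ≤ 2 := by rw [div_le_iff₀ (by linarith)]; linarith
    norm_num at hl z2 this ⊢; linarith
  · have : 1 / ρ.re ≤ 2 := by rw [div_le_iff₀ (by linarith)]; linarith
    norm_num at hl z1 this ⊢; linarith

/-- The zero-free region bounds `1/(1-β) + 1/β` for a zero `β + it`, up to constants by
`1 + log (1 + t²/256)`. By the symmetry `ρ ↦ 1 - ρ`, the sum weighted by `1/(1-β)` is half of the sum weighted by `1/(1-β) + 1/β`. -/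
lemma sum_inv_eta_le :
    Summable (fun ρ : ℂ => mz ρ * (1 / ‖ρ * (1 - ρ)‖ * (1 / (1 - ρ.re)))) ∧
    ∑' ρ : ℂ, mz ρ * (1 / ‖ρ * (1 - ρ)‖ * (1 / (1 - ρ.re))) ≤ 2.1275 := by
  obtain ⟨hs, hb⟩ := sum_log_le
  have hQ := (summable_q.mul_left 26.12).add (hs.mul_left (17.4125 * (42 / 41)))
  have hle : ∀ ρ : ℂ, mz ρ * (1 / ‖ρ * (1 - ρ)‖ * (1 / (1 - ρ.re) + 1 / ρ.re)) ≤
      26.12 * (mz ρ * (1 / ‖ρ * (1 - ρ)‖)) + 17.4125 * (42 / 41) *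
        (mz ρ * (1 / (1 + ρ.im ^ 2) * Real.log (1 + ρ.im ^ 2 / 256))) := by
    intro ρ
    have := mz_mul_le (a := fun ρ => 1 / ‖ρ * (1 - ρ)‖ * (1 / (1 - ρ.re) + 1 / ρ.re))
      (b := fun ρ => 26.12 * (1 / ‖ρ * (1 - ρ)‖) + 17.4125 * (42 / 41) *
        (1 / (1 + ρ.im ^ 2) * Real.log (1 + ρ.im ^ 2 / 256))) (fun ρ h => ?_) ρ
    · refine this.trans (le_of_eq ?_); ring
    · have a1 := inv_add_inv_le h
      have a2 := norm_inv_q_le h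
      have hlog : 0 ≤ Real.log (1 + ρ.im ^ 2 / 256) :=
        Real.log_nonneg (by have := sq_nonneg ρ.im; linarith [div_nonneg this (by norm_num : (0 : ℝ) ≤ 256)])
      have a3 := mul_le_mul_of_nonneg_left a1 (by positivity : 0 ≤ 1 / ‖ρ * (1 - ρ)‖)
      have a4 := mul_le_mul_of_nonneg_right a2 (mul_nonneg (by norm_num : (0 : ℝ) ≤ 17.4125) hlog)
      calc _ ≤ _ := a3
        _ = 26.12 * (1 / ‖ρ * (1 - ρ)‖) +
          1 / ‖ρ * (1 - ρ)‖ * (17.4125 * Real.log (1 + ρ.im ^ 2 / 256)) := by ring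
        _ ≤ _ := add_le_add_right a4 _
        _ = _ := by ring
  have hnn : ∀ ρ : ℂ, 0 ≤ mz ρ * (1 / ‖ρ * (1 - ρ)‖ * (1 / (1 - ρ.re) + 1 / ρ.re)) := fun ρ => by
    have := mz_mul_le (a := fun _ => 0) (b := fun ρ => 1 / ‖ρ * (1 - ρ)‖ * (1 / (1 - ρ.re) + 1 / ρ.re))
      (fun ρ h => by
        have h0 := re_zero_pos h
        have h1 : 0 < 1 - ρ.re := by linarith [re_zero_lt_one h]
        positivity) ρ
    rwa [mul_zero] at this
  have hsum := Summable.of_nonneg_of_le hnn hle hQ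
  have hs1 : Summable (fun ρ : ℂ => mz ρ * (1 / ‖ρ * (1 - ρ)‖ * (1 / (1 - ρ.re)))) := by
    refine Summable.of_nonneg_of_le (fun ρ => ?_) (fun ρ => ?_) hsum
    · have := mz_mul_le (a := fun _ => 0) (b := fun ρ => 1 / ‖ρ * (1 - ρ)‖ * (1 / (1 - ρ.re)))
        (fun ρ h => by
          have h1 : 0 < 1 - ρ.re := by linarith [re_zero_lt_one h]
          positivity) ρ
      rwa [mul_zero] at this
    · refine mz_mul_le (a := fun ρ => 1 / ‖ρ * (1 - ρ)‖ * (1 / (1 - ρ.re)))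
        (b := fun ρ => 1 / ‖ρ * (1 - ρ)‖ * (1 / (1 - ρ.re) + 1 / ρ.re)) (fun ρ h => ?_) ρ
      have h0 := re_zero_pos h
      refine mul_le_mul_of_nonneg_left ?_ (by positivity)
      have : 0 < 1 / ρ.re := by positivity
      linarith
  refine ⟨hs1, ?_⟩
  have hs2 := summable_symm (f := fun ρ => 1 / ‖ρ * (1 - ρ)‖ * (1 / (1 - ρ.re))) hs1
  have e := tsum_symm (fun ρ => 1 / ‖ρ * (1 - ρ)‖ * (1 / (1 - ρ.re)))
  have h1 : ∑' ρ : ℂ, mz ρ * (1 / ‖ρ * (1 - ρ)‖ * (1 / (1 - ρ.re) + 1 / ρ.re)) =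
      ∑' ρ : ℂ, mz ρ * (1 / ‖ρ * (1 - ρ)‖ * (1 / (1 - ρ.re))) +
      ∑' ρ : ℂ, mz ρ * (1 / ‖(1 - ρ) * (1 - (1 - ρ))‖ * (1 / (1 - (1 - ρ).re))) := by
    rw [← hs1.tsum_add hs2]
    refine tsum_congr fun ρ => ?_
    simp only [sub_sub_cancel, Complex.sub_re, Complex.one_re, mul_comm (1 - ρ) ρ]
    ring
  have h2 := hsum.tsum_le_tsum hle hQ
  rw [(summable_q.mul_left 26.12).tsum_add (hs.mul_left (17.4125 * (42 / 41))), tsum_mul_left,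
    tsum_mul_left] at h2
  have h3 := tsum_q_le
  norm_num at h1 h2 h3 hb e ⊢
  linarith

/-- The sum `∑ x^{β - 1} / |ρ (1 - ρ)|` over the nontrivial zeros, as a function of `L = log x`. -/
noncomputable def Zsum (L : ℝ) : ℝ :=
  ∑' ρ : ℂ, mz ρ * (1 / ‖ρ * (1 - ρ)‖ * Real.exp (-((1 - ρ.re) * L)))

lemma summable_Zsum {L : ℝ} (hL : 0 ≤ L) :
    Summable (fun ρ : ℂ => mz ρ * (1 / ‖ρ * (1 - ρ)‖ * Real.exp (-((1 - ρ.re) * L)))) := by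
  refine Summable.of_nonneg_of_le (fun ρ => mul_nonneg (mz_nonneg ρ) (by positivity))
    (mz_mul_le (b := fun ρ => 1 / ‖ρ * (1 - ρ)‖) fun ρ h => ?_) summable_q
  refine mul_le_of_le_one_right (by positivity) (Real.exp_le_one_iff.2 ?_)
  have := re_zero_lt_one h
  nlinarith

lemma Zsum_nonneg (L : ℝ) : 0 ≤ Zsum L :=
  tsum_nonneg fun ρ => mul_nonneg (mz_nonneg ρ) (by positivity)

lemma Zsum_anti {L M : ℝ} (hL : 0 ≤ L) (h : L ≤ M) : Zsum M ≤ Zsum L := by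
  refine (summable_Zsum (hL.trans h)).tsum_le_tsum (mz_mul_le fun ρ hρ => ?_) (summable_Zsum hL)
  refine mul_le_mul_of_nonneg_left (Real.exp_le_exp.2 ?_) (by positivity)
  have := re_zero_lt_one hρ
  nlinarith

/-- The zeros `ρ` and `1 - ρ` together contribute at most `1 + e^{-L}` times their weight, since
`e^{-(1-β)L} + e^{-βL} ≤ 1 + e^{-L}` for `0 ≤ β ≤ 1`. -/
lemma Zsum_le_pair {L : ℝ} (hL : 0 ≤ L) : Zsum L ≤ 0.0238 * (1 + Real.exp (-L)) := by
  have hs1 := summable_Zsum hL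
  have hs2 := summable_symm (f := fun ρ => 1 / ‖ρ * (1 - ρ)‖ * Real.exp (-((1 - ρ.re) * L))) hs1
  have e := tsum_symm (fun ρ => 1 / ‖ρ * (1 - ρ)‖ * Real.exp (-((1 - ρ.re) * L)))
  have h1 := (hs1.add hs2).tsum_le_tsum (g := fun ρ => mz ρ * (1 / ‖ρ * (1 - ρ)‖) * (1 + Real.exp (-L)))
    (fun ρ => ?_) (summable_q.mul_right _)
  · rw [hs1.tsum_add hs2, e, tsum_mul_right] at h1
    have h3 := tsum_q_le
    have h4 : 0 < 1 + Real.exp (-L) := by positivity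
    have h5 := mul_le_mul_of_nonneg_right h3 h4.le
    rw [Zsum]
    norm_num at h1 h5 ⊢
    linarith
  · simp only [sub_sub_cancel, Complex.sub_re, Complex.one_re, mul_comm (1 - ρ) ρ]
    rw [← mul_add, ← mul_add, mul_assoc]
    refine mz_mul_le (a := fun ρ => 1 / ‖ρ * (1 - ρ)‖ * (Real.exp (-((1 - ρ.re) * L)) + Real.exp (-(ρ.re * L))))
      (b := fun ρ => 1 / ‖ρ * (1 - ρ)‖ * (1 + Real.exp (-L))) (fun ρ h => ?_) ρ
    refine mul_le_mul_of_nonneg_left ?_ (by positivity)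
    have h0 := re_zero_pos h
    have h1 := re_zero_lt_one h
    have a : Real.exp (-((1 - ρ.re) * L)) ≤ 1 := Real.exp_le_one_iff.2 (by nlinarith)
    have b : Real.exp (-(ρ.re * L)) ≤ 1 := Real.exp_le_one_iff.2 (by nlinarith)
    have c : Real.exp (-L) = Real.exp (-((1 - ρ.re) * L)) * Real.exp (-(ρ.re * L)) := by
      rw [← Real.exp_add]; ring_nf
    rw [c]; nlinarith

/-- From `t * e^{-t} ≤ e^{-1}` at `t = (1 - β) L`. -/
lemma mul_Zsum_le {L : ℝ} (hL : 0 ≤ L) : L * Zsum L ≤ 0.783 := by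
  obtain ⟨hs, hb⟩ := sum_inv_eta_le
  have hle : ∀ ρ : ℂ, mz ρ * (1 / ‖ρ * (1 - ρ)‖ * Real.exp (-((1 - ρ.re) * L))) * L ≤
      mz ρ * (1 / ‖ρ * (1 - ρ)‖ * (1 / (1 - ρ.re))) * Real.exp (-1) := by
    intro ρ
    rw [mul_assoc (mz ρ), mul_assoc (mz ρ)]
    refine mz_mul_le (a := fun ρ => 1 / ‖ρ * (1 - ρ)‖ * Real.exp (-((1 - ρ.re) * L)) * L)
      (b := fun ρ => 1 / ‖ρ * (1 - ρ)‖ * (1 / (1 - ρ.re)) * Real.exp (-1)) (fun ρ h => ?_) ρ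
    have h1 : 0 < 1 - ρ.re := by linarith [re_zero_lt_one h]
    rw [mul_assoc, mul_assoc]
    refine mul_le_mul_of_nonneg_left ?_ (by positivity)
    rw [div_mul_eq_mul_div, one_mul, le_div_iff₀ h1]
    have := Real.add_one_le_exp ((1 - ρ.re) * L - 1)
    have e : Real.exp (-1) = Real.exp ((1 - ρ.re) * L - 1) * Real.exp (-((1 - ρ.re) * L)) := by
      rw [← Real.exp_add]; ring_nf
    rw [e]
    have h3 := mul_le_mul_of_nonneg_right this (Real.exp_pos (-((1 - ρ.re) * L))).le
    nlinarith
  have h1 := ((summable_Zsum hL).mul_right L).tsum_le_tsum hle (hs.mul_right _)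
  rw [tsum_mul_right, tsum_mul_right] at h1
  have h2 : Real.exp (-1) ≤ 0.36788 := by
    have := Real.exp_one_gt_d9
    rw [Real.exp_neg, inv_le_comm₀ (by positivity) (by norm_num)]
    norm_num at this ⊢; linarith
  have h3 := mul_le_mul hb h2 (Real.exp_pos _).le (by norm_num)
  rw [mul_comm, Zsum]
  norm_num at h1 h3 ⊢
  linarith

lemma exp_neg_seven : Real.exp (-7) ≤ 0.001 := by
  have := Real.exp_one_gt_d9
  rw [show (-7 : ℝ) = -((7 : ℕ) * 1) by norm_num, Real.exp_neg, Real.exp_nat_mul,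
    inv_le_comm₀ (by positivity) (by norm_num)]
  calc (0.001 : ℝ)⁻¹ ≤ 2.7 ^ 7 := by norm_num
    _ ≤ _ := by gcongr; norm_num at this ⊢; linarith

lemma Zsum_le {L : ℝ} (hL : 7 ≤ L) : Zsum L ≤ 0.02383 := by
  have h := Zsum_le_pair (L := L) (by linarith)
  have h2 : Real.exp (-L) ≤ Real.exp (-7) := Real.exp_le_exp.2 (by linarith)
  have h3 := exp_neg_seven
  norm_num at h h3 ⊢; linarith

/-- The zero-free region bounds `L * Zsum L`, the pairing of `ρ` with `1 - ρ` the remaining `Zsum L`. -/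
lemma one_add_mul_Zsum_le {L : ℝ} (hL : 7 ≤ L) : (1 + L) * Zsum L ≤ 0.807 := by
  have h1 := Zsum_le hL
  have h2 := mul_Zsum_le (L := L) (by linarith)
  norm_num at h1 h2 ⊢; linarith

end WeightedZeros
end PhiBound

/-! ### The explicit formula for `∑ Λ(n) (1/n - 1/x)` -/

namespace PhiBound
section ExplicitFormula
open Filter Topology Set MeasureTheory ArithmeticFunction

/-- `HasLaplace g w v` says that the Laplace transform of `g` converges absolutely at `w`, with value `v`. -/
def HasLaplace (g : ℝ → ℂ) (w v : ℂ) : Prop :=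
  IntegrableOn (fun u : ℝ => Complex.exp (-(w * u)) * g u) (Ioi 0) ∧
    ∫ u in Ioi (0 : ℝ), Complex.exp (-(w * u)) * g u = v

lemma HasLaplace.add {g h : ℝ → ℂ} {w a b : ℂ} (hg : HasLaplace g w a) (hh : HasLaplace h w b) :
    HasLaplace (fun u => g u + h u) w (a + b) := by
  simp only [HasLaplace, mul_add] at *
  exact ⟨hg.1.add hh.1, by rw [integral_add hg.1 hh.1, hg.2, hh.2]⟩

lemma HasLaplace.sub {g h : ℝ → ℂ} {w a b : ℂ} (hg : HasLaplace g w a) (hh : HasLaplace h w b) :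
    HasLaplace (fun u => g u - h u) w (a - b) := by
  simp only [HasLaplace, mul_sub] at *
  exact ⟨hg.1.sub hh.1, by rw [integral_sub hg.1 hh.1, hg.2, hh.2]⟩

lemma HasLaplace.const_mul {g : ℝ → ℂ} {w a : ℂ} (c : ℂ) (hg : HasLaplace g w a) :
    HasLaplace (fun u => c * g u) w (c * a) := by
  simp only [HasLaplace, mul_left_comm _ c] at *
  exact ⟨hg.1.const_mul c, by rw [integral_const_mul, hg.2]⟩

lemma HasLaplace.congr {g h : ℝ → ℂ} {w a b : ℂ} (hg : HasLaplace g w a) (e : ∀ u : ℝ, 0 < u → g u = h u)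
    (e' : a = b) : HasLaplace h w b := by
  have he : EqOn (fun u : ℝ => Complex.exp (-(w * u)) * g u)
    (fun u : ℝ => Complex.exp (-(w * u)) * h u) (Ioi 0) := fun u hu => by simp only [e u hu]
  exact ⟨hg.1.congr_fun he measurableSet_Ioi, by
    rw [← setIntegral_congr_fun measurableSet_Ioi he, hg.2, e']⟩

lemma laplace_exp {a w : ℂ} (h : 0 < (w + a).re) :
    HasLaplace (fun u => Complex.exp (-(a * u))) w (1 / (w + a)) := by
  have e : (fun u : ℝ => Complex.exp (-(w * u)) * Complex.exp (-(a * u))) =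
      fun u : ℝ => Complex.exp (-(w + a) * u) := by
    funext u; rw [← Complex.exp_add]; ring_nf
  have hre : (-(w + a)).re < 0 := by rw [Complex.neg_re]; linarith
  rw [HasLaplace, e]
  refine ⟨integrableOn_exp_mul_complex_Ioi hre 0, ?_⟩
  rw [integral_exp_mul_complex_Ioi hre 0]
  simp only [Complex.ofReal_zero, mul_zero, Complex.exp_zero, neg_div_neg_eq]

lemma laplace_one {w : ℂ} (h : 0 < w.re) : HasLaplace (fun _ => 1) w (1 / w) :=
  (laplace_exp (a := 0) (by simpa using h)).congr (fun u _ => by simp) (by simp)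

lemma laplace_lin {w : ℂ} (h : w.re = 1) : HasLaplace (fun u => (u : ℂ)) w (1 / w ^ 2) := by
  have hw : w ≠ 0 := by rintro rfl; simp at h
  have hn : ∀ u : ℝ, ‖Complex.exp (-(w * u))‖ = Real.exp (-u) := fun u => by
    rw [Complex.norm_exp]; simp [h]
  have hI : IntegrableOn (fun u : ℝ => Complex.exp (-(w * u)) * (u : ℂ)) (Ioi 0) := by
    have hb : IntegrableOn (fun u : ℝ => 2 * Real.exp (-(1 / 2) * u)) (Ioi 0) :=
      (integrableOn_exp_mul_Ioi (by norm_num) 0).const_mul 2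
    refine hb.mono' (Continuous.aestronglyMeasurable (by fun_prop)) ?_
    filter_upwards [ae_restrict_mem measurableSet_Ioi] with u hu
    have hu : 0 < u := hu
    rw [norm_mul, hn, Complex.norm_real, Real.norm_of_nonneg hu.le]
    have h1 := Real.add_one_le_exp (u / 2)
    have e : Real.exp (-(1 / 2) * u) = Real.exp (-u) * Real.exp (u / 2) := by
      rw [← Real.exp_add]; ring_nf
    rw [e]
    nlinarith [Real.exp_pos (-u)]
  refine ⟨hI, ?_⟩
  have hd : ∀ u ∈ Ioi (0 : ℝ), HasDerivAt (fun u : ℝ => -(u / w + 1 / w ^ 2) * Complex.exp (-(w * u)))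
      (Complex.exp (-(w * u)) * (u : ℂ)) u := by
    intro u _
    have h1 : HasDerivAt (fun u : ℝ => (u : ℂ)) 1 u := Complex.ofRealCLM.hasDerivAt
    have h2 : HasDerivAt (fun u : ℝ => Complex.exp (-(w * u))) (Complex.exp (-(w * u)) * -(w * 1)) u :=
      ((h1.const_mul w).neg).cexp
    have h3 := (((h1.div_const w).add_const (1 / w ^ 2)).neg).mul h2
    refine h3.congr_deriv ?_
    simp only [Pi.neg_apply]
    field_simp; ring
  have hlim : Tendsto (fun u : ℝ => -(u / w + 1 / w ^ 2) * Complex.exp (-(w * u))) atTop (𝓝 0) := by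
    rw [tendsto_zero_iff_norm_tendsto_zero]
    have l1 : Tendsto (fun u : ℝ => (u * ‖1 / w‖ + ‖1 / w ^ 2‖) * Real.exp (-u)) atTop (𝓝 0) := by
      have a := (Real.tendsto_pow_mul_exp_neg_atTop_nhds_zero 1).mul_const ‖1 / w‖
      have b := (Real.tendsto_pow_mul_exp_neg_atTop_nhds_zero 0).mul_const ‖1 / w ^ 2‖
      have c := a.add b
      simp only [zero_mul, add_zero] at c
      refine c.congr fun u => by ring
    refine squeeze_zero' (Eventually.of_forall fun _ => norm_nonneg _) ?_ l1
    filter_upwards [eventually_ge_atTop 0] with u hu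
    rw [norm_mul, hn, norm_neg]
    refine mul_le_mul_of_nonneg_right ?_ (Real.exp_pos _).le
    refine (norm_add_le _ _).trans (le_of_eq ?_)
    rw [div_eq_mul_one_div (u : ℂ), norm_mul, Complex.norm_real, Real.norm_of_nonneg hu]
  have hc : ContinuousWithinAt (fun u : ℝ => -(u / w + 1 / w ^ 2) * Complex.exp (-(w * u))) (Ici 0) 0 :=
    Continuous.continuousWithinAt (by fun_prop)
  rw [integral_Ioi_of_hasDerivAt_of_tendsto hc hd hI hlim]
  simp

/-- The kernel `max 0 (1/n - e^{-u})` of the weighted prime sum. -/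
lemma laplace_kernel {w : ℂ} (h : w.re = 1) {n : ℕ} (hn : 1 ≤ n) :
    HasLaplace (fun u => ((max 0 (1 / (n : ℝ) - Real.exp (-u)) : ℝ) : ℂ)) w
      ((n : ℂ) ^ (-(1 + w)) / (w * (w + 1))) := by
  have hw : w ≠ 0 := by rintro rfl; simp at h
  have hw1 : w + 1 ≠ 0 := by
    intro h0; have := congrArg Complex.re h0; simp [h] at this; try norm_num at this
  have hnpos : (0 : ℝ) < n := by exact_mod_cast hn
  have hl : 0 ≤ Real.log n := Real.log_nonneg (by exact_mod_cast hn)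
  have hnc : (n : ℂ) ≠ 0 := by exact_mod_cast hnpos.ne'
  have hsub : Ioi (Real.log n) ⊆ Ioi 0 := Ioi_subset_Ioi hl
  have h1 : (-w).re < 0 := by simp [h]
  have h2 : (-(w + 1)).re < 0 := by simp [h]; try norm_num
  have hz : ∀ u ∈ Ioi (0 : ℝ) \ Ioi (Real.log n),
      Complex.exp (-(w * u)) * ((max 0 (1 / (n : ℝ) - Real.exp (-u)) : ℝ) : ℂ) = 0 := by
    intro u hu
    have : u ≤ Real.log n := not_lt.1 hu.2
    have h3 : 1 / (n : ℝ) ≤ Real.exp (-u) := by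
      rw [one_div, Real.exp_neg]
      exact inv_anti₀ (Real.exp_pos u) ((Real.le_log_iff_exp_le hnpos).1 this)
    rw [max_eq_left (by linarith)]; simp
  have he : EqOn (fun u : ℝ => 1 / (n : ℂ) * Complex.exp (-w * u) - Complex.exp (-(w + 1) * u))
      (fun u : ℝ => Complex.exp (-(w * u)) * ((max 0 (1 / (n : ℝ) - Real.exp (-u)) : ℝ) : ℂ))
      (Ioi (Real.log n)) := by
    intro u hu
    have hu : Real.log n < u := hu
    have h3 : Real.exp (-u) ≤ 1 / (n : ℝ) := by
      rw [one_div, Real.exp_neg]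
      exact inv_anti₀ hnpos ((Real.log_lt_iff_lt_exp hnpos).1 hu).le
    simp only
    rw [max_eq_right (by linarith)]
    push_cast
    rw [show -(w + 1) * u = -(w * u) + -u by ring, Complex.exp_add]; ring_nf
  have i1 := (integrableOn_exp_mul_complex_Ioi h1 (Real.log n)).const_mul (1 / (n : ℂ))
  have i2 := integrableOn_exp_mul_complex_Ioi h2 (Real.log n)
  constructor
  · refine IntegrableOn.of_forall_sdiff_eq_zero (IntegrableOn.congr_fun (i1.sub i2) he measurableSet_Ioi)
      measurableSet_Ioi hz
  · rw [setIntegral_eq_of_subset_of_forall_sdiff_eq_zero measurableSet_Ioi hsub hz,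
      ← setIntegral_congr_fun measurableSet_Ioi he]
    rw [integral_sub i1 i2, integral_const_mul, integral_exp_mul_complex_Ioi h1,
      integral_exp_mul_complex_Ioi h2]
    have e1 : ∀ z : ℂ, Complex.exp (z * Real.log n) = (n : ℂ) ^ z := fun z => by
      rw [Complex.cpow_def_of_ne_zero hnc, ← Complex.natCast_log, mul_comm]
    rw [e1, e1, show -(1 + w) = -w + -1 by ring, show -(w + 1) = -w + -1 by ring,
      Complex.cpow_add _ _ hnc, Complex.cpow_neg_one]
    have : -w + -1 ≠ 0 := by intro h0; apply hw1; linear_combination -h0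
    field_simp; ring

/-- Termwise Laplace transform of a series dominated by `∑ b i * e^{u/2}`. -/
lemma HasLaplace.tsum {ι : Type*} {g : ι → ℝ → ℂ} {G : ι → ℂ} {b : ι → ℝ} {w : ℂ} (h : w.re = 1)
    (hb : Summable b) (hg : ∀ i u, 0 < u → ‖g i u‖ ≤ b i * Real.exp (u / 2))
    (hL : ∀ i, HasLaplace (g i) w (G i)) : HasLaplace (fun u => ∑' i, g i u) w (∑' i, G i) := by
  have hn : ∀ u : ℝ, ‖Complex.exp (-(w * u))‖ = Real.exp (-u) := fun u => by
    rw [Complex.norm_exp]; simp [h]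
  set S := Function.support b with hS
  have hSc : Countable S := hb.countable_support
  have hg0 : ∀ i, i ∉ S → ∀ u, 0 < u → g i u = 0 := fun i hi u hu => by
    have := hg i u hu
    rw [Function.notMem_support.1 hi, zero_mul] at this
    exact norm_le_zero_iff.1 this
  have hG0 : ∀ i, i ∉ S → G i = 0 := fun i hi => by
    rw [← (hL i).2]
    rw [setIntegral_congr_fun measurableSet_Ioi (g := fun _ => 0) (fun u hu => by
      simp only [hg0 i hi u hu, mul_zero])]
    simp
  have hbs : Summable (fun i : S => b i) := hb.subtype S
  have hb0 : ∀ i, 0 ≤ b i := fun i => by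
    have := (norm_nonneg _).trans (hg i 1 one_pos)
    exact nonneg_of_mul_nonneg_left this (Real.exp_pos _)
  have hdom : ∀ (i : ι) (u : ℝ), 0 < u → ‖Complex.exp (-(w * u)) * g i u‖ ≤ b i * Real.exp (-(1 / 2) * u) := by
    intro i u hu
    rw [norm_mul, hn]
    have := mul_le_mul_of_nonneg_left (hg i u hu) (Real.exp_pos (-u)).le
    refine this.trans (le_of_eq ?_)
    rw [mul_left_comm, ← Real.exp_add]; ring_nf
  have hexp : IntegrableOn (fun u : ℝ => Real.exp (-(1 / 2) * u)) (Ioi 0) :=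
    integrableOn_exp_mul_Ioi (by norm_num) 0
  have hnorm : Summable fun i : S => ∫ u in Ioi (0 : ℝ), ‖Complex.exp (-(w * u)) * g i u‖ := by
    refine Summable.of_nonneg_of_le (fun i => integral_nonneg fun _ => norm_nonneg _) (fun i => ?_)
      (hbs.mul_right (∫ u in Ioi (0 : ℝ), Real.exp (-(1 / 2) * u)))
    rw [← integral_const_mul]
    refine setIntegral_mono_on (hL i).1.norm (hexp.const_mul _) measurableSet_Ioi fun u hu => hdom i u hu
  have hH := hasSum_integral_of_summable_integral_norm (fun i : S => (hL i).1) hnorm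
  have hpt : ∀ u : ℝ, 0 < u → ∑' i, g i u = ∑' i : S, g i u := fun u hu => by
    refine (tsum_subtype_eq_of_support_subset (f := fun i => g i u) (s := S) ?_).symm
    intro i hi; by_contra h0; exact hi (hg0 i h0 u hu)
  have he : EqOn (fun u : ℝ => ∑' i : S, Complex.exp (-(w * u)) * g i u)
      (fun u : ℝ => Complex.exp (-(w * u)) * ∑' i, g i u) (Ioi 0) := by
    intro u hu
    simp only
    rw [hpt u hu, tsum_mul_left]
  constructor
  · refine IntegrableOn.congr_fun ?_ he measurableSet_Ioi
    have hm : ∀ i : S, AEStronglyMeasurable (fun u : ℝ => Complex.exp (-(w * u)) * g i u)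
      (volume.restrict (Ioi 0)) := fun i => (hL i).1.aestronglyMeasurable
    have hsumm : ∀ u : ℝ, 0 < u → Summable (fun i : S => ‖Complex.exp (-(w * u)) * g i u‖) := fun u hu =>
      Summable.of_nonneg_of_le (fun _ => norm_nonneg _) (fun i : S => hdom i u hu) (hbs.mul_right _)
    have hmeas : AEStronglyMeasurable (fun u : ℝ => ∑' i : S, Complex.exp (-(w * u)) * g i u)
        (volume.restrict (Ioi 0)) := by
      refine aestronglyMeasurable_of_tendsto_ae (atTop : Filter (Finset S))
        (f := fun F (u : ℝ) => ∑ i ∈ F, Complex.exp (-(w * u)) * g i u) (fun F => ?_) ?_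
      · exact Finset.aestronglyMeasurable_fun_sum _ fun i _ => hm i
      · filter_upwards [ae_restrict_mem measurableSet_Ioi] with u hu
        exact (hsumm u hu).of_norm.hasSum
    refine (hexp.const_mul (∑' i : S, b i)).mono' hmeas ?_
    filter_upwards [ae_restrict_mem measurableSet_Ioi] with u hu
    refine (norm_tsum_le_tsum_norm (hsumm u hu)).trans ?_
    rw [← tsum_mul_right]
    exact (hsumm u hu).tsum_le_tsum (fun i => hdom i u hu) (hbs.mul_right _)
  · rw [← setIntegral_congr_fun measurableSet_Ioi he, ← hH.tsum_eq]
    have : ∀ i : S, ∫ u in Ioi (0 : ℝ), Complex.exp (-(w * u)) * g i u = G i := fun i => (hL i).2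
    simp only [this]
    refine tsum_subtype_eq_of_support_subset (f := G) (s := S) ?_
    intro i hi; by_contra h0; exact hi (hG0 i h0)

/-- The weighted prime sum `∑_{n ≤ e^u} Λ(n) (1/n - e^{-u})`. -/
noncomputable def vA (u : ℝ) : ℝ := ∑' n : ℕ, vonMangoldt n * max 0 (1 / (n : ℝ) - Real.exp (-u))

/-- Contribution of a nontrivial zero to the explicit formula. -/
noncomputable def zE (ρ : ℂ) (u : ℝ) : ℂ :=
  mz ρ * ((Complex.exp (-((1 - ρ) * u)) - Complex.exp (-(1 * u))) / (ρ * (1 - ρ)))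

/-- Contribution of the trivial zero `-2 (n + 1)` to the explicit formula. -/
noncomputable def tE (n : ℕ) (u : ℝ) : ℂ :=
  1 / ((2 * n + 2) * (2 * n + 3)) * (Complex.exp (-(1 * u)) - Complex.exp (-((2 * n + 3) * u)))

/-- The analytic side of the explicit formula for `vA`. -/
noncomputable def vE (u : ℝ) : ℂ :=
  u - 1 + Complex.exp (-(1 * u)) - Real.eulerMascheroniConstant * (1 - Complex.exp (-(1 * u))) +
    ∑' ρ : ℂ, zE ρ u + ∑' n : ℕ, tE n u

lemma norm_exp_neg_le_one {a : ℂ} (ha : 0 ≤ a.re) {u : ℝ} (hu : 0 ≤ u) :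
    ‖Complex.exp (-(a * u))‖ ≤ 1 := by
  rw [Complex.norm_exp, Real.exp_le_one_iff]
  simp; positivity

lemma norm_zE_le (ρ : ℂ) {u : ℝ} (hu : 0 ≤ u) : ‖zE ρ u‖ ≤ 2 * (mz ρ * (1 / ‖ρ * (1 - ρ)‖)) := by
  by_cases h : xi ρ = 0
  · have h1 : 0 ≤ (1 - ρ).re := by simpa using (re_zero_lt_one h).le
    have a := norm_exp_neg_le_one h1 hu
    have b := norm_exp_neg_le_one (a := 1) (by simp) hu
    rw [zE, norm_mul, norm_div, Complex.norm_real, Real.norm_of_nonneg (mz_nonneg ρ)]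
    have c := (norm_sub_le (Complex.exp (-((1 - ρ) * u))) (Complex.exp (-(1 * u)))).trans (add_le_add a b)
    rw [mul_left_comm]
    refine mul_le_mul_of_nonneg_left ?_ (mz_nonneg ρ)
    rw [mul_one_div]
    refine div_le_div_of_nonneg_right ?_ (norm_nonneg _)
    linarith
  · simp [zE, mz_eq_zero h]

lemma norm_tE_le (n : ℕ) {u : ℝ} (hu : 0 ≤ u) : ‖tE n u‖ ≤ 2 * (1 / ((n : ℝ) + 1) ^ 2) := by
  have h1 : (0 : ℝ) ≤ (2 * n + 3 : ℂ).re := by simp; positivity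
  have a := norm_exp_neg_le_one h1 hu
  have b := norm_exp_neg_le_one (a := 1) (by simp) hu
  have c := (norm_sub_le (Complex.exp (-(1 * u))) (Complex.exp (-((2 * n + 3) * u)))).trans (add_le_add b a)
  rw [tE, norm_mul]
  have d : ‖(1 : ℂ) / ((2 * n + 2) * (2 * n + 3))‖ = 1 / ((2 * n + 2) * (2 * n + 3)) := by
    rw [show (1 : ℂ) / ((2 * n + 2) * (2 * n + 3)) = ((1 / ((2 * n + 2) * (2 * n + 3)) : ℝ) : ℂ) by
      push_cast; rfl, Complex.norm_real, Real.norm_of_nonneg (by positivity)]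
  have e : (1 : ℝ) / ((2 * n + 2) * (2 * n + 3)) ≤ 1 / ((n : ℝ) + 1) ^ 2 := by
    apply one_div_le_one_div_of_le (by positivity)
    have : (0 : ℝ) ≤ n := n.cast_nonneg
    nlinarith
  rw [d, mul_comm (2 : ℝ) (1 / ((n : ℝ) + 1) ^ 2)]
  exact mul_le_mul e (by linarith) (norm_nonneg _) (by positivity)

lemma kernel_le (n : ℕ) (u : ℝ) : max 0 (1 / (n : ℝ) - Real.exp (-u)) ≤
    1 / (n : ℝ) ^ (3 / 2 : ℝ) * Real.exp (u / 2) := by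
  rcases Nat.eq_zero_or_pos n with rfl | hn
  · refine max_le (by positivity) ?_
    have := Real.exp_pos (-u)
    simp; linarith
  · have hn : (0 : ℝ) < n := by exact_mod_cast hn
    refine max_le (by positivity) ?_
    rcases le_or_gt (1 / (n : ℝ)) (Real.exp (-u)) with h | h
    · have : 0 < 1 / (n : ℝ) ^ (3 / 2 : ℝ) * Real.exp (u / 2) := by positivity
      linarith
    · have h1 : (n : ℝ) < Real.exp u := by
        rw [Real.exp_neg, one_div] at h
        exact (inv_lt_inv₀ (Real.exp_pos u) hn).1 h
      have h2 : (n : ℝ) ^ (1 / 2 : ℝ) ≤ Real.exp (u / 2) := by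
        have := Real.rpow_le_rpow hn.le h1.le (by norm_num : (0 : ℝ) ≤ 1 / 2)
        rw [← Real.exp_mul] at this
        rwa [mul_one_div] at this
      have h3 : 1 / (n : ℝ) = 1 / (n : ℝ) ^ (3 / 2 : ℝ) * (n : ℝ) ^ (1 / 2 : ℝ) := by
        rw [one_div, one_div, ← Real.rpow_neg hn.le, ← Real.rpow_add hn, ← Real.rpow_neg_one]
        norm_num
      have h4 := mul_le_mul_of_nonneg_left h2 (by positivity : 0 ≤ 1 / (n : ℝ) ^ (3 / 2 : ℝ))
      have := Real.exp_pos (-u)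
      linarith

lemma summable_vonMangoldt_rpow : Summable fun n : ℕ => vonMangoldt n * (1 / (n : ℝ) ^ (3 / 2 : ℝ)) := by
  have h := (hasSum_vonMangoldt (s := (3 / 2 : ℝ)) (by simp; norm_num)).summable.norm
  refine h.congr fun n => ?_
  rcases Nat.eq_zero_or_pos n with rfl | hn
  · simp
  · rw [LSeries.term_of_ne_zero hn.ne', norm_div, Complex.norm_real,
      Real.norm_of_nonneg vonMangoldt_nonneg, Complex.norm_natCast_cpow_of_pos hn]
    simp [div_eq_mul_inv]

lemma laplace_vA {w : ℂ} (h : w.re = 1) : HasLaplace (fun u => (vA u : ℂ)) w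
    (-(deriv riemannZeta (1 + w) / riemannZeta (1 + w)) * (1 / (w * (w + 1)))) := by
  have hH := (hasSum_vonMangoldt (s := 1 + w) (by simp [h])).mul_right (1 / (w * (w + 1)))
  rw [← hH.tsum_eq]
  have hL := HasLaplace.tsum (w := w)
    (g := fun (n : ℕ) u => (vonMangoldt n : ℂ) * ((max 0 (1 / (n : ℝ) - Real.exp (-u)) : ℝ) : ℂ))
    (G := fun n => LSeries.term (fun n => (vonMangoldt n : ℂ)) (1 + w) n * (1 / (w * (w + 1)))) h
    summable_vonMangoldt_rpow (fun n u _ => ?_) (fun n => ?_)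
  · refine hL.congr (fun u _ => ?_) rfl
    rw [vA, Complex.ofReal_tsum]
    exact tsum_congr fun n => by push_cast; ring
  · rw [← Complex.ofReal_mul, Complex.norm_real, Real.norm_of_nonneg
      (mul_nonneg vonMangoldt_nonneg (le_max_left _ _)), mul_assoc]
    exact mul_le_mul_of_nonneg_left (kernel_le n u) vonMangoldt_nonneg
  · rcases Nat.eq_zero_or_pos n with rfl | hn
    · simp [HasLaplace]
    · refine ((laplace_kernel h hn).const_mul (vonMangoldt n : ℂ)).congr (fun _ _ => rfl) ?_
      rw [LSeries.term_of_ne_zero (by omega), Complex.cpow_neg]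
      ring

/-- The partial fractions of `ξ'/ξ` at `1` minus those at `1 + w`. Division by `w (w + 1)`
matches the Laplace transform of the weights `1/n - e^{-u}`. -/
lemma hasSum_zeros {w : ℂ} (h : w.re = 1) :
    HasSum (fun ρ : ℂ => (mz ρ : ℂ) * ((1 / (w + (1 - ρ)) - 1 / (w + 1)) / (ρ * (1 - ρ))))
      ((bz - logDeriv xi (1 + w)) * (1 / (w * (w + 1)))) := by
  have hw : w ≠ 0 := by rintro rfl; simp at h
  have hw1 : w + 1 ≠ 0 := by
    intro h0; have := congrArg Complex.re h0; simp [h] at this; try norm_num at this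
  have h1 := hasSum_xi (z := 1) (by rw [xi_one]; exact one_ne_zero)
  have h2 := hasSum_xi (z := 1 + w) (xi_ne_zero_of_one_le_re (by simp [h]))
  rw [logDeriv_xi_one] at h1
  have h3 := (h1.sub h2).mul_right (1 / (w * (w + 1)))
  have e : ((bz : ℂ) + bz - (logDeriv xi (1 + w) + bz)) = bz - logDeriv xi (1 + w) := by ring
  rw [e] at h3
  refine HasSum.congr_fun h3 fun ρ => ?_
  by_cases hx : xi ρ = 0
  · have a := ne_zero_of_xi hx
    have b := ne_one_of_xi hx
    have c : 1 + w - ρ ≠ 0 := by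
      intro h0
      have := congrArg Complex.re h0
      have := re_zero_lt_one hx
      simp [h] at *; linarith
    have c' : w + (1 - ρ) ≠ 0 := by intro h0; apply c; linear_combination h0
    field_simp
    ring
  · simp [mz_eq_zero hx]

/-- The contribution of the trivial zeros: the difference of the digamma series at `(1 + w)/2 + 1` and `3/2`. -/
lemma hasSum_trivial {w : ℂ} (h : w.re = 1) :
    HasSum (fun n : ℕ => 1 / ((2 * n + 2) * (2 * n + 3)) * (1 / (w + 1) - 1 / (w + (2 * n + 3))))
      ((Complex.digamma ((1 + w) / 2 + 1) / 2 - (1 - Real.log 2 - Real.eulerMascheroniConstant / 2)) *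
        (1 / (w * (w + 1)))) := by
  have hw : w ≠ 0 := by rintro rfl; simp at h
  have hw1 : w + 1 ≠ 0 := by
    intro h0; have := congrArg Complex.re h0; simp [h] at this; try norm_num at this
  have h1 := digamma_series (z := 1 / 2 + 1) (by norm_num)
  rw [digamma_add_one (by norm_num), Complex.digamma_one_half] at h1
  have h2 := digamma_series (z := (1 + w) / 2 + 1) (by simp [h])
  have h3 := (((h2.sub h1).div_const 2)).mul_right (1 / (w * (w + 1)))
  have e : (Complex.digamma ((1 + w) / 2 + 1) + (Real.eulerMascheroniConstant : ℂ) -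
      (-2 * Complex.log 2 - Real.eulerMascheroniConstant + 1 / (1 / 2) + Real.eulerMascheroniConstant)) / 2
      = Complex.digamma ((1 + w) / 2 + 1) / 2 - (1 - Real.log 2 - Real.eulerMascheroniConstant / 2) := by
    rw [Complex.ofReal_log (by norm_num)]
    push_cast; ring
  rw [e] at h3
  refine HasSum.congr_fun h3 fun n => ?_
  have a : (2 * n + 2 : ℂ) ≠ 0 := by norm_cast
  have b : (2 * n + 3 : ℂ) ≠ 0 := by norm_cast
  have c : w + (2 * n + 3) ≠ 0 := by
    intro h0; have := congrArg Complex.re h0; simp [h] at this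
    have : (0 : ℝ) ≤ n := n.cast_nonneg
    linarith
  have d : (n : ℂ) + ((1 + w) / 2 + 1) = (w + (2 * n + 3)) / 2 := by ring
  have f : (n : ℂ) + (1 / 2 + 1) = (2 * n + 3) / 2 := by ring
  rw [dterm, dterm, d, f]
  field_simp
  ring

lemma laplace_vE {w : ℂ} (h : w.re = 1) : HasLaplace vE w
    (-(deriv riemannZeta (1 + w) / riemannZeta (1 + w)) * (1 / (w * (w + 1)))) := by
  have hw : w ≠ 0 := by rintro rfl; simp at h
  have hw1 : w + 1 ≠ 0 := by
    intro h0; have := congrArg Complex.re h0; simp [h] at this; try norm_num at this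
  have l1 := laplace_one (w := w) (by rw [h]; norm_num)
  have le := laplace_exp (w := w) (a := 1) (by simp [h])
  have lz : HasLaplace (fun u => ∑' ρ : ℂ, zE ρ u) w _ := HasLaplace.tsum (w := w) (g := zE)
    (G := fun ρ : ℂ => (mz ρ : ℂ) * ((1 / (w + (1 - ρ)) - 1 / (w + 1)) / (ρ * (1 - ρ)))) h
    (summable_q.mul_left 2) (fun ρ u hu => (norm_zE_le ρ hu.le).trans (le_mul_of_one_le_right
      (mul_nonneg two_pos.le (mul_nonneg (mz_nonneg ρ) (by positivity)))
      (Real.one_le_exp (by positivity)))) (fun ρ => by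
      by_cases hx : xi ρ = 0
      · have hr := re_zero_lt_one hx
        refine (((laplace_exp (w := w) (a := 1 - ρ) (by simp [h]; linarith)).sub le).const_mul
          (mz ρ / (ρ * (1 - ρ)))).congr (fun u _ => ?_) (by ring)
        rw [zE]; ring
      · simp [HasLaplace, zE, mz_eq_zero hx])
  have lt : HasLaplace (fun u => ∑' n : ℕ, tE n u) w _ := HasLaplace.tsum (w := w) (g := tE)
    (G := fun n : ℕ => 1 / ((2 * n + 2) * (2 * n + 3)) * (1 / (w + 1) - 1 / (w + (2 * n + 3)))) h
    (summable_inv_sq.mul_left 2) (fun n u hu => (norm_tE_le n hu.le).trans (le_mul_of_one_le_right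
      (by positivity) (Real.one_le_exp (by positivity)))) (fun n => by
      refine (le.sub (laplace_exp (w := w) (a := 2 * n + 3) ?_)).const_mul
          (1 / ((2 * n + 2) * (2 * n + 3)))
      simp [h]; positivity)
  rw [(hasSum_zeros h).tsum_eq] at lz
  rw [(hasSum_trivial h).tsum_eq] at lt
  refine (((((laplace_lin h).sub l1).add le).sub ((l1.sub le).const_mul
    (Real.eulerMascheroniConstant : ℂ))).add lz |>.add lt).congr (fun u _ => rfl) ?_
  rw [neg_logDeriv_zeta (by simp [h])]
  rw [digamma_add_one (by simp [h])]
  have hb : (bz : ℂ) = 1 + (Real.eulerMascheroniConstant - (2 * Real.log 2 + Real.log π)) / 2 := by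
    rw [bz, Real.log_mul (by norm_num) Real.pi_ne_zero, show (4 : ℝ) = 2 ^ 2 by norm_num, Real.log_pow]
    push_cast; ring
  rw [hb]
  have hw2 : 1 + w ≠ 0 := by rwa [add_comm]
  have e : 1 + w - 1 = w := by ring
  rw [e]
  field_simp
  ring

lemma continuous_vA : Continuous fun u : ℝ => Real.exp (-u / 2) * vA u := by
  have e : (fun u : ℝ => Real.exp (-u / 2) * vA u) = fun u => ∑' n : ℕ,
      Real.exp (-u / 2) * (vonMangoldt n * max 0 (1 / (n : ℝ) - Real.exp (-u))) := by
    funext u; rw [vA, tsum_mul_left]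
  rw [e]
  refine continuous_tsum (fun n => by fun_prop) summable_vonMangoldt_rpow (fun n u => ?_)
  rw [Real.norm_of_nonneg (mul_nonneg (Real.exp_pos _).le
    (mul_nonneg vonMangoldt_nonneg (le_max_left _ _))), mul_left_comm]
  refine mul_le_mul_of_nonneg_left ?_ vonMangoldt_nonneg
  have := mul_le_mul_of_nonneg_left (kernel_le n u) (Real.exp_pos (-u / 2)).le
  refine this.trans (le_of_eq ?_)
  rw [mul_left_comm, ← Real.exp_add]; ring_nf; simp

lemma continuousOn_vE : ContinuousOn vE (Ici 0) := by
  have h1 : ContinuousOn (fun u => ∑' ρ : ℂ, zE ρ u) (Ici 0) :=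
    continuousOn_tsum (fun ρ => by unfold zE; fun_prop) (summable_q.mul_left 2)
      (fun ρ u hu => norm_zE_le ρ hu)
  have h2 : ContinuousOn (fun u => ∑' n : ℕ, tE n u) (Ici 0) :=
    continuousOn_tsum (fun n => by unfold tE; fun_prop) (summable_inv_sq.mul_left 2)
      (fun n u hu => norm_tE_le n hu)
  exact (ContinuousOn.add (by fun_prop) h1).add h2

lemma vA_zero : vA 0 = 0 := by
  rw [vA]
  convert tsum_zero with n
  rcases Nat.eq_zero_or_pos n with rfl | hn
  · simp
  · have : 1 / (n : ℝ) ≤ 1 := by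
      rw [div_le_one (by exact_mod_cast hn)]; exact_mod_cast hn
    rw [max_eq_left (by simpa using this), mul_zero]

lemma vE_zero : vE 0 = 0 := by simp [vE, zE, tE]

open scoped FourierTransform in
/-- The explicit formula for the weighted prime sum. Both sides are continuous and have the same Laplace
transform on the line `Re w = 1`, so they agree by the uniqueness of the Fourier transform. -/
theorem explicit_formula {u : ℝ} (hu : 0 ≤ u) : (vA u : ℂ) = vE u := by
  set F : ℝ → ℂ := fun u => Complex.exp (-(max u 0 : ℝ)) * ((vA (max u 0) : ℂ) - vE (max u 0)) with hF
  have hF0 : ∀ u, u ∉ Ioi (0 : ℝ) → F u = 0 := by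
    intro u hu
    have : max u 0 = 0 := max_eq_right (not_lt.1 hu)
    simp [hF, this, vA_zero, vE_zero]
  have hFpos : ∀ u, 0 < u → F u = Complex.exp (-(u : ℂ)) * ((vA u : ℂ) - vE u) := by
    intro u hu
    simp only [hF]
    rw [max_eq_left hu.le]
  have hcont : Continuous F := by
    have hm : Continuous fun u : ℝ => max u 0 := by fun_prop
    have h1 : Continuous fun u : ℝ => vA (max u 0) := by
      have h := (continuous_vA.mul (by fun_prop : Continuous fun u : ℝ => Real.exp (u / 2)))
      refine (h.comp hm).congr fun u => ?_
      simp only [Function.comp, Pi.mul_apply]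
      rw [mul_right_comm, ← Real.exp_add]; ring_nf; simp
    have h2 : Continuous fun u : ℝ => vE (max u 0) :=
      continuousOn_vE.comp_continuous hm (fun u => le_max_right u 0)
    exact (Complex.continuous_exp.comp (by fun_prop)).mul ((Complex.continuous_ofReal.comp h1).sub h2)
  have hLap : ∀ w : ℂ, w.re = 1 → HasLaplace (fun u => (vA u : ℂ) - vE u) w 0 := fun w h =>
    ((laplace_vA h).sub (laplace_vE h)).congr (fun _ _ => rfl) (sub_self _)
  have hFint : Integrable F := by
    rw [← integrableOn_iff_integrable_of_support_subset (s := Ioi 0)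
      (fun u hu => by by_contra h; exact hu (hF0 u h))]
    refine IntegrableOn.congr_fun (hLap 1 (by simp)).1 (fun u hu => ?_) measurableSet_Ioi
    rw [hFpos u hu]; simp
  -- the Fourier transform of `F` is the Laplace transform of `vA - vE` along `Re w = 1`, which vanishes
  have hft : 𝓕 F = 0 := by
    funext t
    rw [Real.fourier_real_eq_integral_exp_smul, Pi.zero_apply,
      ← setIntegral_eq_integral_of_forall_compl_eq_zero (s := Ioi 0)
        (fun u hu => by rw [hF0 u hu, smul_zero])]
    rw [← (hLap (1 + 2 * π * t * Complex.I) (by simp)).2]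
    refine setIntegral_congr_fun measurableSet_Ioi fun u hu => ?_
    simp only [hFpos u hu, smul_eq_mul]
    rw [← mul_assoc, ← Complex.exp_add]
    congr 2
    push_cast; ring
  have hinv := hcont.fourierInv_fourier_eq hFint (by rw [hft]; exact integrable_zero _ _ _)
  have hz : F = 0 := by
    rw [← hinv, hft]
    funext t
    simp [Real.fourierInv_eq]
  rcases hu.eq_or_lt with rfl | hu
  · rw [vA_zero, vE_zero]; simp
  · have := congrFun hz u
    rw [hFpos u hu] at this
    simpa [sub_eq_zero] using this

/-- The remainder of the explicit formula is dominated by the sum over zeros. The constant is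
`2.1 > (1 + γ) + 0.0476 + 0.42`, from the elementary terms, the part of the zeros with `e^{-u}`, and the
trivial zeros. -/
theorem remainder_le {u : ℝ} (hu : 0 ≤ u) :
    |u - 1 - Real.eulerMascheroniConstant - vA u| ≤ Zsum u + 2.1 * Real.exp (-u) := by
  have h := explicit_formula hu
  have hz : ‖∑' ρ : ℂ, zE ρ u‖ ≤ Zsum u + 0.0476 * Real.exp (-u) := by
    have hs1 := summable_Zsum hu
    have hs2 := summable_q.mul_right (Real.exp (-u))
    have hle : ∀ ρ : ℂ, ‖zE ρ u‖ ≤ mz ρ * (1 / ‖ρ * (1 - ρ)‖ * Real.exp (-((1 - ρ.re) * u))) +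
        mz ρ * (1 / ‖ρ * (1 - ρ)‖) * Real.exp (-u) := by
      intro ρ
      rw [zE, norm_mul, norm_div, Complex.norm_real, Real.norm_of_nonneg (mz_nonneg ρ), mul_assoc,
        ← mul_add, ← mul_add]
      refine mul_le_mul_of_nonneg_left ?_ (mz_nonneg ρ)
      rw [div_eq_inv_mul, ← one_div]
      refine mul_le_mul_of_nonneg_left ?_ (by positivity)
      refine (norm_sub_le _ _).trans (le_of_eq ?_)
      rw [Complex.norm_exp, Complex.norm_exp]; simp
    have hn : Summable fun ρ => ‖zE ρ u‖ :=
      Summable.of_nonneg_of_le (fun _ => norm_nonneg _) hle (hs1.add hs2)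
    refine (norm_tsum_le_tsum_norm hn).trans ((hn.tsum_le_tsum hle (hs1.add hs2)).trans ?_)
    rw [hs1.tsum_add hs2, tsum_mul_right]
    exact add_le_add_right (mul_le_mul_of_nonneg_right tsum_q_le (Real.exp_pos _).le) _
  have ht : ‖∑' n : ℕ, tE n u‖ ≤ 0.42 * Real.exp (-u) := by
    have hle : ∀ n : ℕ, ‖tE n u‖ ≤ 1 / 4 * Real.exp (-u) * (1 / ((n : ℝ) + 1) ^ 2) := by
      intro n
      have e : tE n u = ((1 / ((2 * n + 2) * (2 * n + 3)) *
          (Real.exp (-u) - Real.exp (-((2 * n + 3) * u))) : ℝ) : ℂ) := by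
        rw [tE]; push_cast; ring_nf
      have hn : (0 : ℝ) ≤ n := n.cast_nonneg
      have h1 : Real.exp (-((2 * n + 3) * u)) ≤ Real.exp (-u) := Real.exp_le_exp.2 (by nlinarith)
      rw [e, Complex.norm_real, Real.norm_of_nonneg (mul_nonneg (by positivity) (by linarith))]
      have h2 : (1 : ℝ) / ((2 * n + 2) * (2 * n + 3)) ≤ 1 / 4 * (1 / ((n : ℝ) + 1) ^ 2) := by
        rw [one_div_mul_one_div]
        apply one_div_le_one_div_of_le (by positivity); nlinarith
      have h3 := Real.exp_pos (-((2 * n + 3) * u))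
      have h4 := mul_le_mul h2 (by linarith : Real.exp (-u) - Real.exp (-((2 * n + 3) * u)) ≤ Real.exp (-u))
        (by linarith) (by positivity)
      linarith
    have hs := summable_inv_sq.mul_left (1 / 4 * Real.exp (-u))
    have hn : Summable fun n => ‖tE n u‖ := Summable.of_nonneg_of_le (fun _ => norm_nonneg _) hle hs
    refine (norm_tsum_le_tsum_norm hn).trans ((hn.tsum_le_tsum hle hs).trans ?_)
    rw [tsum_mul_left]
    have h5 : ∑' n : ℕ, 1 / ((n : ℝ) + 1) ^ 2 = π ^ 2 / 6 := by
      have := hasSum_zeta_two.tsum_eq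
      rw [hasSum_zeta_two.summable.tsum_eq_zero_add] at this
      simpa using this
    rw [h5]
    have hp := Real.pi_lt_d2
    have hp0 := Real.pi_pos
    have h6 := Real.exp_pos (-u)
    have : π ^ 2 / 6 ≤ 1.66 := by norm_num at hp ⊢; nlinarith
    have h7 := mul_le_mul_of_nonneg_left this (by positivity : 0 ≤ 1 / 4 * Real.exp (-u))
    refine h7.trans ?_
    norm_num; linarith
  have e : ((u - 1 - Real.eulerMascheroniConstant - vA u : ℝ) : ℂ) =
      -(((1 + Real.eulerMascheroniConstant) * Real.exp (-u) : ℝ) : ℂ) - ∑' ρ : ℂ, zE ρ u -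
        ∑' n : ℕ, tE n u := by
    push_cast
    rw [h, vE]; push_cast; ring_nf
  rw [← Real.norm_eq_abs, ← Complex.norm_real, e]
  have hg := gamma_bounds
  refine (norm_sub_le _ _).trans ((add_le_add_left (norm_sub_le _ _) _).trans ?_)
  rw [norm_neg, Complex.norm_real, Real.norm_of_nonneg (by have := hg.1; norm_num at this; positivity)]
  have h6 := Real.exp_pos (-u)
  have h7 : (1 + Real.eulerMascheroniConstant) * Real.exp (-u) ≤ 1.57723 * Real.exp (-u) :=
    mul_le_mul_of_nonneg_right (by have := hg.2; norm_num at this ⊢; linarith) h6.le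
  norm_num at hz ht h7 ⊢
  linarith
end ExplicitFormula
end PhiBound

/-! ### Partial summation -/

namespace PhiBound
section Mertens
open Set Filter MeasureTheory ArithmeticFunction
open scoped Topology

/-- The weighted prime power sum `∑_{n ≤ x} Λ(n) (1/(n log n) - 1/(x log x))` at `x = exp u`. -/
noncomputable def vW (u : ℝ) : ℝ :=
  ∑' n : ℕ, vonMangoldt n * max 0 (1 / ((n : ℝ) * Real.log n) - Real.exp (-u) / u)

/-- The derivative of the kernel of `vW` with respect to that of `vA`. -/
noncomputable def kk (u : ℝ) : ℝ := (1 + u) / u ^ 2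

/-- The kernel of `vA`. -/
noncomputable def aker (n : ℕ) (u : ℝ) : ℝ := max 0 (1 / (n : ℝ) - Real.exp (-u))

/-- The kernel of `vW`. -/
noncomputable def wker (n : ℕ) (u : ℝ) : ℝ := max 0 (1 / ((n : ℝ) * Real.log n) - Real.exp (-u) / u)

lemma exp_neg_log {n : ℕ} (hn : 2 ≤ n) : Real.exp (-Real.log n) = 1 / n := by
  rw [Real.exp_neg, Real.exp_log (by positivity), one_div]

lemma aker_of_lt {n : ℕ} (hn : 2 ≤ n) {u : ℝ} (h : u ≤ Real.log n) : aker n u = 0 := by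
  have := Real.exp_le_exp.2 (neg_le_neg h)
  rw [exp_neg_log hn] at this
  exact max_eq_left (by linarith)

lemma aker_of_ge {n : ℕ} (hn : 2 ≤ n) {u : ℝ} (h : Real.log n ≤ u) :
    aker n u = 1 / n - Real.exp (-u) := by
  have := Real.exp_le_exp.2 (neg_le_neg h)
  rw [exp_neg_log hn] at this
  exact max_eq_right (by linarith)

lemma hdiv_anti {u v : ℝ} (hu : 0 < u) (h : u ≤ v) : Real.exp (-v) / v ≤ Real.exp (-u) / u :=
  div_le_div₀ (Real.exp_pos _).le (Real.exp_le_exp.2 (neg_le_neg h)) hu h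

lemma hdiv_log {n : ℕ} (hn : 2 ≤ n) :
    Real.exp (-Real.log n) / Real.log n = 1 / ((n : ℝ) * Real.log n) := by
  rw [exp_neg_log hn, div_div]

lemma log_nat_pos {n : ℕ} (hn : 2 ≤ n) : 0 < Real.log n :=
  Real.log_pos (by exact_mod_cast (by omega : 1 < n))

lemma wker_of_lt {n : ℕ} (hn : 2 ≤ n) {u : ℝ} (hu : 0 < u) (h : u ≤ Real.log n) : wker n u = 0 := by
  have := hdiv_anti hu h
  rw [hdiv_log hn] at this
  exact max_eq_left (by linarith)

lemma wker_of_ge {n : ℕ} (hn : 2 ≤ n) {u : ℝ} (h : Real.log n ≤ u) :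
    wker n u = 1 / ((n : ℝ) * Real.log n) - Real.exp (-u) / u := by
  have := hdiv_anti (log_nat_pos hn) h
  rw [hdiv_log hn] at this
  exact max_eq_right (by linarith)

lemma vonMangoldt_lt_two {n : ℕ} (hn : n < 2) : vonMangoldt n = 0 := by
  interval_cases n <;> simp

lemma vA_eq_sum {u : ℝ} {N : ℕ} (h : u ≤ Real.log N) :
    vA u = ∑ n ∈ Finset.range N, vonMangoldt n * aker n u := by
  refine tsum_eq_sum fun n hn => ?_
  rcases lt_or_ge n 2 with h2 | h2
  · rw [vonMangoldt_lt_two h2, zero_mul]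
  · rw [Finset.mem_range, not_lt] at hn
    rcases Nat.eq_zero_or_pos N with rfl | hN
    · have := aker_of_lt h2 (u := u) (h.trans (by simpa using (log_nat_pos h2).le))
      rw [aker] at this; rw [this, mul_zero]
    · have := aker_of_lt h2 (h.trans (Real.log_le_log (by exact_mod_cast hN) (by exact_mod_cast hn)))
      rw [aker] at this; rw [this, mul_zero]

lemma vW_eq_sum {u : ℝ} {N : ℕ} (hu : 0 < u) (h : u ≤ Real.log N) :
    vW u = ∑ n ∈ Finset.range N, vonMangoldt n * wker n u := by
  refine tsum_eq_sum fun n hn => ?_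
  rcases lt_or_ge n 2 with h2 | h2
  · rw [vonMangoldt_lt_two h2, zero_mul]
  · rw [Finset.mem_range, not_lt] at hn
    have hN : 0 < N := by
      rcases Nat.eq_zero_or_pos N with rfl | hN
      · simp at h; linarith
      · exact hN
    have := wker_of_lt h2 hu (h.trans (Real.log_le_log (by exact_mod_cast hN) (by exact_mod_cast hn)))
    rw [wker] at this; rw [this, mul_zero]

lemma hasDerivAt_exp_neg (u : ℝ) : HasDerivAt (fun u : ℝ => Real.exp (-u)) (-Real.exp (-u)) u := by
  have := (hasDerivAt_neg u).exp
  simpa using this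

lemma hasDerivAt_kk {u : ℝ} (hu : 0 < u) : HasDerivAt kk (-(2 + u) / u ^ 3) u := by
  have h := ((hasDerivAt_id u).const_add 1).div (hasDerivAt_pow 2 u) (by positivity)
  refine HasDerivAt.congr_deriv (f' := _) h ?_
  simp only [id]
  field_simp
  ring

/-- Both kernels are constant below `log n`, and above it the derivatives of `wker n` and of `aker n`
differ by the factor `kk`. -/
lemma hasDeriv_ker {n : ℕ} (hn : 2 ≤ n) {u : ℝ} (hu : 0 < u) :
    HasDerivWithinAt (fun u => wker n u - kk u * aker n u) ((2 + u) / u ^ 3 * aker n u) (Ici u) u := by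
  rcases lt_or_ge u (Real.log n) with h | h
  · rw [aker_of_lt hn h.le, mul_zero]
    refine HasDerivAt.hasDerivWithinAt ((hasDerivAt_const u (0 : ℝ)).congr_of_eventuallyEq ?_)
    filter_upwards [Ioo_mem_nhds hu h] with v hv
    rw [aker_of_lt hn hv.2.le, wker_of_lt hn hv.1 hv.2.le]; simp
  · have h1 := ((hasDerivAt_const u (1 / ((n : ℝ) * Real.log n))).sub
      ((hasDerivAt_exp_neg u).div (hasDerivAt_id u) hu.ne')).sub
      ((hasDerivAt_kk hu).mul ((hasDerivAt_const u (1 / (n : ℝ))).sub (hasDerivAt_exp_neg u)))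
    refine (HasDerivWithinAt.congr_deriv h1.hasDerivWithinAt ?_).congr (fun v hv => ?_) ?_
    · rw [aker_of_ge hn h, kk]
      simp only [id, Pi.sub_apply]
      field_simp
      ring
    · have hv : Real.log n ≤ v := h.trans hv
      rw [aker_of_ge hn hv, wker_of_ge hn hv]
      simp
    · rw [aker_of_ge hn h, wker_of_ge hn h]
      simp

/-- The remainder in Mertens' product formula, up to prime powers. -/
noncomputable def vV (u : ℝ) : ℝ := vW u + 1 / u - Real.log u - Real.eulerMascheroniConstant

/-- Partial summation: the variation of `vV` is controlled by the remainder in the formula for `vA`.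
If `vA` is at least `u - 1 - γ - E`, then `vV u + kk u * (u - 1 - γ - vA u - E)` does not decrease. -/
lemma vV_le_add {L M E : ℝ} (hL : 0 < L) (hLM : L ≤ M)
    (hE : ∀ u, L ≤ u → |u - 1 - Real.eulerMascheroniConstant - vA u| ≤ E) :
    vV L ≤ vV M + 2 * E * kk L := by
  obtain ⟨N, hN⟩ := exists_nat_ge (Real.exp M)
  have hNM : M ≤ Real.log N := by
    rw [← Real.log_exp M]; exact Real.log_le_log (Real.exp_pos _) hN
  set g := Real.eulerMascheroniConstant
  -- on `(0, M]` this is `-(vV u + g + kk u * (u - 1 - g - vA u - E))`, see `hval`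
  set F : ℝ → ℝ := fun u => -(∑ n ∈ Finset.range N, vonMangoldt n * (wker n u - kk u * aker n u) +
    (1 / u - Real.log u) + kk u * (u - 1 - g - E)) with hF
  -- one-sided, since the weights have kinks at the points `log n`
  have hFd : ∀ u, 0 < u → HasDerivWithinAt F (-(∑ n ∈ Finset.range N,
      vonMangoldt n * ((2 + u) / u ^ 3 * aker n u) + (-1 / u ^ 2 - 1 / u) +
      (-(2 + u) / u ^ 3 * (u - 1 - g - E) + kk u * 1))) (Ici u) u := by
    intro u hu
    refine HasDerivWithinAt.neg ((HasDerivWithinAt.add (HasDerivWithinAt.fun_sum fun n _ => ?_) ?_).add ?_)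
    · rcases lt_or_ge n 2 with h2 | h2
      · simp only [vonMangoldt_lt_two h2, zero_mul]
        exact hasDerivWithinAt_const _ _ _
      · exact (hasDeriv_ker h2 hu).const_mul _
    · have h := ((hasDerivAt_inv hu.ne').sub (Real.hasDerivAt_log hu.ne')).hasDerivWithinAt (s := Ici u)
      refine (HasDerivWithinAt.congr_deriv h ?_).congr (fun v _ => ?_) ?_ <;> simp [neg_div]
    · refine ((hasDerivAt_kk hu).mul ?_).hasDerivWithinAt
      exact (((hasDerivAt_id u).sub_const 1).sub_const g).sub_const E
  have hval : ∀ u, 0 < u → u ≤ M → F u = -(vV u + g + kk u * (u - 1 - g - vA u - E)) := by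
    intro u hu huM
    rw [vV, vW_eq_sum hu (huM.trans hNM), vA_eq_sum (huM.trans hNM)]
    simp only [hF, mul_sub, Finset.sum_sub_distrib, Finset.mul_sum]
    rw [Finset.sum_congr rfl fun n _ => (mul_left_comm (vonMangoldt n) (kk u) (aker n u))]
    ring
  have hker : ∀ n : ℕ, ContinuousOn (fun u => wker n u - kk u * aker n u) (Icc L M) := by
    intro n
    unfold wker kk aker
    have : ∀ u ∈ Icc L M, u ≠ 0 := fun u hu => (hL.trans_le hu.1).ne'
    fun_prop (disch := aesop)
  have hcont : ContinuousOn F (Icc L M) := by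
    have : ∀ u ∈ Icc L M, u ≠ 0 := fun u hu => (hL.trans_le hu.1).ne'
    refine ContinuousOn.neg ((ContinuousOn.add (continuousOn_finsetSum _ fun n _ =>
      (hker n).const_mul _) ?_).add ?_)
    · fun_prop (disch := aesop)
    · unfold kk
      fun_prop (disch := aesop)
  have key := image_le_of_deriv_right_le_deriv_boundary hcont
    (fun u hu => hFd u (hL.trans_le hu.1)) (B := fun _ => F L) (B' := fun _ => 0) le_rfl
    continuousOn_const (fun u _ => hasDerivWithinAt_const _ _ _) (fun u hu => by
      have hu0 : 0 < u := hL.trans_le hu.1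
      have hA := vA_eq_sum (hu.2.le.trans hNM)
      have hs : ∑ n ∈ Finset.range N, vonMangoldt n * ((2 + u) / u ^ 3 * aker n u) =
          (2 + u) / u ^ 3 * vA u := by
        rw [hA, Finset.mul_sum]; exact Finset.sum_congr rfl fun n _ => mul_left_comm _ _ _
      have e : -((2 + u) / u ^ 3 * vA u + (-1 / u ^ 2 - 1 / u) +
          (-(2 + u) / u ^ 3 * (u - 1 - g - E) + kk u * 1)) =
          (2 + u) / u ^ 3 * ((u - 1 - g - vA u) - E) := by
        rw [kk]; field_simp; ring
      rw [hs, e]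
      have := (abs_le.1 (hE u hu.1)).2
      exact mul_nonpos_of_nonneg_of_nonpos (by positivity) (by linarith))
    (right_mem_Icc.2 hLM)
  have hM0 := hL.trans_le hLM
  rw [hval M hM0 le_rfl, hval L hL hLM] at key
  have k1 : 0 ≤ kk M := by rw [kk]; positivity
  have k2 : 0 ≤ kk L := by rw [kk]; positivity
  have h1 := mul_nonneg k1 (sub_nonneg.2 (abs_le.1 (hE M hLM)).2)
  have h2 := mul_nonneg k2 (by linarith [(abs_le.1 (hE L le_rfl)).1] :
    0 ≤ (L - 1 - g - vA L) + E)
  nlinarith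

end Mertens
end PhiBound

/-! ### Mertens' product formula -/

namespace PhiBound
section MertensLimit
open Set Filter MeasureTheory ArithmeticFunction
open scoped Topology ENNReal

/-- Euler's integral, i.e. `Γ'(1) = -γ`. -/
lemma integral_log_exp : IntegrableOn (fun t : ℝ => Real.log t * Real.exp (-t)) (Ioi 0) ∧
    ∫ t in Ioi (0 : ℝ), Real.log t * Real.exp (-t) = -Real.eulerMascheroniConstant := by
  have hd := Complex.hasDerivAt_GammaIntegral (s := 1) (by simp)
  have he : Complex.GammaIntegral =ᶠ[𝓝 1] Complex.Gamma := by
    have : {s : ℂ | 0 < s.re} ∈ 𝓝 (1 : ℂ) :=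
      (isOpen_lt continuous_const Complex.continuous_re).mem_nhds (by simp)
    filter_upwards [this] with s hs
    exact (Complex.Gamma_eq_integral hs).symm
  have h1 := (hd.congr_of_eventuallyEq he.symm).unique Complex.hasDerivAt_Gamma_one
  have h2 : ∫ t in Ioi (0 : ℝ), ((Real.log t * Real.exp (-t) : ℝ) : ℂ) =
      ((-Real.eulerMascheroniConstant : ℝ) : ℂ) := by
    push_cast
    rw [← h1]
    refine setIntegral_congr_fun measurableSet_Ioi fun t _ => ?_
    simp
  have h3 : ∫ t in Ioi (0 : ℝ), Real.log t * Real.exp (-t) = -Real.eulerMascheroniConstant := by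
    rw [integral_complex_ofReal] at h2
    exact_mod_cast h2
  refine ⟨?_, h3⟩
  by_contra h
  rw [integral_undef h] at h3
  have := gamma_bounds.1
  norm_num at this
  linarith

lemma integral_log_exp_mul {w : ℝ} (hw : 0 < w) (c : ℝ) :
    IntegrableOn (fun u : ℝ => w * Real.exp (-(w * u)) * (Real.log u + c)) (Ioi 0) ∧
    ∫ u in Ioi (0 : ℝ), w * Real.exp (-(w * u)) * (Real.log u + c) =
      c - Real.log w - Real.eulerMascheroniConstant := by
  obtain ⟨hi, hv⟩ := integral_log_exp
  have he1 : IntegrableOn (fun t : ℝ => Real.exp (-t)) (Ioi 0) := integrableOn_exp_neg_Ioi 0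
  have he2 : ∫ t in Ioi (0 : ℝ), Real.exp (-t) = 1 := integral_exp_neg_Ioi_zero
  set G : ℝ → ℝ := fun t => Real.log t * Real.exp (-t) + (c - Real.log w) * Real.exp (-t) with hG
  have hGi : IntegrableOn G (Ioi 0) := hi.add (he1.const_mul _)
  have hGv : ∫ t in Ioi (0 : ℝ), G t = c - Real.log w - Real.eulerMascheroniConstant := by
    rw [hG, integral_add hi (he1.const_mul _), hv, integral_const_mul, he2]; ring
  have e : EqOn (fun u : ℝ => w * G (w * u))
      (fun u : ℝ => w * Real.exp (-(w * u)) * (Real.log u + c)) (Ioi 0) := by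
    intro u hu
    have hu : (0 : ℝ) < u := hu
    simp only [hG]
    rw [Real.log_mul hw.ne' hu.ne']; ring
  constructor
  · refine IntegrableOn.congr_fun ?_ e measurableSet_Ioi
    have := (integrableOn_Ioi_comp_mul_left_iff G 0 hw).2 (by simpa using hGi)
    exact this.const_mul w
  · rw [← setIntegral_congr_fun measurableSet_Ioi e, integral_const_mul,
      integral_comp_mul_left_Ioi G 0 hw, mul_zero, hGv, smul_eq_mul, ← mul_assoc,
      mul_inv_cancel₀ hw.ne', one_mul]

/-- Coefficients of the Dirichlet series of `log ζ`, at `1 + w`. -/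
noncomputable def lz (s : ℝ) (n : ℕ) : ℝ := vonMangoldt n / Real.log n * (n : ℝ) ^ (-s)

lemma lz_nonneg (s : ℝ) (n : ℕ) : 0 ≤ lz s n :=
  mul_nonneg (div_nonneg vonMangoldt_nonneg (Real.log_natCast_nonneg n)) (by positivity)

lemma summable_lz {s : ℝ} (hs : 1 < s) : Summable (lz s) := by
  refine Summable.of_nonneg_of_le (lz_nonneg s) (fun n => ?_) (Real.summable_nat_rpow.2 (by linarith : -s < -1))
  have : vonMangoldt n / Real.log n ≤ 1 :=
    div_le_one_of_le₀ vonMangoldt_le_log (Real.log_natCast_nonneg n)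
  exact (mul_le_mul_of_nonneg_right this (by positivity)).trans (by rw [one_mul])

lemma tsum_lz {s : ℝ} (hs : 1 < s) : ∑' n, lz s n = Real.log (riemannZeta s).re := by
  have hsup : Function.support (lz s) ⊆ {n | IsPrimePow n} := by
    intro n hn
    by_contra h
    exact hn (by simp [lz, vonMangoldt_eq_zero_iff.2 h])
  have hp : ∀ p : Nat.Primes, ((p : ℕ) : ℝ) ^ (-s) < 1 := fun p =>
    Real.rpow_lt_one_of_one_lt_of_neg (by exact_mod_cast p.2.one_lt) (by linarith)
  have h1 : ∀ p : Nat.Primes, ∑' k : ℕ, lz s (p ^ (k + 1)) = -Real.log (1 - ((p : ℕ) : ℝ) ^ (-s)) := by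
    intro p
    have hpos : 0 < ((p : ℕ) : ℝ) := by exact_mod_cast p.2.pos
    have h := Real.hasSum_pow_div_log_of_abs_lt_one (x := ((p : ℕ) : ℝ) ^ (-s))
      (by rw [abs_of_nonneg (by positivity)]; exact hp p)
    rw [← h.tsum_eq]
    refine tsum_congr fun k => ?_
    have hl : Real.log p ≠ 0 := (Real.log_pos (by exact_mod_cast p.2.one_lt)).ne'
    rw [lz, vonMangoldt_apply_pow (by omega), vonMangoldt_apply_prime p.2, Nat.cast_pow, Real.log_pow,
      ← Real.rpow_natCast, ← Real.rpow_natCast, ← Real.rpow_mul hpos.le, ← Real.rpow_mul hpos.le]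
    push_cast
    rw [mul_comm (-s)]
    field_simp
  have h2 := riemannZeta_eulerProduct_exp_log (s := s) (by simpa using hs)
  have h3 : ∀ p : Nat.Primes, -Complex.log (1 - (p : ℂ) ^ (-(s : ℂ))) =
      ((-Real.log (1 - ((p : ℕ) : ℝ) ^ (-s)) : ℝ) : ℂ) := by
    intro p
    have : (p : ℂ) ^ (-(s : ℂ)) = ((((p : ℕ) : ℝ) ^ (-s) : ℝ) : ℂ) := by
      rw [Complex.ofReal_cpow (by positivity)]; push_cast; rfl
    rw [this, Complex.ofReal_neg, Complex.ofReal_log (by linarith [hp p])]; push_cast; rfl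
  simp only [h3] at h2
  rw [← Complex.ofReal_tsum, ← Complex.ofReal_exp] at h2
  rw [← h2, Complex.ofReal_re, Real.log_exp,
    tsum_eq_tsum_primes_of_support_subset_prime_powers (summable_lz hs) hsup]
  exact tsum_congr h1

/-- Mertens' product formula, in the one-sided form that is needed. Otherwise `vW u ≥ log u + γ + ε/2` for all
large `u`. Integrating against `w e^{-wu}` gives at least `ε/2 - log w - O(w)` on the right, and at most
`log ζ(1 + w)` on the left; this contradicts `log ζ(1 + w) + log w → 0`. -/
lemma exists_vV_le {ε : ℝ} (hε : 0 < ε) (M₀ : ℝ) : ∃ M, M₀ ≤ M ∧ vV M ≤ ε := by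
  by_contra! hcon
  set g := Real.eulerMascheroniConstant with hg
  obtain ⟨M, hM0, hM1, hM2⟩ : ∃ M, M₀ ≤ M ∧ 1 ≤ M ∧ 1 / M ≤ ε / 2 := by
    refine ⟨max M₀ (max 1 (2 / ε)), le_max_left _ _, (le_max_left _ _).trans (le_max_right _ _), ?_⟩
    have h : 2 / ε ≤ max M₀ (max 1 (2 / ε)) := (le_max_right _ _).trans (le_max_right _ _)
    have h2 := one_div_le_one_div_of_le (by positivity) h
    rwa [one_div_div] at h2
  have hM : 0 < M := by linarith
  set c := g + ε / 2 with hc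
  have hc0 : 0 < c := by
    have := gamma_bounds.1
    norm_num at this
    linarith
  have hlow : ∀ u, M ≤ u → Real.log u + c ≤ vW u := by
    intro u hu
    have h := hcon u (hM0.trans hu)
    rw [vV] at h
    have : 1 / u ≤ 1 / M := one_div_le_one_div_of_le hM hu
    linarith
  set b : ℕ → ℝ := fun n => vonMangoldt n / Real.log n * (1 / n) with hb
  have hb0 : ∀ n, 0 ≤ b n := fun n =>
    mul_nonneg (div_nonneg vonMangoldt_nonneg (Real.log_natCast_nonneg n)) (by positivity)
  have hup : ∀ u, 0 < u → ENNReal.ofReal (vW u) ≤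
      ∑' n : ℕ, (Ici (Real.log n)).indicator (fun _ => ENNReal.ofReal (b n)) u := by
    intro u hu
    obtain ⟨N, hN⟩ := exists_nat_ge (Real.exp u)
    have hNM : u ≤ Real.log N := by
      rw [← Real.log_exp u]; exact Real.log_le_log (Real.exp_pos _) hN
    rw [vW_eq_sum hu hNM, ENNReal.ofReal_sum_of_nonneg fun n _ =>
      mul_nonneg vonMangoldt_nonneg (by unfold wker; exact le_max_left _ _)]
    refine (Finset.sum_le_sum fun n _ => ?_).trans (ENNReal.sum_le_tsum _)
    rcases lt_or_ge n 2 with h2 | h2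
    · simp [vonMangoldt_lt_two h2]
    · rcases lt_or_ge u (Real.log n) with h | h
      · simp [wker_of_lt h2 hu h.le]
      · rw [indicator_of_mem (by exact h), wker_of_ge h2 h]
        refine ENNReal.ofReal_le_ofReal ?_
        have : vonMangoldt n * (1 / (n * Real.log n) - Real.exp (-u) / u) ≤
          vonMangoldt n * (1 / (n * Real.log n)) :=
          mul_le_mul_of_nonneg_left (by have : 0 < Real.exp (-u) / u := by positivity
                                        linarith) vonMangoldt_nonneg
        refine this.trans (le_of_eq ?_)
        simp only [hb]; field_simp
  have hmain : ∀ w : ℝ, 0 < w →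
      c - Real.log w - g - w * M * (Real.log M + c) ≤ Real.log (riemannZeta ((1 + w : ℝ) : ℂ)).re := by
    intro w hw
    obtain ⟨hI, hV⟩ := integral_log_exp_mul hw c
    have hI1 := hI.mono_set (Ioi_subset_Ioi hM.le)
    have hI2 := hI.mono_set (Ioc_subset_Ioi_self : Ioc 0 M ⊆ Ioi 0)
    have hsplit := setIntegral_union (Ioc_disjoint_Ioi (le_refl M)) measurableSet_Ioi hI2 hI1
    rw [Ioc_union_Ioi_eq_Ioi hM.le, hV] at hsplit
    have hlM : 0 ≤ Real.log M := Real.log_nonneg hM1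
    have hsmall : ∫ u in Ioc 0 M, w * Real.exp (-(w * u)) * (Real.log u + c) ≤
        w * M * (Real.log M + c) := by
      have h := setIntegral_mono_on hI2 (g := fun _ => w * (Real.log M + c))
        (integrableOn_const (by simp)) measurableSet_Ioc fun u hu => ?_
      · refine h.trans (le_of_eq ?_)
        rw [setIntegral_const]
        simp [hM.le]; ring
      · have h1 : Real.exp (-(w * u)) ≤ 1 := Real.exp_le_one_iff.2 (by
          have := mul_pos hw hu.1; linarith)
        have h2 : Real.log u ≤ Real.log M := Real.log_le_log hu.1 hu.2
        have h3 := Real.exp_pos (-(w * u))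
        have h4 : Real.exp (-(w * u)) * (Real.log u + c) ≤ Real.log M + c := by nlinarith
        rw [mul_assoc]
        exact mul_le_mul_of_nonneg_left h4 hw.le
    have hbig : ENNReal.ofReal (∫ u in Ioi M, w * Real.exp (-(w * u)) * (Real.log u + c)) ≤
        ENNReal.ofReal (∑' n, lz (1 + w) n) := by
      rw [ofReal_integral_eq_lintegral_ofReal hI1 ?_]
      swap
      · refine (ae_restrict_iff' measurableSet_Ioi).2 (ae_of_all _ fun u hu => ?_)
        have : 0 ≤ Real.log u := Real.log_nonneg (hM1.trans (le_of_lt hu))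
        exact mul_nonneg (by positivity) (by linarith)
      calc ∫⁻ u in Ioi M, ENNReal.ofReal (w * Real.exp (-(w * u)) * (Real.log u + c))
          ≤ ∫⁻ u in Ioi M, ∑' n : ℕ, ENNReal.ofReal (w * Real.exp (-(w * u))) *
              (Ici (Real.log n)).indicator (fun _ => ENNReal.ofReal (b n)) u := by
            refine setLIntegral_mono' measurableSet_Ioi fun u hu => ?_
            rw [ENNReal.tsum_mul_left, ENNReal.ofReal_mul (by positivity)]
            gcongr
            exact (ENNReal.ofReal_le_ofReal (hlow u (le_of_lt hu))).trans (hup u (hM.trans hu))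
        _ ≤ ∫⁻ u, ∑' n : ℕ, ENNReal.ofReal (w * Real.exp (-(w * u))) *
              (Ici (Real.log n)).indicator (fun _ => ENNReal.ofReal (b n)) u :=
            setLIntegral_le_lintegral _ _
        _ = ∑' n : ℕ, ∫⁻ u, ENNReal.ofReal (w * Real.exp (-(w * u))) *
              (Ici (Real.log n)).indicator (fun _ => ENNReal.ofReal (b n)) u :=
            lintegral_tsum fun n => (Measurable.mul (by fun_prop)
              (measurable_const.indicator measurableSet_Ici)).aemeasurable
        _ = ∑' n : ℕ, ENNReal.ofReal (lz (1 + w) n) := tsum_congr fun n => ?_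
        _ = _ := (ENNReal.ofReal_tsum_of_nonneg (lz_nonneg _) (summable_lz (by linarith))).symm
      have e1 : ∀ u : ℝ, ENNReal.ofReal (w * Real.exp (-(w * u))) *
          (Ici (Real.log n)).indicator (fun _ => ENNReal.ofReal (b n)) u =
          (Ici (Real.log n)).indicator (fun u => ENNReal.ofReal (b n * w * Real.exp (-w * u))) u := by
        intro u
        by_cases h : u ∈ Ici (Real.log n)
        · rw [indicator_of_mem h, indicator_of_mem h, ← ENNReal.ofReal_mul (by positivity)]
          ring_nf
        · rw [indicator_of_notMem h, indicator_of_notMem h, mul_zero]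
      simp only [e1]
      rw [lintegral_indicator measurableSet_Ici, setLIntegral_congr Ioi_ae_eq_Ici.symm,
        ← ofReal_integral_eq_lintegral_ofReal
          ((integrableOn_exp_mul_Ioi (by linarith : -w < 0) _).const_mul _)
          (ae_of_all _ fun u => mul_nonneg (mul_nonneg (hb0 n) hw.le) (Real.exp_pos _).le),
        integral_const_mul, integral_exp_mul_Ioi (by linarith : -w < 0)]
      congr 1
      rcases lt_or_ge n 2 with h2 | h2
      · simp [hb, lz, vonMangoldt_lt_two h2]
      · have hn : (0 : ℝ) < n := by positivity
        rw [lz, neg_add, Real.rpow_add hn, Real.rpow_neg_one, Real.rpow_def_of_pos hn]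
        simp only [hb]
        rw [mul_comm (-w) (Real.log n)]
        field_simp
    have hnn : 0 ≤ ∑' n, lz (1 + w) n := tsum_nonneg (lz_nonneg _)
    rw [ENNReal.ofReal_le_ofReal_iff hnn, tsum_lz (by linarith)] at hbig
    linarith
  have hlim := log_riemannZeta_add_log_sub_isLittleO_ofReal
  rw [Asymptotics.isLittleO_one_iff] at hlim
  have hmap : Tendsto (fun w : ℝ => 1 + w) (𝓝[>] 0) (𝓝[>] 1) := by
    refine tendsto_nhdsWithin_iff.2 ⟨?_, ?_⟩
    · have : Tendsto (fun w : ℝ => 1 + w) (𝓝 0) (𝓝 (1 + 0)) := by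
        exact (continuous_const.add continuous_id).tendsto 0
      rw [add_zero] at this
      exact this.mono_left nhdsWithin_le_nhds
    · filter_upwards [self_mem_nhdsWithin] with w hw
      simpa using hw
  have h1 := hlim.comp hmap
  have h2 : Tendsto (fun w : ℝ => ε / 2 - w * M * (Real.log M + c)) (𝓝[>] 0) (𝓝 (ε / 2)) := by
    have : Tendsto (fun w : ℝ => ε / 2 - w * M * (Real.log M + c)) (𝓝 0)
        (𝓝 (ε / 2 - 0 * M * (Real.log M + c))) := by
      exact (by fun_prop : Continuous fun w : ℝ => ε / 2 - w * M * (Real.log M + c)).tendsto 0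
    rw [zero_mul, zero_mul, sub_zero] at this
    exact this.mono_left nhdsWithin_le_nhds
  have h3 := le_of_tendsto_of_tendsto h2 h1 (by
    filter_upwards [self_mem_nhdsWithin] with w hw
    have := hmain w hw
    simp only [Function.comp]
    rw [add_sub_cancel_left]
    linarith)
  linarith

/-- Mertens' product formula with an explicit upper bound for the remainder. -/
theorem vV_le {L : ℝ} (hL : 0 < L) : vV L ≤ 2 * (Zsum L + 2.1 * Real.exp (-L)) * kk L := by
  refine le_of_forall_pos_le_add fun ε hε => ?_
  obtain ⟨M, hM, h⟩ := exists_vV_le hε L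
  have := vV_le_add (E := Zsum L + 2.1 * Real.exp (-L)) hL hM fun u hu => ?_
  · linarith
  · refine (remainder_le (hL.le.trans hu)).trans (add_le_add (Zsum_anti hL.le hu) ?_)
    have := Real.exp_le_exp.2 (neg_le_neg hu)
    norm_num; linarith

end MertensLimit
end PhiBound

/-! ### Sums over primes -/

namespace PhiBound
section Duality
open Finset ArithmeticFunction

/-- The primes up to `N`. -/
def pr (N : ℕ) : Finset ℕ := (Finset.range (N + 1)).filter Nat.Prime

lemma mem_pr {N p : ℕ} : p ∈ pr N ↔ p ≤ N ∧ p.Prime := by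
  simp [pr]

/-- The logarithmic series cut off after `K` terms, with the tail bounded by a geometric series. -/
lemma neg_log_le_partial {p : ℕ} (hp : 2 ≤ p) (K : ℕ) :
    -Real.log (1 - 1 / (p : ℝ)) ≤
      ∑ k ∈ Finset.range K, 1 / (((k : ℝ) + 1) * (p : ℝ) ^ (k + 1)) +
        1 / (((K : ℝ) + 1) * ((p : ℝ) ^ K * (p - 1))) := by
  have hp2 : (2 : ℝ) ≤ p := by exact_mod_cast hp
  have h1 : |1 / (p : ℝ)| < 1 := by
    rw [abs_of_nonneg (by positivity), div_lt_one (by linarith)]; linarith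
  have h := Real.hasSum_pow_div_log_of_abs_lt_one h1
  rw [← h.tsum_eq, ← h.summable.sum_add_tsum_nat_add K]
  refine add_le_add (le_of_eq (Finset.sum_congr rfl fun k _ => ?_)) ?_
  · rw [one_div_pow, div_div, mul_comm]
  · have hg := (hasSum_geometric_of_lt_one (r := 1 / (p : ℝ)) (by positivity)
      (abs_lt.1 h1).2).mul_left (1 / (((K : ℝ) + 1) * (p : ℝ) ^ (K + 1)))
    have e : 1 / (((K : ℝ) + 1) * (p : ℝ) ^ (K + 1)) * (1 - 1 / (p : ℝ))⁻¹ =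
        1 / (((K : ℝ) + 1) * ((p : ℝ) ^ K * (p - 1))) := by
      have : (p : ℝ) - 1 ≠ 0 := by linarith
      rw [one_sub_div (by linarith)]
      field_simp
      ring
    rw [← e, ← hg.tsum_eq]
    refine ((summable_nat_add_iff K).2 h.summable).tsum_le_tsum (fun j => ?_) hg.summable
    rw [one_div_pow, one_div_pow, div_div, one_div_mul_one_div]
    apply one_div_le_one_div_of_le (by positivity)
    have e2 : (p : ℝ) ^ (j + K + 1) = (p : ℝ) ^ (K + 1) * (p : ℝ) ^ j := by ring
    rw [e2]
    have hj : (0 : ℝ) ≤ j := j.cast_nonneg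
    have : (K : ℝ) + 1 ≤ ((j + K : ℕ) : ℝ) + 1 := by push_cast; linarith
    calc ((K : ℝ) + 1) * (p : ℝ) ^ (K + 1) * (p : ℝ) ^ j
        = (p : ℝ) ^ (K + 1) * (p : ℝ) ^ j * ((K : ℝ) + 1) := by ring
      _ ≤ _ := mul_le_mul_of_nonneg_left this (by positivity)

/-- The part of `vW` coming from the powers of the primes up to `N`. -/
lemma sum_pr_le_vW {L : ℝ} (hL : 0 < L) {N : ℕ} (h1 : Real.log N ≤ L) (h2 : L ≤ Real.log (N + 1 : ℕ)) :
    ∑ p ∈ pr N, ∑ k ∈ Finset.range (Nat.log p N),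
      (1 / (((k : ℝ) + 1) * (p : ℝ) ^ (k + 1)) - Real.exp (-L) / L * Real.log p) ≤ vW L := by
  rw [vW_eq_sum hL h2]
  have hterm : ∀ p ∈ pr N, ∀ k ∈ Finset.range (Nat.log p N),
      1 / (((k : ℝ) + 1) * (p : ℝ) ^ (k + 1)) - Real.exp (-L) / L * Real.log p =
        vonMangoldt (p ^ (k + 1)) * wker (p ^ (k + 1)) L := by
    intro p hp k hk
    obtain ⟨hpN, hpp⟩ := mem_pr.1 hp
    have hle : p ^ (k + 1) ≤ N := Nat.pow_le_of_le_log (Nat.ne_of_gt (hpp.pos.trans_le hpN)) (Finset.mem_range.1 hk)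
    have hge : 2 ≤ p ^ (k + 1) := hpp.two_le.trans (Nat.le_self_pow (by omega) p)
    have hlog : Real.log ((p ^ (k + 1) : ℕ) : ℝ) ≤ L :=
      (Real.log_le_log (by exact_mod_cast Nat.pow_pos hpp.pos) (by exact_mod_cast hle)).trans h1
    rw [wker_of_ge hge hlog, vonMangoldt_apply_pow k.succ_ne_zero, vonMangoldt_apply_prime hpp,
      Nat.cast_pow, Real.log_pow]
    have : Real.log p ≠ 0 := (log_nat_pos hpp.two_le).ne'
    have hp0 : (p : ℝ) ≠ 0 := by exact_mod_cast hpp.ne_zero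
    push_cast
    field_simp
  rw [Finset.sum_congr rfl fun p hp => Finset.sum_congr rfl (hterm p hp), Finset.sum_sigma']
  rw [← Finset.sum_image (s := (pr N).sigma fun p => Finset.range (Nat.log p N))
    (g := fun q : (_ : ℕ) × ℕ => q.1 ^ (q.2 + 1)) (f := fun n => vonMangoldt n * wker n L)]
  · refine Finset.sum_le_sum_of_subset_of_nonneg ?_ fun n _ _ =>
      mul_nonneg vonMangoldt_nonneg (by unfold wker; exact le_max_left _ _)
    intro m hm
    obtain ⟨⟨p, k⟩, hpk, rfl⟩ := Finset.mem_image.1 hm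
    obtain ⟨hp, hk⟩ := Finset.mem_sigma.1 hpk
    obtain ⟨hpN, hpp⟩ := mem_pr.1 hp
    have hpos := hpp.pos
    simp only [Finset.mem_range] at hk ⊢
    have hle : p ^ (k + 1) ≤ N := Nat.pow_le_of_le_log (Nat.ne_of_gt (hpp.pos.trans_le hpN)) hk
    omega
  · rintro ⟨p, k⟩ hp ⟨p', k'⟩ hp' h
    simp only [Finset.coe_sigma, Set.mem_sigma_iff, Finset.mem_coe, mem_pr] at hp hp'
    obtain ⟨rfl, h2⟩ := hp.1.2.pow_inj' hp'.1.2 (by omega) (by omega) h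
    obtain rfl : k = k' := by simpa using h2
    rfl

/-- Distinct primes map to distinct values of `(p - 1) / 2`. -/
lemma card_sq_le (N : ℕ) : 2 * ((pr N).filter fun p => p * p ≤ N).card ≤ Nat.sqrt N + 1 := by
  rcases lt_or_ge (Nat.sqrt N) 2 with h | h
  · have : ((pr N).filter fun p => p * p ≤ N) = ∅ := by
      refine Finset.filter_eq_empty_iff.2 fun p hp hpN => ?_
      have := Nat.le_sqrt.2 hpN
      have := (mem_pr.1 hp).2.two_le
      omega
    rw [this]; simp
  · have hc : ((pr N).filter fun p => p * p ≤ N).card ≤ (Finset.range ((Nat.sqrt N - 1) / 2 + 1)).card := by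
      refine Finset.card_le_card_of_injOn (fun p => (p - 1) / 2) ?_ ?_
      · intro p hp
        have h1 := Nat.le_sqrt.2 (Finset.mem_filter.1 hp).2
        simp only [Finset.coe_range, Set.mem_Iio]
        omega
      · intro p hp p' hp' e
        have hp1 := (mem_pr.1 (Finset.mem_filter.1 hp).1).2
        have hp2 := (mem_pr.1 (Finset.mem_filter.1 hp').1).2
        have a1 := hp1.two_le
        have a2 := hp2.two_le
        simp only at e
        rcases hp1.eq_two_or_odd with b1 | b1 <;> rcases hp2.eq_two_or_odd with b2 | b2 <;> omega
    rw [Finset.card_range] at hc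
    omega

/-- Telescoping over odd numbers. -/
lemma sum_odd_le {N : ℕ} {y : ℝ} (hy : 3 ≤ y) (T : Finset ℕ)
    (hT : ∀ p ∈ T, p.Prime ∧ p ≤ N ∧ y < p) :
    ∑ p ∈ T, 1 / (2 * ((p : ℝ) * (p - 1))) ≤ 1 / (4 * (y - 2)) := by
  set a := ⌊(y + 1) / 2⌋₊ with ha
  have ha1 : (a : ℝ) ≤ (y + 1) / 2 := Nat.floor_le (by linarith)
  have ha2 : (y + 1) / 2 < a + 1 := Nat.lt_floor_add_one _
  have ha3 : 2 ≤ a := Nat.le_floor (by norm_num; linarith)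
  have hsub : T ⊆ (Finset.Ico a (a + N)).image fun j => 2 * j + 1 := by
    intro p hp
    obtain ⟨h1, h2, h3⟩ := hT p hp
    have h4 : 3 < p := by exact_mod_cast hy.trans_lt h3
    obtain ⟨j, rfl⟩ := h1.odd_of_ne_two (by omega)
    refine Finset.mem_image.2 ⟨j, Finset.mem_Ico.2 ⟨?_, by omega⟩, rfl⟩
    have : (a : ℝ) < j + 1 := by push_cast at h3; linarith
    have : a < j + 1 := by exact_mod_cast this
    omega
  have hterm : ∀ j ∈ Finset.Ico a (a + N), 1 / (2 * (((2 * j + 1 : ℕ) : ℝ) * ((2 * j + 1 : ℕ) - 1))) ≤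
      1 / (4 * (2 * (j : ℝ) - 1)) - 1 / (4 * (2 * ((j + 1 : ℕ) : ℝ) - 1)) := by
    intro j hj
    have hj : (2 : ℝ) ≤ j := by exact_mod_cast ha3.trans (Finset.mem_Ico.1 hj).1
    push_cast
    have p1 : 0 < 2 * (j : ℝ) - 1 := by linarith
    have p2 : 0 < 2 * (j : ℝ) + 1 := by linarith
    have e : 1 / (4 * (2 * (j : ℝ) - 1)) - 1 / (4 * (2 * ((j : ℝ) + 1) - 1)) =
        1 / (2 * ((2 * (j : ℝ) - 1) * (2 * j + 1))) := by
      rw [show 2 * ((j : ℝ) + 1) - 1 = 2 * j + 1 by ring]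
      field_simp; ring
    rw [e]
    apply one_div_le_one_div_of_le (by positivity)
    nlinarith
  have hnn : ∀ j ∈ (Finset.Ico a (a + N)).image fun j => 2 * j + 1, j ∉ T →
      (0 : ℝ) ≤ 1 / (2 * ((j : ℝ) * (j - 1))) := by
    intro j hj _
    obtain ⟨i, hi, rfl⟩ := Finset.mem_image.1 hj
    push_cast
    rw [add_sub_cancel_right]; positivity
  refine (Finset.sum_le_sum_of_subset_of_nonneg hsub hnn).trans ?_
  rw [Finset.sum_image (fun i _ j _ h => by simpa using h)]
  refine (Finset.sum_le_sum hterm).trans ?_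
  rw [Finset.sum_Ico_eq_sum_range, add_tsub_cancel_left]
  have ht := Finset.sum_range_sub' (fun k => 1 / (4 * (2 * ((a + k : ℕ) : ℝ) - 1))) N
  simp only [← add_assoc] at ht ⊢
  rw [ht]
  have h5 : (0 : ℝ) ≤ 1 / (4 * (2 * ((a + N : ℕ) : ℝ) - 1)) := by
    have : (2 : ℝ) ≤ ((a + N : ℕ) : ℝ) := by exact_mod_cast (by omega : 2 ≤ a + N)
    apply div_nonneg zero_le_one; linarith
  have h6 : 1 / (4 * (2 * ((a + 0 : ℕ) : ℝ) - 1)) ≤ 1 / (4 * (y - 2)) := by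
    apply one_div_le_one_div_of_le (by linarith)
    push_cast; linarith
  linarith

lemma sum_inv_pred_le (N : ℕ) : ∑ p ∈ pr N, 1 / ((p : ℝ) - 1) ≤ 1 + Real.log N := by
  have h := harmonic_le_one_add_log N
  refine le_trans ?_ h
  rw [harmonic]
  push_cast
  have hsub : pr N ⊆ (Finset.range N).image fun i => i + 2 := by
    intro p hp
    obtain ⟨h1, h2⟩ := mem_pr.1 hp
    have := h2.two_le
    exact Finset.mem_image.2 ⟨p - 2, Finset.mem_range.2 (by omega), by omega⟩
  refine (Finset.sum_le_sum_of_subset_of_nonneg hsub fun j hj _ => ?_).trans (le_of_eq ?_)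
  · obtain ⟨i, hi, rfl⟩ := Finset.mem_image.1 hj
    push_cast
    apply div_nonneg zero_le_one
    have : (0 : ℝ) ≤ i := i.cast_nonneg
    linarith
  · rw [Finset.sum_image (fun i _ j _ h => by simpa using h)]
    refine Finset.sum_congr rfl fun i _ => ?_
    push_cast
    rw [one_div]; congr 1; ring

end Duality
end PhiBound

/-! ### Weak duality -/

namespace PhiBound
section DualityBound
open Finset ArithmeticFunction

lemma neg_log_one_sub_le {p : ℕ} (hp : 2 ≤ p) : -Real.log (1 - 1 / (p : ℝ)) ≤ 1 / ((p : ℝ) - 1) := by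
  simpa using neg_log_le_partial hp 0

lemma neg_log_one_sub_eq {p : ℕ} (hp : 2 ≤ p) :
    -Real.log (1 - 1 / (p : ℝ)) = Real.log p - Real.log ((p : ℝ) - 1) := by
  have hp2 : (2 : ℝ) ≤ p := by exact_mod_cast hp
  rw [one_sub_div (by linarith), Real.log_div (by linarith) (by linarith)]; ring

lemma log_div_totient {n : ℕ} (hn : n ≠ 0) :
    Real.log (n / n.totient) = ∑ p ∈ n.primeFactors, -Real.log (1 - 1 / (p : ℝ)) := by
  have h := Nat.totient_eq_mul_prod_factors n
  have h' : (n.totient : ℝ) = n * ∏ p ∈ n.primeFactors, (1 - (p : ℝ)⁻¹) := by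
    have := congrArg (Rat.cast (K := ℝ)) h
    push_cast at this
    exact this
  have hne : ∀ p ∈ n.primeFactors, 1 - (p : ℝ)⁻¹ ≠ 0 := by
    intro p hp
    have : (1 : ℝ) < p := by exact_mod_cast (Nat.prime_of_mem_primeFactors hp).one_lt
    have := inv_lt_one_of_one_lt₀ this
    linarith
  have hn' : (n : ℝ) ≠ 0 := by exact_mod_cast hn
  rw [h', div_mul_cancel_left₀ hn', Real.log_inv, Real.log_prod hne, Finset.sum_neg_distrib]
  simp

lemma prod_pred_le_totient {n : ℕ} (hn : n ≠ 0) : ∏ p ∈ n.primeFactors, (p - 1) ≤ n.totient := by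
  have h1 := Nat.totient_mul_prod_primeFactors n
  have h2 := Nat.le_of_dvd (Nat.pos_of_ne_zero hn) (Nat.prod_primeFactors_dvd n)
  have h3 : 0 < ∏ p ∈ n.primeFactors, p :=
    Finset.prod_pos fun p hp => (Nat.prime_of_mem_primeFactors hp).pos
  refine Nat.le_of_mul_le_mul_right ?_ h3
  rw [h1, mul_comm n]
  exact Nat.mul_le_mul_left _ h2

lemma sum_log_pred_le {n : ℕ} (hn : n ≠ 0) :
    ∑ p ∈ n.primeFactors, Real.log ((p : ℝ) - 1) ≤ Real.log n.totient := by
  have hc : ∀ p ∈ n.primeFactors, ((p - 1 : ℕ) : ℝ) = (p : ℝ) - 1 := fun p hp =>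
    Nat.cast_pred (Nat.prime_of_mem_primeFactors hp).pos
  have hne : ∀ p ∈ n.primeFactors, (p : ℝ) - 1 ≠ 0 := fun p hp => by
    have : (1 : ℝ) < p := by exact_mod_cast (Nat.prime_of_mem_primeFactors hp).one_lt
    linarith
  rw [← Real.log_prod hne, ← Finset.prod_congr rfl hc, ← Nat.cast_prod]
  refine Real.log_le_log ?_ (by exact_mod_cast prod_pred_le_totient hn)
  have : 0 < ∏ p ∈ n.primeFactors, (p - 1) := Finset.prod_pos fun p hp => by
    have := (Nat.prime_of_mem_primeFactors hp).two_le; omega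
  exact_mod_cast this

/-- A prime above `x` contributes almost nothing to the dual problem, and only if it is `⌊x⌋ + 1`. -/
lemma large_prime_le {x : ℝ} (hx : 100 ≤ x) {T : Finset ℕ} (hT : ∀ p ∈ T, p.Prime ∧ ⌊x⌋₊ < p) :
    ∑ p ∈ T, (-Real.log (1 - 1 / (p : ℝ)) - 1 / (x * Real.log x) * Real.log ((p : ℝ) - 1)) ≤
      2.1 / x ^ 2 := by
  set L := Real.log x with hLdef
  have hx0 : 0 < x := by linarith
  have hL1 : 1 ≤ L := by
    rw [hLdef, Real.le_log_iff_exp_le hx0]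
    have := Real.exp_one_lt_d9
    norm_num at this; linarith
  have hb : ∀ p ∈ T, -Real.log (1 - 1 / (p : ℝ)) - 1 / (x * L) * Real.log ((p : ℝ) - 1) ≤
      if p = ⌊x⌋₊ + 1 then 2.1 / x ^ 2 else 0 := by
    intro p hp
    obtain ⟨h1, h2⟩ := hT p hp
    have h3 : x < p := (Nat.lt_floor_add_one x).trans_le (by exact_mod_cast h2)
    have h4 := neg_log_one_sub_le h1.two_le
    have hp1 : 0 < (p : ℝ) - 1 := by linarith
    split_ifs with h
    · have h5 : Real.log x - 1 / (x - 1) ≤ Real.log ((p : ℝ) - 1) := by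
        have h6 : Real.log (x - 1) ≤ Real.log ((p : ℝ) - 1) := Real.log_le_log (by linarith) (by linarith)
        have h7 := Real.one_sub_inv_le_log_of_pos (x := (x - 1) / x) (div_pos (by linarith) hx0)
        rw [Real.log_div (by linarith) (by linarith), inv_div] at h7
        have h8 : x / (x - 1) = 1 + 1 / (x - 1) := by
          rw [eq_comm, one_add_div (by linarith)]; congr 1; ring
        rw [h8] at h7; linarith
      have h9 : 1 / ((p : ℝ) - 1) ≤ 1 / (x - 1) := one_div_le_one_div_of_le (by linarith) (by linarith)
      have h10 : 1 / (x * L) * (L - 1 / (x - 1)) ≤ 1 / (x * L) * Real.log ((p : ℝ) - 1) :=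
        mul_le_mul_of_nonneg_left h5 (by positivity)
      have h11 : 1 / (x * L) * (L - 1 / (x - 1)) = 1 / x - 1 / (x * L) * (1 / (x - 1)) := by
        field_simp
      have hx1 : 0 < x - 1 := by linarith
      have h12 : 1 / (x * L) * (1 / (x - 1)) ≤ 1 / x * (1 / (x - 1)) := by
        refine mul_le_mul_of_nonneg_right ?_ (by positivity)
        exact one_div_le_one_div_of_le hx0 (by nlinarith)
      have h13 : 1 / (x - 1) - 1 / x + 1 / x * (1 / (x - 1)) ≤ 2.1 / x ^ 2 := by
        have e : 1 / (x - 1) - 1 / x + 1 / x * (1 / (x - 1)) = 2 / (x * (x - 1)) := by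
          field_simp; ring
        rw [e, div_le_div_iff₀ (by positivity) (by positivity)]
        norm_num; nlinarith
      linarith
    · have h5 : x ≤ (p : ℝ) - 1 := by
        have : ⌊x⌋₊ + 2 ≤ p := by omega
        have : ((⌊x⌋₊ + 2 : ℕ) : ℝ) ≤ p := by exact_mod_cast this
        push_cast at this
        linarith [Nat.lt_floor_add_one x]
      have h6 := hdiv_anti (u := L) (v := Real.log ((p : ℝ) - 1)) (by linarith)
        (Real.log_le_log hx0 h5)
      have hl : 0 < Real.log ((p : ℝ) - 1) := Real.log_pos (by linarith)
      rw [Real.exp_neg, Real.exp_neg, Real.exp_log hp1, hLdef, Real.exp_log hx0, ← hLdef,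
        div_le_iff₀ hl] at h6
      have e : x⁻¹ / L * Real.log ((p : ℝ) - 1) = 1 / (x * L) * Real.log ((p : ℝ) - 1) := by
        field_simp
      rw [e, ← one_div] at h6
      linarith
  refine (Finset.sum_le_sum hb).trans ?_
  rw [Finset.sum_ite_eq']
  split_ifs
  · exact le_rfl
  · positivity

/-- Comparison of the term of a small prime `p ≤ x` with its powers up to `x`. The last term bounds the tail of
the logarithmic series, which starts at `p ^ 2` if `p ^ 2` exceeds `x`. -/
lemma small_prime_le {x : ℝ} (hx : 100 ≤ x) {p : ℕ} (hp : p ∈ pr ⌊x⌋₊) :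
    -Real.log (1 - 1 / (p : ℝ)) - 1 / (x * Real.log x) * Real.log ((p : ℝ) - 1) ≤
      ∑ k ∈ Finset.range (Nat.log p ⌊x⌋₊),
        (1 / (((k : ℝ) + 1) * (p : ℝ) ^ (k + 1)) - 1 / (x * Real.log x) * Real.log p) +
      1 / (x * Real.log x) * (1 / ((p : ℝ) - 1)) +
      if p * p ≤ ⌊x⌋₊ then 5 / (3 * x) else 1 / (2 * ((p : ℝ) * (p - 1))) := by
  obtain ⟨h1, h2⟩ := mem_pr.1 hp
  set L := Real.log x with hLdef
  have hx0 : 0 < x := by linarith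
  have hL : 0 < L := Real.log_pos (by linarith)
  set N := ⌊x⌋₊ with hN
  have hNx : (N : ℝ) ≤ x := Nat.floor_le hx0.le
  have hxN : x < N + 1 := Nat.lt_floor_add_one x
  have hp2 : (2 : ℝ) ≤ p := by exact_mod_cast h2.two_le
  set K := Nat.log p N with hK
  set l := 1 / (x * L) with hl
  have hl0 : 0 < l := by positivity
  have a1 := neg_log_le_partial h2.two_le K
  have a2 := neg_log_one_sub_le h2.two_le
  rw [neg_log_one_sub_eq h2.two_le] at a2
  have a3 := mul_le_mul_of_nonneg_left a2 hl0.le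
  rw [Finset.sum_sub_distrib, Finset.sum_const, Finset.card_range, nsmul_eq_mul]
  have hlogp : 0 < Real.log p := log_nat_pos h2.two_le
  suffices h : 1 / (((K : ℝ) + 1) * ((p : ℝ) ^ K * (p - 1))) + l * ((K - 1) * Real.log p) ≤
      if p * p ≤ N then 5 / (3 * x) else 1 / (2 * ((p : ℝ) * (p - 1))) by
    have e : l * ((K - 1) * Real.log p) = K * (l * Real.log p) - l * Real.log p := by ring
    rw [e] at h
    rw [mul_sub] at a3
    linarith
  have hNne : N ≠ 0 := by have := h2.pos; omega
  have hpK : p ^ K ≤ N := Nat.pow_log_le_self p hNne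
  have hpK1 : N < p ^ (K + 1) := Nat.lt_pow_succ_log_self h2.one_lt N
  split_ifs with h
  · have hK2 : 2 ≤ K := Nat.le_log_of_pow_le h2.one_lt (by rw [pow_two]; exact h)
    have hK2' : (2 : ℝ) ≤ K := by exact_mod_cast hK2
    have b1 : x ≤ (p : ℝ) ^ K * p := by
      rw [← pow_succ]
      have : ((N + 1 : ℕ) : ℝ) ≤ ((p ^ (K + 1) : ℕ) : ℝ) := by exact_mod_cast hpK1
      push_cast at this
      linarith
    have b2 : 1 / (((K : ℝ) + 1) * ((p : ℝ) ^ K * (p - 1))) ≤ 2 / (3 * x) := by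
      have hpk0 : 0 < (p : ℝ) ^ K := by positivity
      have c1 : 0 < (p : ℝ) - 1 := by linarith
      have c2 : x ≤ (p : ℝ) ^ K * (p - 1) * 2 := by nlinarith
      rw [div_le_div_iff₀ (by positivity) (by positivity)]
      nlinarith [mul_nonneg (by linarith : (0 : ℝ) ≤ K - 2) (by positivity : 0 ≤ (p : ℝ) ^ K * (p - 1))]
    have b3 : l * ((K - 1) * Real.log p) ≤ 1 / x := by
      have d1 : (K : ℝ) * Real.log p ≤ L := by
        rw [← Real.log_pow]
        exact Real.log_le_log (by positivity) (le_trans (by exact_mod_cast hpK) hNx)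
      have d2 : l * ((K - 1) * Real.log p) ≤ l * L := mul_le_mul_of_nonneg_left (by linarith) hl0.le
      refine d2.trans (le_of_eq ?_)
      rw [hl]; field_simp
    have e : 5 / (3 * x) = 2 / (3 * x) + 1 / x := by field_simp; norm_num
    linarith
  · have hK1 : K = 1 := by
      have e1 : 1 ≤ K := Nat.le_log_of_pow_le h2.one_lt (by simpa using h1)
      have e2 : K < 2 := Nat.log_lt_of_lt_pow hNne (by rw [pow_two]; omega)
      omega
    rw [hK1]
    norm_num

/-- The error terms for `s = √x`: the tails of the logarithmic series for primes up to `√x` and beyond it, the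
replacement of `log p` by `log (p - 1)`, and the primes beyond `x`. -/
lemma error_budget {s x : ℝ} (hs90 : 90 ≤ s) (hxs : x = s ^ 2) :
    5 / (6 * x) * (s + 1) + 1 / (4 * (s - 2)) + 10 / 9 / x + 2.1 / x ^ 2 ≤ 1.111 / s := by
  have hs0 : 0 < s := by linarith
  have hx0 : 0 < x := by rw [hxs]; positivity
  have e1 : 1 / (4 * (s - 2)) ≤ 0.2557 / s := by
    rw [div_le_div_iff₀ (by linarith) hs0]; norm_num; linarith
  have e2 : 5 / (6 * x) * (s + 1) = 5 / 6 / s + 5 / 6 / x := by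
    rw [hxs]; field_simp
  have e3 : 1 / x ≤ 1 / 90 / s := by
    rw [hxs, div_div]
    apply one_div_le_one_div_of_le (by positivity); nlinarith
  have e4 : 2.1 / x ^ 2 ≤ 0.01 / x := by
    rw [div_le_div_iff₀ (by positivity) hx0]
    have : 210 ≤ x := by nlinarith
    norm_num; nlinarith
  have f1 : 5 / 6 / x + 10 / 9 / x + 0.01 / x = (35 / 18 + 0.01) * (1 / x) := by field_simp; norm_num
  have f2 : 1.111 / s = 5 / 6 / s + 0.2557 / s + (1.111 - 0.2557 - 5 / 6) * (1 / s) := by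
    field_simp; norm_num
  have f3 : (35 / 18 + 0.01 : ℝ) * (1 / 90 / s) ≤ (1.111 - 0.2557 - 5 / 6) * (1 / s) := by
    rw [div_eq_mul_one_div (1 / 90 : ℝ), ← mul_assoc]
    refine mul_le_mul_of_nonneg_right (by norm_num) (by positivity)
  have f4 := mul_le_mul_of_nonneg_left e3 (by norm_num : (0 : ℝ) ≤ 35 / 18 + 0.01)
  linarith

/-- Weak duality with the multiplier `1 / (x log x)`, `x = log φ(n)`. A prime `p ≤ x` contributes a nonnegative
amount to the dual objective, so all of them may be included; primes beyond `x` contribute next to nothing.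
What results is the prime power sum `vW` up to a small error. -/
lemma log_ratio_le {n : ℕ} (hn : n ≠ 0) {L : ℝ} (hL : L = Real.log (Real.log n.totient))
    (hL9 : 9 ≤ L) : Real.log (n / n.totient) ≤
      1 / L + vW L + 1.111 * Real.exp (-(L / 2)) := by
  set x := Real.log n.totient with hx
  have he9 : (90 : ℝ) ≤ Real.exp (9 / 2) := by
    rw [show (9 / 2 : ℝ) = 9 * (1 / 2) by norm_num, Real.exp_mul, ← Real.sqrt_eq_rpow]
    refine Real.le_sqrt_of_sq_le ?_
    rw [show (9 : ℝ) = (9 : ℕ) * 1 by norm_num, Real.exp_nat_mul]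
    have h := Real.exp_one_gt_d9
    have h2 : (2.7182 : ℝ) ≤ Real.exp 1 := by norm_num at h ⊢; linarith
    exact le_trans (by norm_num) (pow_le_pow_left₀ (by norm_num) h2 9)
  set s := Real.exp (L / 2) with hs
  have hs90 : 90 ≤ s := he9.trans (Real.exp_le_exp.2 (by linarith))
  have hx0 : 0 < x := by
    by_contra h
    have hx00 : 0 ≤ x := Real.log_natCast_nonneg _
    have : x = 0 := by linarith
    rw [this, Real.log_zero] at hL
    linarith
  have hxs : x = s ^ 2 := by
    rw [hs, ← Real.exp_nat_mul]
    rw [show ((2 : ℕ) : ℝ) * (L / 2) = L by push_cast; ring, hL, Real.exp_log hx0]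
  have hx100 : 100 ≤ x := by nlinarith
  set N := ⌊x⌋₊ with hN
  have hNx : (N : ℝ) ≤ x := Nat.floor_le hx0.le
  have hxN : x < N + 1 := Nat.lt_floor_add_one x
  have hN1 : 100 ≤ N := Nat.le_floor (by exact_mod_cast hx100)
  set l := 1 / (x * L) with hl
  have hl0 : 0 < l := by positivity
  have hLe : Real.exp (-L) / L = l := by
    rw [hL, Real.exp_neg, Real.exp_log hx0, ← hL, hl]; field_simp
  have hlogN : Real.log N ≤ L := by
    rw [hL]; exact Real.log_le_log (by exact_mod_cast (by omega : 0 < N)) hNx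
  have hA := sum_pr_le_vW (L := L) (by linarith) hlogN
    (by rw [hL]; push_cast; exact Real.log_le_log hx0 hxN.le)
  rw [hLe] at hA
  -- the objective is `l * x + ∑ q p`, where `l * x = 1 / L`
  set q : ℕ → ℝ := fun p => -Real.log (1 - 1 / (p : ℝ)) - l * Real.log ((p : ℝ) - 1) with hq
  have h1 : Real.log (n / n.totient) ≤ 1 / L + ∑ p ∈ n.primeFactors, q p := by
    rw [log_div_totient hn]
    simp only [hq, Finset.sum_sub_distrib, ← Finset.mul_sum]
    have := mul_le_mul_of_nonneg_left (sum_log_pred_le hn) hl0.le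
    have e : l * Real.log n.totient = 1 / L := by
      rw [← hx, hl]; field_simp
    linarith
  rw [← Finset.sum_filter_add_sum_filter_not n.primeFactors (fun p => p ≤ N)] at h1
  have h2 : ∑ p ∈ n.primeFactors with ¬ p ≤ N, q p ≤ 2.1 / x ^ 2 := by
    have := large_prime_le hx100 (T := n.primeFactors.filter fun p => ¬ p ≤ N) (fun p hp => by
      obtain ⟨a, b⟩ := Finset.mem_filter.1 hp
      exact ⟨Nat.prime_of_mem_primeFactors a, not_le.1 b⟩)
    rwa [← hL] at this
  have h3 : ∑ p ∈ n.primeFactors with p ≤ N, q p ≤ ∑ p ∈ pr N, q p := by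
    refine Finset.sum_le_sum_of_subset_of_nonneg (fun p hp => ?_) fun p hp _ => ?_
    · obtain ⟨a, b⟩ := Finset.mem_filter.1 hp
      exact mem_pr.2 ⟨b, Nat.prime_of_mem_primeFactors a⟩
    · obtain ⟨a, b⟩ := mem_pr.1 hp
      have hp2 : (2 : ℝ) ≤ p := by exact_mod_cast b.two_le
      have hp0 : (0 : ℝ) < p := by linarith
      have c1 : 1 / (p : ℝ) ≤ -Real.log (1 - 1 / (p : ℝ)) := by
        have := Real.log_le_sub_one_of_pos (x := 1 - 1 / (p : ℝ)) (by
          rw [sub_pos, div_lt_one hp0]; linarith)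
        linarith
      have c2 : Real.log ((p : ℝ) - 1) ≤ Real.log p := Real.log_le_log (by linarith) (by linarith)
      have hlp := log_nat_pos b.two_le
      have hpx : Real.log p ≤ L :=
        (Real.log_le_log hp0 (by exact_mod_cast a)).trans hlogN
      have c3 := hdiv_anti hlp hpx
      rw [hLe, hdiv_log b.two_le, ← div_div, le_div_iff₀ hlp] at c3
      have c4 := mul_le_mul_of_nonneg_left c2 hl0.le
      simp only [hq]; linarith
  have h4 : ∑ p ∈ pr N, q p ≤ vW L + l * (1 + Real.log N) +
      ∑ p ∈ pr N, if p * p ≤ N then 5 / (3 * x) else 1 / (2 * ((p : ℝ) * (p - 1))) := by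
    have := Finset.sum_le_sum fun p hp => small_prime_le hx100 (p := p) hp
    rw [← hL, ← hl, ← hN, Finset.sum_add_distrib, Finset.sum_add_distrib, ← Finset.mul_sum] at this
    have h5 := mul_le_mul_of_nonneg_left (sum_inv_pred_le N) hl0.le
    linarith
  have h5 : ∑ p ∈ pr N, (if p * p ≤ N then 5 / (3 * x) else 1 / (2 * ((p : ℝ) * (p - 1)))) ≤
      5 / (6 * x) * (s + 1) + 1 / (4 * (s - 2)) := by
    rw [Finset.sum_ite, Finset.sum_const, nsmul_eq_mul]
    refine add_le_add ?_ ?_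
    · have c := card_sq_le N
      have hsq : (Nat.sqrt N : ℝ) ≤ s := by
        have : ((Nat.sqrt N * Nat.sqrt N : ℕ) : ℝ) ≤ N := by exact_mod_cast Nat.sqrt_le N
        push_cast at this
        have h0 : (0 : ℝ) ≤ Nat.sqrt N := Nat.cast_nonneg _
        nlinarith
      have c' : (2 : ℝ) * (((pr N).filter fun p => p * p ≤ N).card : ℝ) ≤ Nat.sqrt N + 1 := by
        exact_mod_cast c
      have e : 5 / (3 * x) = 5 / (6 * x) * 2 := by field_simp; norm_num
      rw [e]
      have : 0 < 5 / (6 * x) := by positivity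
      nlinarith
    · refine sum_odd_le (N := N) (by linarith) _ fun p hp => ?_
      obtain ⟨a, b⟩ := Finset.mem_filter.1 hp
      obtain ⟨a1, a2⟩ := mem_pr.1 a
      refine ⟨a2, a1, ?_⟩
      have : ((N + 1 : ℕ) : ℝ) ≤ ((p * p : ℕ) : ℝ) := by exact_mod_cast not_le.1 b
      push_cast at this
      have h0 : (0 : ℝ) ≤ p := Nat.cast_nonneg _
      nlinarith
  have h6 : l * (1 + Real.log N) ≤ 10 / 9 / x := by
    have : l * (1 + Real.log N) ≤ l * (10 / 9 * L) := mul_le_mul_of_nonneg_left (by linarith) hl0.le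
    refine this.trans (le_of_eq ?_)
    rw [hl]; field_simp
  have h7 := error_budget hs90 hxs
  have h8 : 1.111 * Real.exp (-(L / 2)) = 1.111 / s := by rw [Real.exp_neg, ← hs]; rfl
  rw [h8]
  linarith

end DualityBound
end PhiBound

/-! ### Large values of `φ(n)` -/

namespace PhiBound
section Asymptotic
open Finset

lemma exp_gamma_bounds : 1.78102 < Real.exp Real.eulerMascheroniConstant ∧
    Real.exp Real.eulerMascheroniConstant < 1.7811 := by
  obtain ⟨h1, h2⟩ := gamma_bounds
  constructor
  · refine lt_of_lt_of_le ?_ (Real.exp_le_exp.2 h1.le)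
    refine lt_of_lt_of_le ?_ (Real.sum_le_exp_of_nonneg (by norm_num) 9)
    norm_num [Finset.sum_range_succ, Nat.factorial]
  · refine lt_of_le_of_lt (Real.exp_le_exp.2 h2.le) ?_
    refine lt_of_le_of_lt (Real.exp_bound' (by norm_num) (by norm_num) (n := 9) (by norm_num)) ?_
    norm_num [Finset.sum_range_succ, Nat.factorial]

set_option exponentiation.threshold 1000 in
lemma log_5760_bounds : 8.6586 < Real.log 5760 ∧ Real.log 5760 < 8.6594 := by
  have l1 := Real.log_two_gt_d9
  have l2 := Real.log_two_lt_d9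
  norm_num at l1 l2
  constructor
  · have h : Real.log ((2 : ℝ) ^ 762) ≤ Real.log ((5760 : ℝ) ^ 61) :=
      Real.log_le_log (by norm_num) (by norm_num)
    rw [Real.log_pow, Real.log_pow] at h
    push_cast at h
    norm_num; linarith
  · have h : Real.log ((5760 : ℝ) ^ 63) ≤ Real.log ((2 : ℝ) ^ 787) :=
      Real.log_le_log (by norm_num) (by norm_num)
    rw [Real.log_pow, Real.log_pow] at h
    push_cast at h
    norm_num; linarith

lemma log_log_5760_bounds : 2.1585 < Real.log (Real.log 5760) ∧ Real.log (Real.log 5760) < 2.1587 := by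
  obtain ⟨h1, h2⟩ := log_5760_bounds
  have e1 := Real.exp_one_gt_d9
  have e2 := Real.exp_one_lt_d9
  have h0 : (0 : ℝ) < Real.log 5760 := by norm_num at h1 ⊢; linarith
  constructor
  · rw [Real.lt_log_iff_exp_lt h0]
    refine lt_of_le_of_lt ?_ h1
    have a : Real.exp 2.1585 = Real.exp 1 ^ 2 * Real.exp 0.1585 := by
      rw [← Real.exp_nat_mul, ← Real.exp_add]; norm_num
    have b : Real.exp 0.1585 ≤ 1.171753 := by
      refine (Real.exp_bound' (by norm_num) (by norm_num) (n := 6) (by norm_num)).trans ?_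
      norm_num [Finset.sum_range_succ, Nat.factorial]
    have c : Real.exp 1 ^ 2 ≤ 2.7182818286 ^ 2 := pow_le_pow_left₀ (Real.exp_pos 1).le e2.le 2
    rw [a]
    exact (mul_le_mul c b (Real.exp_pos _).le (by norm_num)).trans (by norm_num)
  · rw [Real.log_lt_iff_lt_exp h0]
    refine lt_of_lt_of_le h2 ?_
    have a : Real.exp 2.1587 = Real.exp 1 ^ 2 * Real.exp 0.1587 := by
      rw [← Real.exp_nat_mul, ← Real.exp_add]; norm_num
    have b : 1.171986 ≤ Real.exp 0.1587 := by
      refine le_trans ?_ (Real.sum_le_exp_of_nonneg (by norm_num) 7)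
      norm_num [Finset.sum_range_succ, Nat.factorial]
    have c : 2.7182818283 ^ 2 ≤ Real.exp 1 ^ 2 := pow_le_pow_left₀ (by norm_num) e1.le 2
    rw [a]
    exact le_trans (by norm_num) (mul_le_mul c b (by norm_num) (by positivity))

/-- The constant of the theorem: the one that makes `30030` a case of equality. -/
noncomputable def cc : ℝ := Real.log (Real.log 5760) *
  (30030 / 5760 - Real.exp Real.eulerMascheroniConstant * Real.log (Real.log 5760))

/-- The right-hand side of the inequality, as a function of `t = log (log φ(n))`. -/
noncomputable def ff (t : ℝ) : ℝ := Real.exp Real.eulerMascheroniConstant * t + cc / t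

lemma cc_bounds : 2.9545 < cc ∧ cc < 2.9565 := by
  obtain ⟨h1, h2⟩ := log_log_5760_bounds
  obtain ⟨h3, h4⟩ := exp_gamma_bounds
  unfold cc
  set t := Real.log (Real.log 5760)
  set e := Real.exp Real.eulerMascheroniConstant
  norm_num at h1 h2 h3 h4 ⊢
  constructor
  · have : e * t ^ 2 ≤ 17811 / 10000 * t ^ 2 := mul_le_mul_of_nonneg_right h4.le (sq_nonneg t)
    nlinarith
  · have : 178102 / 100000 * t ^ 2 ≤ e * t ^ 2 :=
      mul_le_mul_of_nonneg_right (by norm_num; linarith) (sq_nonneg t)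
    nlinarith

/-- `L ^ 2 * exp (-L / 2)` decreases for `L ≥ 4`. -/
lemma sq_mul_exp_anti {a L : ℝ} (ha : 4 ≤ a) (hL : a ≤ L) :
    L ^ 2 * Real.exp (-(L / 2)) ≤ a ^ 2 * Real.exp (-(a / 2)) := by
  have ha0 : 0 < a := by linarith
  have h1 : L / a ≤ Real.exp ((L - a) / 4) := by
    have := Real.add_one_le_exp ((L - a) / 4)
    refine le_trans ?_ this
    rw [div_le_iff₀ ha0]; nlinarith
  have h2 : (L / a) ^ 2 ≤ Real.exp ((L - a) / 4) ^ 2 :=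
    pow_le_pow_left₀ (div_nonneg (by linarith) ha0.le) h1 2
  rw [← Real.exp_nat_mul, div_pow, div_le_iff₀ (by positivity)] at h2
  have h3 : Real.exp (-(a / 2)) = Real.exp (((2 : ℕ) : ℝ) * ((L - a) / 4)) * Real.exp (-(L / 2)) := by
    rw [← Real.exp_add]; congr 1; push_cast; ring
  rw [h3]
  nlinarith [mul_le_mul_of_nonneg_right h2 (Real.exp_pos (-(L / 2))).le]

lemma exp_neg_half_le {m : ℕ} {b : ℝ} (hb : 0 < b) (h : b ≤ 2.7182 ^ m) {a : ℝ} (ha : a / 2 = m) :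
    Real.exp (-(a / 2)) ≤ 1 / b := by
  rw [ha, Real.exp_neg, one_div]
  apply inv_anti₀ hb
  refine h.trans ?_
  rw [← mul_one (m : ℝ), Real.exp_nat_mul]
  refine pow_le_pow_left₀ (by norm_num) ?_ m
  have := Real.exp_one_gt_d9
  norm_num at this ⊢; linarith

lemma exp_nine_halves : Real.exp (-(9 / 2)) ≤ 1 / 90 := by
  have a : Real.exp (-(9 / 2)) = Real.exp (-4) * Real.exp (-(1 / 2)) := by
    rw [← Real.exp_add]; norm_num
  have b := exp_neg_half_le (m := 9) (b := 8100) (by norm_num) (by norm_num) (a := 18) (by norm_num)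
  have c : Real.exp (-(9 / 2)) ^ 2 = Real.exp (-(18 / 2)) := by
    rw [← Real.exp_nat_mul]; norm_num
  rw [← c] at b
  refine le_of_sq_le_sq ?_ (by norm_num)
  linarith

/-- The numerical inequality between the zero sum and the constant of the theorem. -/
lemma budget {L : ℝ} (hL : 9 ≤ L) :
    2 * (1 + L) * Zsum L + 1.117 * (L ^ 2 * Real.exp (-(L / 2))) + 1.362 / L ^ 2 ≤ 1.65 := by
  have hZ := Zsum_le (by linarith : (7 : ℝ) ≤ L)
  have hZ2 := one_add_mul_Zsum_le (by linarith : (7 : ℝ) ≤ L)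
  have hZ0 := Zsum_nonneg L
  have hd : 1.362 / L ^ 2 ≤ 0.017 := by
    rw [div_le_iff₀ (by positivity)]; norm_num; nlinarith
  rcases le_total L 10 with h | h
  · have e9 := exp_nine_halves
    have h1 := sq_mul_exp_anti (by norm_num : (4 : ℝ) ≤ 9) hL
    norm_num at *
    nlinarith
  rcases le_total L 14 with h' | h'
  · have e := exp_neg_half_le (m := 5) (b := 148) (by norm_num) (by norm_num) (a := 10) (by norm_num)
    have h1 := sq_mul_exp_anti (by norm_num : (4 : ℝ) ≤ 10) h
    norm_num at *
    nlinarith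
  rcases le_total L 22 with h'' | h''
  · have e := exp_neg_half_le (m := 7) (b := 1000) (by norm_num) (by norm_num) (a := 14) (by norm_num)
    have h1 := sq_mul_exp_anti (by norm_num : (4 : ℝ) ≤ 14) h'
    norm_num at *
    nlinarith
  · have e := exp_neg_half_le (m := 11) (b := 50000) (by norm_num) (by norm_num) (a := 22) (by norm_num)
    have h1 := sq_mul_exp_anti (by norm_num : (4 : ℝ) ≤ 22) h''
    have hd : 1.362 / L ^ 2 ≤ 0.003 := by
      rw [div_le_iff₀ (by positivity)]; norm_num; nlinarith
    norm_num at *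
    nlinarith

/-- The inequality for `log (log φ(n)) ≥ 9`, in the stronger form
`n / φ(n) ≤ e^γ L (1 + 1.65 / L²)`, where `1.65 e^γ < c`. -/
lemma ratio_le_of_nine_le {n : ℕ} (hn : n ≠ 0) {L : ℝ} (hL : L = Real.log (Real.log n.totient))
    (hL9 : 9 ≤ L) : (n : ℝ) / n.totient ≤ ff L := by
  have h1 := log_ratio_le hn hL hL9
  have hL0 : 0 < L := by linarith
  have h2 := vV_le hL0
  have h3 := budget hL9
  obtain ⟨hc, -⟩ := cc_bounds
  obtain ⟨-, he⟩ := exp_gamma_bounds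
  set y := Real.exp (-(L / 2)) with hy
  have hy0 : 0 < y := Real.exp_pos _
  have hy1 : y ≤ 1 / 90 := (Real.exp_le_exp.2 (by linarith : -(L / 2) ≤ -(9 / 2))).trans exp_nine_halves
  have hyy : Real.exp (-L) = y ^ 2 := by
    rw [hy, ← Real.exp_nat_mul]; congr 1; push_cast; ring
  rw [hyy] at h2
  unfold vV at h2
  -- everything is measured in units of `1 / L ^ 2`
  have h4 : 2 * (Zsum L + 2.1 * y ^ 2) * kk L + 1.111 * y ≤ 1.65 / L ^ 2 - 1.362 / L ^ 4 := by
    have e : 1.65 / L ^ 2 - 1.362 / L ^ 4 = (1.65 - 1.362 / L ^ 2) / L ^ 2 := by field_simp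
    rw [e, le_div_iff₀ (by positivity)]
    have e2 : (2 * (Zsum L + 2.1 * y ^ 2) * kk L + 1.111 * y) * L ^ 2 =
        2 * (1 + L) * Zsum L + 4.2 * (1 + L) * y ^ 2 + 1.111 * (L ^ 2 * y) := by
      unfold kk; field_simp; ring
    rw [e2]
    have e3 : 4.2 * (1 + L) * y ^ 2 ≤ 0.006 * (L ^ 2 * y) := by
      have : 4.2 * (1 + L) * y ≤ 0.006 * L ^ 2 := by
        norm_num at *; nlinarith
      nlinarith
    linarith
  have h5 : Real.log (n / n.totient) ≤
      Real.eulerMascheroniConstant + Real.log L + Real.log (1 + 1.65 / L ^ 2) := by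
    have : 1.65 / L ^ 2 - 1.362 / L ^ 4 ≤ Real.log (1 + 1.65 / L ^ 2) := by
      have a := Real.le_log_one_add_of_nonneg (x := 1.65 / L ^ 2) (by positivity)
      refine le_trans ?_ a
      rw [le_div_iff₀ (by positivity)]
      field_simp
      norm_num
      nlinarith [sq_nonneg L]
    linarith
  have hpos : (0 : ℝ) < (n : ℝ) / n.totient := by
    have : 0 < n.totient := Nat.totient_pos.2 (Nat.pos_of_ne_zero hn)
    have : 0 < n := Nat.pos_of_ne_zero hn
    positivity
  have h6 : (n : ℝ) / n.totient ≤
      Real.exp Real.eulerMascheroniConstant * L * (1 + 1.65 / L ^ 2) := by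
    rw [← Real.exp_log hpos]
    refine (Real.exp_le_exp.2 h5).trans ?_
    rw [Real.exp_add, Real.exp_add, Real.exp_log hL0, Real.exp_log (by positivity)]
  refine h6.trans ?_
  unfold ff
  have : Real.exp Real.eulerMascheroniConstant * L * (1 + 1.65 / L ^ 2) =
      Real.exp Real.eulerMascheroniConstant * L + Real.exp Real.eulerMascheroniConstant * 1.65 / L := by
    field_simp
  rw [this]
  gcongr
  norm_num at *; linarith

end Asymptotic
end PhiBound

/-! ### Verification by blocks of primes -/

namespace PhiBound
section FiniteCheck
open Finset

/-- Rearrangement: `A` has at most as many elements as `B`, and a threshold `c` separates the values of `f`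
on `A \ B` from those on `B \ A`. -/
lemma sum_le_sum_of_threshold {A B : Finset ℕ} {f : ℕ → ℝ} {c : ℝ} (hc : 0 ≤ c)
    (hcard : A.card ≤ B.card) (hA : ∀ a ∈ A, a ∉ B → f a ≤ c) (hB : ∀ b ∈ B, b ∉ A → c ≤ f b) :
    ∑ a ∈ A, f a ≤ ∑ b ∈ B, f b := by
  have h1 : ∑ a ∈ A \ B, f a ≤ (A \ B).card * c := by
    rw [← nsmul_eq_mul]
    exact Finset.sum_le_card_nsmul _ _ _ fun a ha =>
      hA a (Finset.mem_sdiff.1 ha).1 (Finset.mem_sdiff.1 ha).2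
  have h2 : (B \ A).card * c ≤ ∑ b ∈ B \ A, f b := by
    rw [← nsmul_eq_mul]
    exact Finset.card_nsmul_le_sum _ _ _ fun a ha =>
      hB a (Finset.mem_sdiff.1 ha).1 (Finset.mem_sdiff.1 ha).2
  have h3 : (A \ B).card ≤ (B \ A).card := by
    have a1 := Finset.card_sdiff_add_card_inter A B
    have a2 := Finset.card_sdiff_add_card_inter B A
    rw [Finset.inter_comm] at a2
    omega
  have h4 : ((A \ B).card : ℝ) * c ≤ (B \ A).card * c :=
    mul_le_mul_of_nonneg_right (by exact_mod_cast h3) hc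
  rw [← Finset.sum_inter_add_sum_sdiff A B, ← Finset.sum_inter_add_sum_sdiff B A, Finset.inter_comm B A]
  linarith

/-- `log (p / (p - 1))`. -/
noncomputable def gl (q : ℕ) : ℝ := Real.log q - Real.log ((q : ℝ) - 1)

lemma gl_nonneg {q : ℕ} (hq : 2 ≤ q) : 0 ≤ gl q := by
  have h : (2 : ℝ) ≤ q := by exact_mod_cast hq
  have := Real.log_le_log (x := (q : ℝ) - 1) (y := q) (by linarith) (by linarith)
  unfold gl; linarith

lemma gl_anti {p q : ℕ} (hp : 2 ≤ p) (hpq : p ≤ q) : gl q ≤ gl p := by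
  have h1 : (2 : ℝ) ≤ p := by exact_mod_cast hp
  have h2 : (p : ℝ) ≤ q := by exact_mod_cast hpq
  unfold gl
  rw [← Real.log_div (by linarith) (by linarith), ← Real.log_div (by linarith) (by linarith)]
  refine Real.log_le_log (div_pos (by linarith) (by linarith)) ?_
  rw [div_le_div_iff₀ (by linarith) (by linarith)]
  nlinarith

lemma log_ratio_eq_sum_gl {n : ℕ} (hn : n ≠ 0) :
    Real.log (n / n.totient) = ∑ p ∈ n.primeFactors, gl p := by
  rw [log_div_totient hn]
  exact Finset.sum_congr rfl fun p hp =>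
    neg_log_one_sub_eq (Nat.prime_of_mem_primeFactors hp).two_le

/-- A finite set of integers in `[2, y)` that contains all primes below `y`. -/
def IsSieve (y : ℕ) (Q : Finset ℕ) : Prop :=
  (∀ q ∈ Q, 2 ≤ q ∧ q < y) ∧ ∀ p : ℕ, p.Prime → p < y → p ∈ Q

/-- Rearrangement: the `i`-th element of `Q` is at most the `i`-th prime factor of `n`, and `q / (q - 1)`
decreases with `q`. -/
lemma log_ratio_le_of_card_le {n y : ℕ} {Q : Finset ℕ} (hn : n ≠ 0) (hy : 2 ≤ y) (hQ : IsSieve y Q)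
    (hcard : n.primeFactors.card ≤ Q.card) : Real.log (n / n.totient) ≤ ∑ q ∈ Q, gl q := by
  rw [log_ratio_eq_sum_gl hn]
  refine sum_le_sum_of_threshold (gl_nonneg hy) hcard (fun a ha haQ => ?_) fun b hb _ => ?_
  · refine gl_anti hy ?_
    by_contra h
    exact haQ (hQ.2 a (Nat.prime_of_mem_primeFactors ha) (not_le.1 h))
  · exact gl_anti (hQ.1 b hb).1 (hQ.1 b hb).2.le

/-- Rearrangement for the increasing function `log (q - 1)`. -/
lemma le_log_totient_of_card_le {n y : ℕ} {Q : Finset ℕ} (hn : n ≠ 0) (hy : 2 ≤ y) (hQ : IsSieve y Q)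
    (hcard : Q.card ≤ n.primeFactors.card) :
    ∑ q ∈ Q, Real.log ((q : ℝ) - 1) ≤ Real.log n.totient := by
  refine le_trans ?_ (sum_log_pred_le hn)
  have hy' : (2 : ℝ) ≤ y := by exact_mod_cast hy
  refine sum_le_sum_of_threshold (c := Real.log ((y : ℝ) - 1)) (Real.log_nonneg (by linarith)) hcard
    (fun a ha _ => ?_) fun b hb hbQ => ?_
  · obtain ⟨h1, h2⟩ := hQ.1 a ha
    have h1' : (2 : ℝ) ≤ a := by exact_mod_cast h1
    have h2' : (a : ℝ) ≤ y := by exact_mod_cast h2.le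
    exact Real.log_le_log (by linarith) (by linarith)
  · have : y ≤ b := by
      by_contra h
      exact hbQ (hQ.2 b (Nat.prime_of_mem_primeFactors hb) (not_le.1 h))
    have : (y : ℝ) ≤ b := by exact_mod_cast this
    exact Real.log_le_log (by linarith) (by linarith)

lemma isSieve_insert {y : ℕ} {Q : Finset ℕ} (hy : 2 ≤ y) (hQ : IsSieve y Q) :
    IsSieve (y + 1) (insert y Q) := by
  refine ⟨fun q hq => ?_, fun p hp hpy => ?_⟩
  · rcases Finset.mem_insert.1 hq with rfl | h
    · omega
    · have := hQ.1 q h; omega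
  · rcases Nat.lt_succ_iff_lt_or_eq.1 hpy with h | h
    · exact Finset.mem_insert_of_mem (hQ.2 p hp h)
    · rw [h]; exact Finset.mem_insert_self y Q

lemma ff_ge {t : ℝ} (ht : 0 < t) : 1.78102 * t + 2.9545 / t ≤ ff t := by
  unfold ff
  have h1 := exp_gamma_bounds.1
  have h2 := cc_bounds.1
  gcongr

/-- The minimum of `1.78102 t + 2.9545 / t` lies below `1.3`, so its value at a lower bound `s ≥ 1.3` of `t`
is a lower bound of `ff t`. -/
lemma ff_ge_of_le {s t : ℝ} (hs : 1.3 ≤ s) (hst : s ≤ t) : 1.78102 * s + 2.9545 / s ≤ ff t := by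
  norm_num at hs
  have hs0 : 0 < s := by linarith
  have ht0 : 0 < t := by linarith
  refine le_trans ?_ (ff_ge ht0)
  have e : 1.78102 * t + 2.9545 / t - (1.78102 * s + 2.9545 / s) =
      (t - s) * ((1.78102 * (s * t) - 2.9545) / (s * t)) := by
    field_simp; ring
  have h : 0 ≤ (t - s) * ((1.78102 * (s * t) - 2.9545) / (s * t)) := by
    refine mul_nonneg (by linarith) (div_nonneg ?_ (by positivity))
    norm_num; nlinarith
  linarith

/-- The product of `h` over `[a, a + 2 ^ j)`, by halving, so that evaluation has logarithmic depth. -/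
def prodR (h : ℕ → ℕ) : ℕ → ℕ → ℕ
  | 0, a => h a
  | j + 1, a => prodR h j a * prodR h j (a + 2 ^ j)

lemma log_prodR {h : ℕ → ℕ} (hpos : ∀ q, 2 ≤ q → 0 < h q) (j a : ℕ) (ha : 2 ≤ a) : 0 < prodR h j a ∧
    Real.log (prodR h j a) = ∑ q ∈ Finset.Ico a (a + 2 ^ j), Real.log (h q) := by
  induction j generalizing a with
  | zero => simp [prodR, hpos a ha]
  | succ j ih =>
    obtain ⟨h1, h2⟩ := ih a ha
    obtain ⟨h3, h4⟩ := ih (a + 2 ^ j) (ha.trans (Nat.le_add_right _ _))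
    refine ⟨Nat.mul_pos h1 h3, ?_⟩
    rw [prodR, Nat.cast_mul, Real.log_mul (by exact_mod_cast h1.ne') (by exact_mod_cast h3.ne'), h2, h4,
      show a + 2 ^ (j + 1) = a + 2 ^ j + 2 ^ j by ring]
    exact Finset.sum_Ico_consecutive _ (Nat.le_add_right _ _) (Nat.le_add_right _ _)

/-- The product of the primes up to `97`. -/
def bigW : ℕ := 2305567963945518424753102147331756070

/-- The modulus used to sieve `[y, ∞)` for `y ≥ 17`. All its prime factors are below `y`, so no prime is lost. -/
def modW (y : ℕ) : ℕ := bif Nat.blt y 101 then 210 else bigW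

/-- `q < b` and `q` has no common factor with `W`. -/
def sel (W b q : ℕ) : Bool := Nat.blt q b && Nat.beq (Nat.gcd q W) 1

lemma coprime_modW {y p : ℕ} (hy : 17 ≤ y) (hp : p.Prime) (hyp : y ≤ p) : Nat.gcd p (modW y) = 1 := by
  refine (Nat.Prime.coprime_iff_not_dvd hp).2 fun h => ?_
  unfold modW at h
  rcases Nat.lt_or_ge y 101 with h1 | h1
  · rw [show Nat.blt y 101 = true by simpa using h1, cond_true] at h
    have : p ∣ Nat.factorial 10 := h.trans (by decide)
    have := (hp.dvd_factorial).1 this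
    omega
  · rw [show Nat.blt y 101 = false by rw [← Bool.not_eq_true, Nat.blt_eq]; omega, cond_false] at h
    have : p ∣ Nat.factorial 100 := h.trans (by decide +kernel)
    have := (hp.dvd_factorial).1 this
    omega

/-- Lower bound for `10 ^ 6 * log (m' / m)`: by convexity of `1 / t`, the midpoint rule on either half of
`[m, m']`. The floors err on the safe side, and `m ≤ m'` in every use. -/
def incr (m m' : ℕ) : ℕ :=
  1000000 * 2 * (m' - m) / (3 * m + m') + 1000000 * 2 * (m' - m) / (m + 3 * m')

lemma incr_le {m m' : ℕ} (hm : 0 < m) (h : m ≤ m') :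
    (incr m m' : ℝ) / 1000000 ≤ Real.log ((m' : ℝ) / m) := by
  have hm0 : (0 : ℝ) < m := by exact_mod_cast hm
  have hmm : (m : ℝ) ≤ m' := by exact_mod_cast h
  have hm0' : (0 : ℝ) < m' := by linarith
  have key : ∀ {a b : ℝ}, 0 < a → a ≤ b → 2 * (b - a) / (a + b) ≤ Real.log (b / a) := by
    intro a b ha hab
    have := Real.le_log_one_add_of_nonneg (x := (b - a) / a) (div_nonneg (by linarith) ha.le)
    have e1 : 1 + (b - a) / a = b / a := by field_simp; ring
    have e2 : 2 * ((b - a) / a) / ((b - a) / a + 2) = 2 * (b - a) / (a + b) := by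
      have : 0 < a + b := by linarith
      have h2 : (b - a) / a + 2 = (a + b) / a := by field_simp; ring
      rw [h2]; field_simp
    rwa [e1, e2] at this
  have k1 := key hm0 (by linarith : (m : ℝ) ≤ (m + m') / 2)
  have k2 := key (by linarith : (0 : ℝ) < (m + m') / 2) (by linarith : ((m : ℝ) + m') / 2 ≤ m')
  have e : Real.log ((m' : ℝ) / m) = Real.log ((((m : ℝ) + m') / 2) / m) +
      Real.log ((m' : ℝ) / (((m : ℝ) + m') / 2)) := by
    rw [← Real.log_mul (by positivity) (by positivity)]
    congr 1
    field_simp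
  have d1 : ((1000000 * 2 * (m' - m) / (3 * m + m') : ℕ) : ℝ) ≤
      1000000 * (2 * (((m : ℝ) + m') / 2 - m) / (m + ((m : ℝ) + m') / 2)) := by
    refine Nat.cast_div_le.trans (le_of_eq ?_)
    push_cast [Nat.cast_sub h]
    field_simp
    ring
  have d2 : ((1000000 * 2 * (m' - m) / (m + 3 * m') : ℕ) : ℝ) ≤
      1000000 * (2 * ((m' : ℝ) - ((m : ℝ) + m') / 2) / (((m : ℝ) + m') / 2 + m')) := by
    refine Nat.cast_div_le.trans (le_of_eq ?_)
    push_cast [Nat.cast_sub h]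
    field_simp
    ring
  rw [e, div_le_iff₀ (by norm_num), incr, Nat.cast_add]
  linarith

/-- State of the verification at `y`: a sieve `Q` below `y` with `∏ (q - 1) ≥ 2 ^ (m / 256)`,
`∏ q / (q - 1) ≤ A / 10 ^ 6`, `log log ∏ (q - 1) ≥ τ / 10 ^ 6`, such that the inequality holds for
all `n` with at most `#Q` prime factors. -/
def Inv (y m A τ : ℕ) : Prop := ∃ Q : Finset ℕ, IsSieve y Q ∧
  (m : ℝ) / 256 * Real.log 2 ≤ ∑ q ∈ Q, Real.log ((q : ℝ) - 1) ∧
  ∑ q ∈ Q, gl q ≤ Real.log ((A : ℝ) / 1000000) ∧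
  Real.exp ((τ : ℝ) / 1000000) ≤ (m : ℝ) / 256 * Real.log 2 ∧ 17 ≤ y ∧ 0 < m ∧ 0 < A ∧ 1300000 ≤ τ ∧
  ∀ n : ℕ, 7 ≤ n → n.primeFactors.card ≤ Q.card →
    (n : ℝ) / n.totient ≤ ff (Real.log (Real.log n.totient))

/-- One verification step, from `y` to `y'`. The set `G` of the integers in `[y, y')` that survive the sieve
is added to `Q`; `N = ∏ q` and `D = ∏ (q - 1)` over `G`, computed on `[y, y + 2 ^ j)`. The new state has
`A'` at least `A N / D`, `m'` at most `m + 256 log₂ D`, and `τ'` at most `10 ^ 6` times the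
resulting `log log`. The last line compares `A'` with a rational lower bound of
`10 ^ 6 * ff` at `τ₁ / 10 ^ 6`, where `τ₁` accounts for `Q ∪ {y}` and thus for all `n` with more than `#Q` prime factors. -/
def stepOK (y m A τ y' j A' m' τ' : ℕ) : Bool :=
  let N := prodR (fun q => bif sel (modW y) y' q then q else 1) j y
  let D := prodR (fun q => bif sel (modW y) y' q then q - 1 else 1) j y
  let τ₁ := τ + incr m (m + Nat.log2 ((y - 1) ^ 256))
  Nat.ble y' (y + 2 ^ j) && Nat.ble (y + 1) y' && Nat.ble (A * N) (A' * D) && Nat.ble m m' &&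
    Nat.ble (2 ^ (m' - m)) (D ^ 256) && Nat.ble τ' (τ + incr m m') && Nat.ble τ τ' &&
    Nat.ble (A' * τ₁ * 100000) (178102 * τ₁ ^ 2 + 295450 * 1000000 ^ 2)

lemma exp_incr_le {m m' τ τ' : ℕ} (hm : 0 < m) (h : m ≤ m') (hτ : τ' ≤ τ + incr m m')
    (he : Real.exp ((τ : ℝ) / 1000000) ≤ (m : ℝ) / 256 * Real.log 2) :
    Real.exp ((τ' : ℝ) / 1000000) ≤ (m' : ℝ) / 256 * Real.log 2 := by
  have hm0 : (0 : ℝ) < m := by exact_mod_cast hm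
  have hm0' : (0 : ℝ) < m' := by exact_mod_cast hm.trans_le h
  have h1 : (τ' : ℝ) / 1000000 ≤ τ / 1000000 + Real.log ((m' : ℝ) / m) := by
    have := incr_le hm h
    have h2 : (τ' : ℝ) ≤ τ + incr m m' := by exact_mod_cast hτ
    have h3 : (τ' : ℝ) / 1000000 ≤ (τ + incr m m') / 1000000 := by gcongr
    rw [add_div] at h3
    linarith
  refine (Real.exp_le_exp.2 h1).trans ?_
  rw [Real.exp_add, Real.exp_log (by positivity)]
  calc _ ≤ (m : ℝ) / 256 * Real.log 2 * ((m' : ℝ) / m) := by gcongr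
    _ = _ := by field_simp

/-- Soundness of `stepOK`. An `n` that has more than `#Q` but at most `#(Q ∪ G)` prime factors satisfies
`n / φ(n) ≤ A' / 10 ^ 6`, because of the upper bound on their number, and `log log φ(n) ≥ τ₁ / 10 ^ 6`,
because of the lower bound. -/
lemma inv_step {y m A τ y' j A' m' τ' : ℕ} (hI : Inv y m A τ)
    (hc : stepOK y m A τ y' j A' m' τ' = true) : Inv y' m' A' τ' := by
  obtain ⟨Q, hQ, hm, hA, hτ, hy, hm0, hA0, hτ0, hall⟩ := hI
  simp only [stepOK, Bool.and_eq_true, Nat.ble_eq] at hc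
  obtain ⟨⟨⟨⟨⟨⟨⟨c1, c2⟩, c3⟩, c4⟩, c5⟩, c6⟩, c7⟩, c8⟩ := hc
  set W := modW y with hW
  set N := prodR (fun q => bif sel W y' q then q else 1) j y with hN
  set D := prodR (fun q => bif sel W y' q then q - 1 else 1) j y with hD
  obtain ⟨N0, N1⟩ := log_prodR (h := fun q => bif sel W y' q then q else 1)
    (fun q hq => by cases sel W y' q <;> simp; omega) j y (by omega)
  obtain ⟨D0, D1⟩ := log_prodR (h := fun q => bif sel W y' q then q - 1 else 1)
    (fun q hq => by cases sel W y' q <;> simp; omega) j y (by omega)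
  rw [← hN] at N0 N1
  rw [← hD] at D0 D1
  set G := (Finset.Ico y (y + 2 ^ j)).filter fun q => sel W y' q = true with hG
  have hGm : ∀ q ∈ G, y ≤ q ∧ q < y' := by
    intro q hq
    obtain ⟨h1, h2⟩ := Finset.mem_filter.1 hq
    simp only [sel, Bool.and_eq_true, Nat.blt_eq] at h2
    exact ⟨(Finset.mem_Ico.1 h1).1, h2.1⟩
  have hNG : Real.log N = ∑ q ∈ G, Real.log q := by
    rw [N1, hG, Finset.sum_filter]
    refine Finset.sum_congr rfl fun q _ => ?_
    cases sel W y' q <;> simp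
  have hDG : Real.log D = ∑ q ∈ G, Real.log ((q : ℝ) - 1) := by
    rw [D1, hG, Finset.sum_filter]
    refine Finset.sum_congr rfl fun q hq => ?_
    have : 0 < q := by have := Finset.mem_Ico.1 hq; omega
    cases sel W y' q <;> simp [Nat.cast_pred this]
  have hdisj : Disjoint Q G := by
    rw [Finset.disjoint_left]
    intro q h1 h2
    have := (hQ.1 q h1).2
    have := (hGm q h2).1
    omega
  have hQ' : IsSieve y' (Q ∪ G) := by
    refine ⟨fun q hq => ?_, fun p hp hpy => ?_⟩
    · rcases Finset.mem_union.1 hq with h | h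
      · have := hQ.1 q h; omega
      · have := hGm q h; omega
    · rcases Nat.lt_or_ge p y with h | h
      · exact Finset.mem_union_left _ (hQ.2 p hp h)
      · refine Finset.mem_union_right _ (Finset.mem_filter.2 ⟨Finset.mem_Ico.2 ⟨h, by omega⟩, ?_⟩)
        simp only [sel, Bool.and_eq_true, Nat.blt_eq, Nat.beq_eq]
        exact ⟨hpy, coprime_modW hy hp h⟩
  have hN0 : (0 : ℝ) < N := by exact_mod_cast N0
  have hD0 : (0 : ℝ) < D := by exact_mod_cast D0
  have hA0' : 0 < A' := by
    rcases Nat.eq_zero_or_pos A' with h | h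
    · rw [h, zero_mul] at c3
      have := Nat.mul_pos hA0 N0
      omega
    · exact h
  have hAr : (0 : ℝ) < A := by exact_mod_cast hA0
  have hAr' : (0 : ℝ) < A' := by exact_mod_cast hA0'
  have hA' : ∑ q ∈ Q ∪ G, gl q ≤ Real.log ((A' : ℝ) / 1000000) := by
    rw [Finset.sum_union hdisj]
    have h1 : ∑ q ∈ G, gl q = Real.log N - Real.log D := by
      rw [hNG, hDG, ← Finset.sum_sub_distrib]; rfl
    have h2 : Real.log ((A : ℝ) * N) ≤ Real.log ((A' : ℝ) * D) :=
      Real.log_le_log (by positivity) (by exact_mod_cast c3)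
    rw [Real.log_mul hAr.ne' hN0.ne', Real.log_mul hAr'.ne' hD0.ne'] at h2
    rw [Real.log_div hAr.ne' (by norm_num)] at hA
    rw [Real.log_div hAr'.ne' (by norm_num)]
    linarith
  have hm' : (m' : ℝ) / 256 * Real.log 2 ≤ ∑ q ∈ Q ∪ G, Real.log ((q : ℝ) - 1) := by
    rw [Finset.sum_union hdisj, ← hDG]
    have h1 : Real.log ((2 : ℝ) ^ (m' - m)) ≤ Real.log ((D : ℝ) ^ 256) :=
      Real.log_le_log (by positivity) (by exact_mod_cast c5)
    rw [Real.log_pow, Real.log_pow, Nat.cast_sub c4] at h1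
    push_cast at h1
    linarith
  refine ⟨Q ∪ G, hQ', hm', hA', exp_incr_le hm0 c4 c6 hτ, by omega, by omega, hA0', by omega, ?_⟩
  intro n hn hcard
  have hn0 : n ≠ 0 := by omega
  rcases Nat.lt_or_ge Q.card n.primeFactors.card with h | h
  swap
  · exact hall n hn h
  set m₁ := m + Nat.log2 ((y - 1) ^ 256) with hm1
  set τ₁ := τ + incr m m₁ with ht1
  have hpos : (0 : ℝ) < (n : ℝ) / n.totient := by
    have : 0 < n.totient := Nat.totient_pos.2 (by omega)
    have : 0 < n := by omega
    positivity
  have u1 : (n : ℝ) / n.totient ≤ (A' : ℝ) / 1000000 := by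
    have := (log_ratio_le_of_card_le hn0 (by omega) hQ' hcard).trans hA'
    exact (Real.log_le_log_iff hpos (by positivity)).1 this
  have hyQ : y ∉ Q := fun hh => lt_irrefl _ (hQ.1 y hh).2
  have u2 := le_log_totient_of_card_le hn0 (by omega) (isSieve_insert (by omega) hQ)
    (by rw [Finset.card_insert_of_notMem hyQ]; exact h)
  rw [Finset.sum_insert hyQ] at u2
  have u3 : (m₁ : ℝ) / 256 * Real.log 2 ≤ Real.log n.totient := by
    have h1 : ((2 ^ Nat.log2 ((y - 1) ^ 256) : ℕ) : ℝ) ≤ (((y - 1) ^ 256 : ℕ) : ℝ) := by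
      exact_mod_cast Nat.log2_self_le (pow_ne_zero _ (by omega))
    push_cast [Nat.cast_pred (by omega : 0 < y)] at h1
    have h2 := Real.log_le_log (by positivity) h1
    rw [Real.log_pow, Real.log_pow] at h2
    rw [hm1]
    push_cast at h2 ⊢
    linarith
  have u4 := exp_incr_le (τ' := τ₁) hm0 (by omega : m ≤ m₁) le_rfl hτ
  have u5 : (τ₁ : ℝ) / 1000000 ≤ Real.log (Real.log n.totient) := by
    have := u4.trans u3
    exact (Real.le_log_iff_exp_le ((Real.exp_pos _).trans_le this)).2 this
  have hτ1 : (1300000 : ℝ) ≤ τ₁ := by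
    have : 1300000 ≤ τ₁ := by omega
    exact_mod_cast this
  refine u1.trans (le_trans ?_ (ff_ge_of_le (s := (τ₁ : ℝ) / 1000000) ?_ u5))
  · have h1 : (A' : ℝ) * τ₁ * 100000 ≤ 178102 * (τ₁ : ℝ) ^ 2 + 295450 * 1000000 ^ 2 := by
      exact_mod_cast c8
    have e : 1.78102 * ((τ₁ : ℝ) / 1000000) + 2.9545 / ((τ₁ : ℝ) / 1000000) =
        (178102 * (τ₁ : ℝ) ^ 2 + 295450 * 1000000 ^ 2) / (100000 * 1000000 * τ₁) := by
      field_simp; norm_num; ring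
    rw [e, div_le_div_iff₀ (by norm_num) (by positivity)]
    nlinarith
  · rw [le_div_iff₀ (by norm_num)]; norm_num; linarith

/-- Runs `stepOK` along a list of certificates `(y', j, A', m', τ')`. -/
def runOK : ℕ → ℕ → ℕ → ℕ → List (ℕ × ℕ × ℕ × ℕ × ℕ) → Bool
  | _, _, _, τ, [] => Nat.ble 9000000 τ
  | y, m, A, τ, (y', j, A', m', τ') :: l => stepOK y m A τ y' j A' m' τ' && runOK y' m' A' τ' l

lemma inv_run {l : List (ℕ × ℕ × ℕ × ℕ × ℕ)} {y m A τ : ℕ} (hI : Inv y m A τ)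
    (h : runOK y m A τ l = true) : ∃ y m A τ : ℕ, Inv y m A τ ∧ 9000000 ≤ τ := by
  induction l generalizing y m A τ with
  | nil => exact ⟨y, m, A, τ, hI, by simpa [runOK] using h⟩
  | cons c l ih =>
    obtain ⟨y', j, A', m', τ'⟩ := c
    rw [runOK, Bool.and_eq_true] at h
    exact ih (inv_step hI h.1) h.2

/-- The certificate, with entries `(y', j, A', m', τ')`. It ends at `y' = 9001`, where the lower bound of
`log log ∏ (q - 1)` has passed `9`. -/
lemma run_cert : runOK 17 3197 5213542 2158200 [
    (19, 1, 5539389, 4221, 2435605), (23, 2, 5847133, 5288, 2660732), (29, 3, 6112912, 6429, 2855953),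
    (31, 1, 6331231, 7659, 3030902), (37, 3, 6542273, 8915, 3182681), (41, 2, 6724003, 10238, 3320996),
    (43, 1, 6892104, 11600, 3445853), (47, 2, 7056202, 12980, 3558227), (53, 3, 7209598, 14394, 3661605),
    (61, 3, 7474938, 17352, 3848364), (71, 4, 7714665, 20411, 4010640), (79, 3, 7933554, 23559, 4154011),
    (89, 4, 8133258, 26795, 4282673), (101, 4, 8311366, 30134, 4400076), (109, 3, 8556749, 35265, 4557231),
    (131, 5, 8782237, 40523, 4696152), (151, 5, 9040138, 47800, 4861212), (179, 5, 9324691, 57183, 5040322),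
    (199, 5, 9576781, 66843, 5196331), (239, 6, 9842570, 78785, 5360613), (277, 6, 10116717, 93106, 5527530),
    (331, 6, 10393415, 109922, 5693466), (389, 6, 10689064, 131624, 5873521), (457, 7, 10972968, 156159, 6044341),
    (547, 7, 11267638, 185907, 6218601), (641, 7, 11558500, 221239, 6392486), (757, 7, 11864315, 264691, 6571684),
    (887, 8, 12156743, 314266, 6743254), (1061, 8, 12459523, 375282, 6920574), (1259, 8, 12755542, 445566, 7092135),
    (1489, 8, 13056674, 530950, 7267343), (1753, 9, 13351418, 629158, 7436954), (2087, 9, 13647080, 746425, 7607761),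
    (2447, 9, 13939431, 883390, 7776132), (2897, 9, 14234537, 1046612, 7945575), (3457, 10, 14525559, 1237131, 8112713),
    (4027, 10, 14817162, 1461874, 8279539), (4759, 10, 15104055, 1722035, 8443233), (5591, 10, 15390360, 2028366, 8606864),
    (6563, 10, 15672613, 2382189, 8767566), (7681, 11, 15953234, 2794905, 8927258), (9001, 11, 16231593, 3275044, 9085707)] = true := by
  decide +kernel

end FiniteCheck
end PhiBound

/-! ### Small numbers of prime factors, and the conclusion -/

namespace PhiBound
section Assembly
open Finset

lemma isSieve_four : IsSieve 11 {2, 3, 5, 7} := by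
  refine ⟨by decide, fun p hp h => ?_⟩
  interval_cases p <;> first | (exfalso; revert hp; norm_num; done) | decide

lemma isSieve_five : IsSieve 13 {2, 3, 5, 7, 11} := by
  refine ⟨by decide, fun p hp h => ?_⟩
  interval_cases p <;> first | (exfalso; revert hp; norm_num; done) | decide

lemma isSieve_six : IsSieve 17 {2, 3, 5, 7, 11, 13} := by
  refine ⟨by decide, fun p hp h => ?_⟩
  interval_cases p <;> first | (exfalso; revert hp; norm_num; done) | decide

lemma isSieve_two : IsSieve 5 {2, 3} := by
  refine ⟨by decide, fun p hp h => ?_⟩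
  interval_cases p <;> first | (exfalso; revert hp; norm_num; done) | decide

lemma isSieve_three : IsSieve 7 {2, 3, 5} := by
  refine ⟨by decide, fun p hp h => ?_⟩
  interval_cases p <;> first | (exfalso; revert hp; norm_num; done) | decide

lemma sum_gl_eq {y : ℕ} {Q : Finset ℕ} (hQ : IsSieve y Q) :
    ∑ q ∈ Q, gl q = Real.log (∏ q ∈ Q, ((q : ℝ) / ((q : ℝ) - 1))) := by
  have h : ∀ q ∈ Q, (2 : ℝ) ≤ q := fun q hq => by exact_mod_cast (hQ.1 q hq).1
  rw [Real.log_prod fun q hq => div_ne_zero (by linarith [h q hq]) (by linarith [h q hq])]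
  refine Finset.sum_congr rfl fun q hq => ?_
  rw [Real.log_div (by linarith [h q hq]) (by linarith [h q hq])]; rfl

lemma sum_log_pred_eq {y : ℕ} {Q : Finset ℕ} (hQ : IsSieve y Q) :
    ∑ q ∈ Q, Real.log ((q : ℝ) - 1) = Real.log (∏ q ∈ Q, ((q : ℝ) - 1)) := by
  have h : ∀ q ∈ Q, (2 : ℝ) ≤ q := fun q hq => by exact_mod_cast (hQ.1 q hq).1
  rw [Real.log_prod fun q hq => by linarith [h q hq]]

lemma ratio_le_of_card_le {n y : ℕ} {Q : Finset ℕ} (hn : n ≠ 0) (hy : 2 ≤ y) (hQ : IsSieve y Q)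
    (hcard : n.primeFactors.card ≤ Q.card) :
    (n : ℝ) / n.totient ≤ ∏ q ∈ Q, ((q : ℝ) / ((q : ℝ) - 1)) := by
  have h := log_ratio_le_of_card_le hn hy hQ hcard
  rw [sum_gl_eq hQ] at h
  have h1 : 0 < n.totient := Nat.totient_pos.2 (Nat.pos_of_ne_zero hn)
  have h2 : 0 < n := Nat.pos_of_ne_zero hn
  refine (Real.log_le_log_iff (by positivity) (Finset.prod_pos fun q hq => ?_)).1 h
  have : (2 : ℝ) ≤ q := by exact_mod_cast (hQ.1 q hq).1
  exact div_pos (by linarith) (by linarith)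

lemma le_totient_of_card_le {n y : ℕ} {Q : Finset ℕ} (hn : n ≠ 0) (hy : 2 ≤ y) (hQ : IsSieve y Q)
    (hcard : Q.card ≤ n.primeFactors.card) : ∏ q ∈ Q, ((q : ℝ) - 1) ≤ n.totient := by
  have h := le_log_totient_of_card_le hn hy hQ hcard
  rw [sum_log_pred_eq hQ] at h
  have h1 : 0 < n.totient := Nat.totient_pos.2 (Nat.pos_of_ne_zero hn)
  refine (Real.log_le_log_iff (Finset.prod_pos fun q hq => ?_) (by exact_mod_cast h1)).1 h
  have : (2 : ℝ) ≤ q := by exact_mod_cast (hQ.1 q hq).1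
  linarith

lemma three_le_totient {n : ℕ} (hn : 7 ≤ n) : (3 : ℝ) ≤ n.totient := by
  rcases Nat.lt_or_ge n.primeFactors.card 3 with h | h
  · have h1 := ratio_le_of_card_le (by omega) (by norm_num) isSieve_two
      (show n.primeFactors.card ≤ _ from Nat.le_of_lt_succ h)
    have h0 : (0 : ℝ) < n.totient := by exact_mod_cast Nat.totient_pos.2 (by omega : 0 < n)
    rw [div_le_iff₀ h0] at h1
    norm_num at h1
    have h2 : n ≤ 3 * n.totient := by exact_mod_cast h1
    have : 3 ≤ n.totient := by omega
    exact_mod_cast this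
  · have h1 := le_totient_of_card_le (by omega) (by norm_num) isSieve_three
      (show _ ≤ n.primeFactors.card from h)
    norm_num at h1
    have : 3 ≤ n.totient := by omega
    exact_mod_cast this

lemma log_log_totient_pos {n : ℕ} (hn : 7 ≤ n) : 0 < Real.log (Real.log n.totient) := by
  refine Real.log_pos ?_
  have h := three_le_totient hn
  rw [Real.lt_log_iff_exp_lt (by linarith)]
  have := Real.exp_one_lt_d9
  norm_num at this; linarith

/-- The right-hand side never drops below `2 * √(e ^ γ * c)`, which exceeds `35 / 8`. -/
lemma ff_ge_const {t : ℝ} (ht : 0 < t) : 35 / 8 ≤ ff t := by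
  refine le_trans ?_ (ff_ge ht)
  have e : 1.78102 * t + 2.9545 / t = (1.78102 * t ^ 2 + 2.9545) / t := by field_simp
  rw [e, le_div_iff₀ ht]
  norm_num
  nlinarith [sq_nonneg (t - 1.28)]

lemma ff_log_log_5760 : ff (Real.log (Real.log 5760)) = 30030 / 5760 := by
  have h := log_log_5760_bounds.1
  have h0 : Real.log (Real.log 5760) ≠ 0 := by
    intro h1
    rw [h1] at h; norm_num at h
  unfold ff cc
  field_simp
  ring

lemma ratio_le_ff_of_card_eq_five {n : ℕ} (hn : 7 ≤ n) (h : n.primeFactors.card = 5) :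
    (n : ℝ) / n.totient ≤ ff (Real.log (Real.log n.totient)) := by
  have h1 := ratio_le_of_card_le (by omega) (by norm_num) isSieve_five (show _ ≤ 5 from h.le)
  have h2 := le_totient_of_card_le (by omega) (by norm_num) isSieve_five (show 5 ≤ _ from h.ge)
  norm_num at h1 h2
  have h2' : (480 : ℝ) ≤ n.totient := by exact_mod_cast h2
  have l2 := Real.log_two_gt_d9
  have h3 : 6.1 ≤ Real.log n.totient := by
    have a : Real.log ((2 : ℝ) ^ 89) ≤ Real.log ((n.totient : ℝ) ^ 10) :=
      Real.log_le_log (by norm_num) (le_trans (b := (480 : ℝ) ^ 10) (by norm_num)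
        (pow_le_pow_left₀ (by norm_num) h2' 10))
    rw [Real.log_pow, Real.log_pow] at a
    push_cast at a
    norm_num at l2 ⊢; linarith
  have h4 : 1.8 ≤ Real.log (Real.log n.totient) := by
    rw [Real.le_log_iff_exp_le (by norm_num at h3; linarith)]
    refine le_trans ?_ h3
    have a : Real.exp 1.8 ^ 5 = Real.exp 1 ^ 9 := by
      rw [← Real.exp_nat_mul, ← Real.exp_nat_mul]; norm_num
    have b : Real.exp 1 ^ 9 ≤ 2.7183 ^ 9 := by
      refine pow_le_pow_left₀ (Real.exp_pos 1).le ?_ 9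
      have := Real.exp_one_lt_d9
      norm_num at this ⊢; linarith
    refine le_of_pow_le_pow_left₀ (n := 5) (by norm_num) (by norm_num) ?_
    rw [a]
    exact b.trans (by norm_num)
  refine h1.trans (le_trans ?_ (ff_ge_of_le (by norm_num) h4))
  norm_num

/-- The case that contains `n = 30030`. The ratio is at most `30030 / 5760`, which is `ff (log log 5760)`,
and `φ(n) ≥ 5760`; so the monotonicity of `ff` concludes without any numerical loss. -/
lemma ratio_le_ff_of_card_eq_six {n : ℕ} (hn : 7 ≤ n) (h : n.primeFactors.card = 6) :
    (n : ℝ) / n.totient ≤ ff (Real.log (Real.log n.totient)) := by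
  have h1 := ratio_le_of_card_le (by omega) (by norm_num) isSieve_six (show _ ≤ 6 from h.le)
  have h2 := le_totient_of_card_le (by omega) (by norm_num) isSieve_six (show 6 ≤ _ from h.ge)
  norm_num at h1 h2
  obtain ⟨b1, -⟩ := log_log_5760_bounds
  obtain ⟨b2, -⟩ := log_5760_bounds
  have h3 : Real.log (Real.log 5760) ≤ Real.log (Real.log n.totient) := by
    refine Real.log_le_log (by norm_num at b2 ⊢; linarith) (Real.log_le_log (by norm_num) (by exact_mod_cast h2))
  have e := ff_log_log_5760
  set s := Real.log (Real.log 5760)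
  set t := Real.log (Real.log n.totient)
  have h4 : 30030 / 5760 ≤ ff t := by
    rw [← e]
    have c1 := exp_gamma_bounds.1
    have c2 := cc_bounds.2
    unfold ff
    set E := Real.exp Real.eulerMascheroniConstant
    norm_num at b1 c1 c2
    have s0 : 0 < s := by linarith
    have t0 : 0 < t := by linarith
    have e : E * t + cc / t - (E * s + cc / s) = (t - s) * ((E * (s * t) - cc) / (s * t)) := by
      field_simp; ring
    have h : 0 ≤ (t - s) * ((E * (s * t) - cc) / (s * t)) := by
      refine mul_nonneg (by linarith) (div_nonneg ?_ (by positivity))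
      have : 4 ≤ s * t := by nlinarith
      nlinarith
    linarith
  refine h1.trans (le_trans ?_ h4)
  norm_num

set_option exponentiation.threshold 4000 in
/-- The initial state, with `Q` the primes up to `13`, for which `∏ (q - 1) = 5760` and
`∏ q / (q - 1) = 30030 / 5760`. -/
lemma inv_start : Inv 17 3197 5213542 2158200 := by
  have l1 := Real.log_two_gt_d9
  refine ⟨{2, 3, 5, 7, 11, 13}, isSieve_six, ?_, ?_, ?_, by norm_num, by norm_num, by norm_num,
    by norm_num, ?_⟩
  · rw [sum_log_pred_eq isSieve_six]
    have h : Real.log ((2 : ℝ) ^ 3197) ≤ Real.log ((5760 : ℝ) ^ 256) :=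
      Real.log_le_log (by positivity) (by norm_num)
    rw [Real.log_pow, Real.log_pow] at h
    norm_num at h ⊢
    linarith
  · rw [sum_gl_eq isSieve_six]
    refine Real.log_le_log (by norm_num) (by norm_num)
  · have a : Real.exp ((2158200 : ℕ) / 1000000 : ℝ) = Real.exp 1 ^ 2 * Real.exp 0.1582 := by
      rw [← Real.exp_nat_mul, ← Real.exp_add]; norm_num
    have b : Real.exp 0.1582 ≤ 1.17141 := by
      refine (Real.exp_bound' (by norm_num) (by norm_num) (n := 6) (by norm_num)).trans ?_
      norm_num [Finset.sum_range_succ, Nat.factorial]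
    have c : Real.exp 1 ^ 2 ≤ 2.7182818286 ^ 2 :=
      pow_le_pow_left₀ (Real.exp_pos 1).le Real.exp_one_lt_d9.le 2
    rw [a]
    refine (mul_le_mul c b (Real.exp_pos _).le (by norm_num)).trans ?_
    norm_num at l1 ⊢
    linarith
  · intro n hn hcard
    have hcard' : n.primeFactors.card ≤ 6 := hcard
    rcases Nat.lt_or_ge n.primeFactors.card 5 with h | h
    · have h1 := ratio_le_of_card_le (by omega) (by norm_num) isSieve_four
        (show _ ≤ 4 from Nat.le_of_lt_succ h)
      refine h1.trans (le_trans (by norm_num) (ff_ge_const (log_log_totient_pos hn)))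
    · rcases Nat.lt_or_ge n.primeFactors.card 6 with h' | h'
      · exact ratio_le_ff_of_card_eq_five hn (by omega)
      · exact ratio_le_ff_of_card_eq_six hn (by omega)

/-- The verified range covers every number of prime factors up to `#Q`; more prime factors than that force
`log (log φ(n)) ≥ 9`. -/
lemma ratio_le_ff {n : ℕ} (hn : 7 ≤ n) :
    (n : ℝ) / n.totient ≤ ff (Real.log (Real.log n.totient)) := by
  obtain ⟨y, m, A, τ, ⟨Q, hQ, hm, -, hτ, hy, -, -, -, hall⟩, h9⟩ := inv_run inv_start run_cert
  rcases Nat.lt_or_ge Q.card n.primeFactors.card with h | h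
  · refine ratio_le_of_nine_le (by omega) rfl ?_
    have h1 := hτ.trans (hm.trans (le_log_totient_of_card_le (by omega) (by omega) hQ h.le))
    have h2 : (τ : ℝ) / 1000000 ≤ Real.log (Real.log n.totient) :=
      (Real.le_log_iff_exp_le ((Real.exp_pos _).trans_le h1)).2 h1
    refine le_trans ?_ h2
    rw [le_div_iff₀ (by norm_num)]
    have : (9000000 : ℝ) ≤ τ := by exact_mod_cast h9
    linarith
  · exact hall n hn h

lemma totient_30030 : Nat.totient 30030 = 5760 := by
  rw [show 30030 = 2 * (3 * (5 * (7 * (11 * 13)))) by norm_num]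
  rw [Nat.totient_mul (by decide), Nat.totient_mul (by decide), Nat.totient_mul (by decide),
    Nat.totient_mul (by decide), Nat.totient_mul (by decide)]
  rw [Nat.totient_prime (by norm_num), Nat.totient_prime (by norm_num), Nat.totient_prime (by norm_num),
    Nat.totient_prime (by norm_num), Nat.totient_prime (by norm_num), Nat.totient_prime (by norm_num)]

end Assembly
end PhiBound

/-- For every integer `n ≥ 7`, `n/φ(n) ≤ e^γ·log(log φ(n)) + c/log(log φ(n))`, where
`c = log(log 5760)·(30030/5760 − e^γ·log(log 5760)) ≈ 2.95503`; equality holds for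
`n = 30030` (which has `φ(30030) = 5760`). -/
theorem stmt_2 :
    (∀ n : ℕ, 7 ≤ n →
      (n : ℝ) / (Nat.totient n : ℝ) ≤
        Real.exp Real.eulerMascheroniConstant * Real.log (Real.log (Nat.totient n)) +
          (Real.log (Real.log 5760) *
              (30030 / 5760 -
                Real.exp Real.eulerMascheroniConstant * Real.log (Real.log 5760))) /
            Real.log (Real.log (Nat.totient n))) ∧
    ((30030 : ℕ) : ℝ) / (Nat.totient 30030 : ℝ) =
      Real.exp Real.eulerMascheroniConstant * Real.log (Real.log (Nat.totient 30030)) +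
        (Real.log (Real.log 5760) *
            (30030 / 5760 -
              Real.exp Real.eulerMascheroniConstant * Real.log (Real.log 5760))) /
          Real.log (Real.log (Nat.totient 30030)) := by
  refine ⟨fun n hn => PhiBound.ratio_le_ff hn, ?_⟩
  rw [PhiBound.totient_30030]
  exact PhiBound.ff_log_log_5760.symm
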